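/- arXiv:1706.01618 — 2 statements merged into one kernel-verified Lean document; each statement's English description precedes it below -/
import Mathlib

section
/- Let p be an odd prime and d ≥ 1. If p ≤ 2d + 1 and d is even, then the pair (d, p) is admissible: for every continuous injective map f : Sᵈ → ℝ^{d+1} and every choice of (p−1)/2 metrics ρ₁, …, ρ_{(p−1)/2} on ℝ^{d+1}, each inducing the standard Euclidean topology, there exist p distinct points x₀, x₁, …, x_{p−1} ∈ Sᵈ, indexed by 𝔽_p, such that for every j = 1, …, (p−1)/2 the values ρⱼ(f(x_{kj}), f(x_{(k+1)j})) are equal for all k ∈ 𝔽_p. -/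
/-- `ρ` is a metric on `E` that induces the (given) standard topology of `E`. -/
def IsMetricEquivToStd {E : Type*} [TopologicalSpace E] (ρ : E → E → ℝ) : Prop :=
  (∀ x y, ρ x y = ρ y x) ∧
  (∀ x y, ρ x y = 0 ↔ x = y) ∧
  (∀ x y z, ρ x z ≤ ρ x y + ρ y z) ∧
  (∀ s : Set E, IsOpen s ↔ ∀ x ∈ s, ∃ ε > 0, {y | ρ x y < ε} ⊆ s)

section

open MeasureTheory Set Topology

/-- A function on `κ → ℝ` that is invariant under integer translations. -/
def IntPeriodic {κ E : Type*} (F : (κ → ℝ) → E) : Prop :=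
  ∀ (x : κ → ℝ) (z : κ → ℤ), F (x + fun i => (z i : ℝ)) = F x

theorem IntPeriodic.exists_mem_pi_Ico {κ E : Type*} {F : (κ → ℝ) → E} (hF : IntPeriodic F)
    (x : κ → ℝ) : ∃ y ∈ univ.pi fun _ : κ => Ico (0 : ℝ) 1, F y = F x := by
  refine ⟨fun i => Int.fract (x i), fun i _ => ⟨Int.fract_nonneg _, Int.fract_lt_one _⟩, ?_⟩
  rw [← hF _ fun i => ⌊x i⌋]
  congr 1
  funext i
  exact Int.fract_add_floor _

theorem intPeriodic_fderiv {κ E : Type*} [Fintype κ] [NormedAddCommGroup E] [NormedSpace ℝ E]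
    {F : (κ → ℝ) → E} (hF : IntPeriodic F) : IntPeriodic (fderiv ℝ F) := by
  intro x z
  rw [← fderiv_comp_add_right]
  congr 1
  funext y
  exact hF y z

theorem IntPeriodic.exists_norm_le {κ E : Type*} [NormedAddCommGroup E]
    {F : (κ → ℝ) → E} (hF : IntPeriodic F) (hc : Continuous F) : ∃ C, ∀ x, ‖F x‖ ≤ C := by
  have hK : IsCompact (univ.pi fun _ : κ => Icc (0 : ℝ) 1) :=
    isCompact_univ_pi fun _ => isCompact_Icc
  obtain ⟨C, hC⟩ := hK.exists_bound_of_continuousOn hc.continuousOn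
  refine ⟨C, fun x => ?_⟩
  obtain ⟨y, hy, hyx⟩ := hF.exists_mem_pi_Ico x
  rw [← hyx]
  exact hC y fun i hi => Ico_subset_Icc_self (hy i hi)

section Torus

variable {κ : Type*} [Fintype κ]

/-- The determinant of `A` is a fixed linear combination of the determinants of `1 + t • A` for
`t` in any set of `dim + 1` nodes, and the weights add up to zero. -/
theorem exists_weights_det_one_add_smul [Nonempty κ] (s : Finset ℝ)
    (hs : s.card = Fintype.card κ + 1) :
    ∃ w : ℝ → ℝ, ∑ t ∈ s, w t = 0 ∧
      ∀ A : (κ → ℝ) →L[ℝ] (κ → ℝ), ∑ t ∈ s, w t * (1 + t • A).det = A.det := by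
  classical
  have hinj : Set.InjOn (id : ℝ → ℝ) s := fun _ _ _ _ h => h
  refine ⟨fun t => (∏ u ∈ s.erase t, (t - u))⁻¹, ?_, fun A => ?_⟩
  · have h := Lagrange.coeff_eq_sum hinj (P := (1 : Polynomial ℝ)) (by
      rw [hs, Polynomial.degree_one]
      exact_mod_cast Nat.succ_pos _)
    rw [hs, Nat.add_sub_cancel, Polynomial.coeff_one, if_neg Fintype.card_ne_zero] at h
    simpa using h.symm
  · set M := LinearMap.toMatrix' (A : (κ → ℝ) →ₗ[ℝ] (κ → ℝ)) with hM
    set P := ((Polynomial.X : Polynomial ℝ) • M.map Polynomial.C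
      + (1 : Matrix κ κ ℝ).map Polynomial.C).det with hP
    have hdeg : P.degree < s.card := by
      rw [hs]
      refine lt_of_le_of_lt Polynomial.degree_le_natDegree ?_
      exact_mod_cast Nat.lt_succ_of_le (Polynomial.natDegree_det_X_add_C_le M 1)
    have heval : ∀ t : ℝ, P.eval t = (1 + t • A).det := by
      intro t
      rw [ContinuousLinearMap.det, ← LinearMap.det_toMatrix', hP,
        ← Polynomial.coe_evalRingHom, RingHom.map_det]
      congr 1
      ext i j
      by_cases hij : i = j <;>
        simp [hM, LinearMap.toMatrix'_apply, hij, add_comm] <;> exact mul_comm _ _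
    have h := Lagrange.coeff_eq_sum hinj hdeg
    rw [hs, Nat.add_sub_cancel, hP, Polynomial.coeff_det_X_add_C_card, ← hP] at h
    rw [ContinuousLinearMap.det, ← LinearMap.det_toMatrix', ← hM, h]
    refine Finset.sum_congr rfl fun t _ => ?_
    rw [id, heval, div_eq_mul_inv, mul_comm]
    rfl

theorem volume_real_image_unitCube {φ : (κ → ℝ) ≃ₜ (κ → ℝ)}
    (hd : Differentiable ℝ φ)
    (hφ : ∀ x (z : κ → ℤ), φ (x + fun i => (z i : ℝ)) = φ x + fun i => (z i : ℝ)) :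
    volume (φ '' univ.pi fun _ : κ => Ico (0 : ℝ) 1) = 1 := by
  classical
  let b := Pi.basisFun ℝ κ
  have hD : ZSpan.fundamentalDomain b = univ.pi fun _ : κ => Ico (0 : ℝ) 1 :=
    ZSpan.fundamentalDomain_pi_basisFun
  have h1 := ZSpan.isAddFundamentalDomain' b (volume : Measure (κ → ℝ))
  have hq : Measure.QuasiMeasurePreserving φ.toEquiv.symm
      (volume : Measure (κ → ℝ)) volume := by
    have hm : Measurable φ.toEquiv.symm := φ.symm.continuous.measurable
    refine ⟨hm, Measure.AbsolutelyContinuous.mk fun s hs h0 => ?_⟩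
    rw [Measure.map_apply hm hs]
    have : (φ.toEquiv.symm : (κ → ℝ) → (κ → ℝ)) ⁻¹' s = φ '' s :=
      (φ.toEquiv.image_eq_preimage_symm s).symm
    rw [this]
    exact addHaar_image_eq_zero_of_differentiableOn_of_addHaar_eq_zero volume
      hd.differentiableOn h0
  have h2 := h1.image_of_equiv φ.toEquiv hq (Equiv.refl _) (by
    rintro ⟨g, hg⟩ x
    rw [Submodule.mem_toAddSubgroup, Module.Basis.mem_span_iff_repr_mem] at hg
    choose z hz using hg
    have hgz : g = fun i => (z i : ℝ) := by
      funext i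
      simpa [b] using (hz i).symm
    change φ (g + x) = g + φ x
    rw [add_comm g x, add_comm g, hgz, hφ])
  have : Countable (Submodule.span ℤ (range b)).toAddSubgroup :=
    inferInstanceAs (Countable (Submodule.span ℤ (range b)))
  have h3 := h1.measure_eq h2
  rw [hD] at h3
  have h4 : volume (univ.pi fun _ : κ => Ico (0 : ℝ) 1) = 1 := by
    rw [volume_pi_pi]; simp
  rw [← h4, h3]
  rfl

/-- The Jacobian determinant of an integer-periodic map has integral zero over the unit cube. -/
theorem IntPeriodic.integral_det_fderiv_eq_zero [Nonempty κ] {Ψ : (κ → ℝ) → (κ → ℝ)}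
    (hper : IntPeriodic Ψ) (hΨ : ContDiff ℝ 1 Ψ) :
    ∫ x in univ.pi fun _ : κ => Ico (0 : ℝ) 1, (fderiv ℝ Ψ x).det = 0 := by
  classical
  set D := univ.pi fun _ : κ => Ico (0 : ℝ) 1 with hD
  have hDm : MeasurableSet D := MeasurableSet.univ_pi fun _ => measurableSet_Ico
  have hK : IsCompact (univ.pi fun _ : κ => Icc (0 : ℝ) 1) :=
    isCompact_univ_pi fun _ => isCompact_Icc
  have hDK : D ⊆ univ.pi fun _ : κ => Icc (0 : ℝ) 1 :=
    pi_mono fun _ _ => Ico_subset_Icc_self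
  have hA : Continuous (fderiv ℝ Ψ) := hΨ.continuous_fderiv one_ne_zero
  obtain ⟨C, hC⟩ := (intPeriodic_fderiv hper).exists_norm_le hA
  have hlip : LipschitzWith C.toNNReal Ψ := by
    refine lipschitzWith_of_nnnorm_fderiv_le (𝕜 := ℝ) (hΨ.differentiable one_ne_zero) fun x => ?_
    rw [← NNReal.coe_le_coe, coe_nnnorm]
    exact (hC x).trans (Real.le_coe_toNNReal C)
  have hcont : ∀ t : ℝ, Continuous fun x => (1 + t • fderiv ℝ Ψ x).det := fun t =>
    ContinuousLinearMap.continuous_det.comp (continuous_const.add (hA.const_smul t))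
  have hpos : ∀ᶠ t : ℝ in 𝓝 0, ∀ x ∈ univ.pi fun _ : κ => Icc (0 : ℝ) 1,
      0 < (1 + t • fderiv ℝ Ψ x).det := by
    refine hK.eventually_forall_of_forall_eventually fun y _ => ?_
    have hc : Continuous fun q : ℝ × (κ → ℝ) => (1 + q.1 • fderiv ℝ Ψ q.2).det :=
      ContinuousLinearMap.continuous_det.comp
        (continuous_const.add (continuous_fst.smul (hA.comp continuous_snd)))
    refine hc.continuousAt.eventually (lt_mem_nhds ?_)
    simp [ContinuousLinearMap.det]
  have hsmall : ∀ᶠ t : ℝ in 𝓝 0, ‖t‖₊ * C.toNNReal < 1 := by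
    have : Filter.Tendsto (fun t : ℝ => ‖t‖₊ * C.toNNReal) (𝓝 0) (𝓝 (‖(0 : ℝ)‖₊ * C.toNNReal)) :=
      (by fun_prop : Continuous fun t : ℝ => ‖t‖₊ * C.toNNReal).tendsto 0
    rw [nnnorm_zero, zero_mul] at this
    exact this.eventually (gt_mem_nhds one_pos)
  have hone : ∀ᶠ t : ℝ in 𝓝 0, ∫ x in D, (1 + t • fderiv ℝ Ψ x).det = 1 := by
    filter_upwards [hpos, hsmall] with t ht htC
    let φ : (κ → ℝ) → (κ → ℝ) := fun x => x + t • Ψ x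
    have hφd : ∀ x, HasFDerivAt φ (1 + t • fderiv ℝ Ψ x) x := fun x =>
      (hasFDerivAt_id x).add (((hΨ.differentiable one_ne_zero) x).hasFDerivAt.const_smul t)
    have happ : ApproximatesLinearOn φ
        ((ContinuousLinearEquiv.refl ℝ (κ → ℝ) : (κ → ℝ) ≃L[ℝ] (κ → ℝ)) :
          (κ → ℝ) →L[ℝ] (κ → ℝ)) univ (‖t‖₊ * C.toNNReal) := by
      rw [ApproximatesLinearOn.approximatesLinearOn_iff_lipschitzOnWith]
      have : (φ - ⇑((ContinuousLinearEquiv.refl ℝ (κ → ℝ) : (κ → ℝ) ≃L[ℝ] (κ → ℝ)) :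
          (κ → ℝ) →L[ℝ] (κ → ℝ))) = fun x => t • Ψ x := by
        funext x; simp [φ]
      rw [this]
      exact ((lipschitzWith_smul t).comp hlip).lipschitzOnWith
    have hc : Subsingleton (κ → ℝ) ∨ ‖t‖₊ * C.toNNReal <
        ‖((ContinuousLinearEquiv.refl ℝ (κ → ℝ)).symm : (κ → ℝ) →L[ℝ] (κ → ℝ))‖₊⁻¹ := by
      right
      have : ‖((ContinuousLinearEquiv.refl ℝ (κ → ℝ)).symm : (κ → ℝ) →L[ℝ] (κ → ℝ))‖₊ = 1 := by
        rw [← NNReal.coe_inj, coe_nnnorm]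
        exact ContinuousLinearMap.norm_id
      rw [this, inv_one]
      exact htC
    let Φ := happ.toHomeomorph φ hc
    have hΦ : ⇑Φ = φ := rfl
    have hvol : volume (φ '' D) = 1 := by
      rw [← hΦ]
      refine volume_real_image_unitCube (fun x => (hφd x).differentiableAt) fun x z => ?_
      change x + _ + t • Ψ (x + _) = x + t • Ψ x + _
      rw [hper x z]
      abel
    have hcv := integral_image_eq_integral_abs_det_fderiv_smul volume hDm
      (fun x _ => (hφd x).hasFDerivWithinAt) (hΦ ▸ Φ.injective.injOn) fun _ => (1 : ℝ)
    rw [setIntegral_const, measureReal_def, hvol] at hcv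
    rw [setIntegral_congr_fun hDm (g := fun x => |(1 + t • fderiv ℝ Ψ x).det| • (1 : ℝ)), ← hcv]
    · simp
    · intro x hx
      exact (by rw [abs_of_pos (ht x (hDK hx)), smul_eq_mul, mul_one] :
        _ = |(1 + t • fderiv ℝ Ψ x).det| • (1 : ℝ))
  have hinf : {t : ℝ | ∫ x in D, (1 + t • fderiv ℝ Ψ x).det = 1}.Infinite :=
    infinite_of_mem_nhds 0 hone
  obtain ⟨s, hsub, hcard⟩ := hinf.exists_subset_card_eq (Fintype.card κ + 1)
  obtain ⟨w, hw0, hw⟩ := exists_weights_det_one_add_smul s hcard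
  rw [funext fun x => (hw (fderiv ℝ Ψ x)).symm, integral_finsetSum]
  · simp_rw [integral_const_mul]
    rw [← hw0]
    refine Finset.sum_congr rfl fun t ht => ?_
    rw [hsub ht, mul_one]
  · intro t _
    exact (((hcont t).continuousOn.integrableOn_compact hK).mono_set hDK).const_mul _

end Torus

section Degree

theorem exists_isOpen_injOn_of_det_ne_zero {V : Type*} [NormedAddCommGroup V] [NormedSpace ℝ V]
    [FiniteDimensional ℝ V] {Φ : V → V} (hΦ : ContDiff ℝ 1 Φ) {z : V}
    (hz : (fderiv ℝ Φ z).det ≠ 0) :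
    ∃ U, IsOpen U ∧ z ∈ U ∧ InjOn Φ U ∧ ∀ W, IsOpen W → W ⊆ U → IsOpen (Φ '' W) := by
  have hder : HasFDerivAt Φ
      (((fderiv ℝ Φ z).toContinuousLinearEquivOfDetNeZero hz : V ≃L[ℝ] V) : V →L[ℝ] V) z := by
    rw [ContinuousLinearMap.coe_toContinuousLinearEquivOfDetNeZero]
    exact (hΦ.differentiable one_ne_zero z).hasFDerivAt
  have : CompleteSpace V := FiniteDimensional.complete ℝ V
  let e := hΦ.contDiffAt.toOpenPartialHomeomorph Φ hder one_ne_zero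
  have he : ⇑e = Φ := hΦ.contDiffAt.toOpenPartialHomeomorph_coe hder one_ne_zero
  exact ⟨e.source, e.open_source,
    hΦ.contDiffAt.mem_toOpenPartialHomeomorph_source hder one_ne_zero, he ▸ e.injOn,
    fun W hW hWe => he ▸ e.isOpen_image_of_subset_source hW hWe⟩

variable {κ : Type*} [Fintype κ]

/-- The Jacobian determinant of an integer-periodic map has integral zero over the centred
unit cube. -/
theorem IntPeriodic.integral_det_fderiv_eq_zero' [Nonempty κ] {Ψ : (κ → ℝ) → (κ → ℝ)}
    (hper : IntPeriodic Ψ) (hΨ : ContDiff ℝ 1 Ψ) :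
    ∫ x in univ.pi fun _ : κ => Ico (-(1 / 2) : ℝ) (1 / 2), (fderiv ℝ Ψ x).det = 0 := by
  set c : κ → ℝ := fun _ => 1 / 2 with hc
  have hper' : IntPeriodic fun x => Ψ (x - c) := fun x z => by
    change Ψ (x + _ - c) = Ψ (x - c)
    rw [add_sub_right_comm, hper]
  have h := hper'.integral_det_fderiv_eq_zero (hΨ.comp (contDiff_id.sub contDiff_const))
  simp_rw [fderiv_comp_sub] at h
  rw [← h, ← (measurePreserving_sub_right volume c).setIntegral_preimage_emb
    (Homeomorph.subRight c).measurableEmbedding]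
  congr 2
  ext x
  simp only [mem_preimage, mem_pi, mem_univ, true_imp_iff, mem_Ico, Pi.sub_apply, hc]
  refine forall_congr' fun i => ?_
  constructor <;> rintro ⟨h1, h2⟩ <;> constructor <;> linarith

theorem hasFDerivAt_pi_map {B b : ℝ → ℝ} (hB : ∀ t, HasDerivAt B (b t) t) (y : κ → ℝ) :
    HasFDerivAt (fun y : κ → ℝ => fun i => B (y i))
      (ContinuousLinearMap.pi fun i =>
        b (y i) • (ContinuousLinearMap.proj i : (κ → ℝ) →L[ℝ] ℝ)) y := by
  rw [hasFDerivAt_pi]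
  intro i
  exact (hB (y i)).comp_hasFDerivAt y (hasFDerivAt_apply i y)

theorem det_pi_smul_proj (c : κ → ℝ) :
    (ContinuousLinearMap.pi fun i =>
        c i • (ContinuousLinearMap.proj i : (κ → ℝ) →L[ℝ] ℝ)).det = ∏ i, c i := by
  have h := LinearMap.det_pi (R := ℝ) fun i : κ => c i • (LinearMap.id : ℝ →ₗ[ℝ] ℝ)
  simp only [LinearMap.det_smul, LinearMap.det_id, Module.finrank_self, pow_one, mul_one] at h
  rw [← h]
  rfl

/-- If the zeros in the centred unit cube of an integer-periodic map are nondegenerate and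
interior, then the signs of the Jacobian determinants at these zeros add up to zero. -/
theorem IntPeriodic.sum_sign_det_eq_zero [Nonempty κ] {Φ : (κ → ℝ) → (κ → ℝ)}
    (hper : IntPeriodic Φ) (hΦ : ContDiff ℝ 1 Φ) (Z : Finset (κ → ℝ))
    (hZ : ∀ z ∈ Z, ‖z‖ < 1 / 2 ∧ Φ z = 0 ∧ (fderiv ℝ Φ z).det ≠ 0)
    (hzero : ∀ x, ‖x‖ ≤ 1 / 2 → Φ x = 0 → x ∈ Z) :
    ∑ z ∈ Z, ((SignType.sign (fderiv ℝ Φ z).det : SignType) : ℤ) = 0 := by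
  classical
  have hdetc : Continuous fun x => (fderiv ℝ Φ x).det :=
    ContinuousLinearMap.continuous_det.comp (hΦ.continuous_fderiv one_ne_zero)
  set C : Set (κ → ℝ) := univ.pi fun _ : κ => Ico (-(1 / 2) : ℝ) (1 / 2) with hC
  have hCm : MeasurableSet C := MeasurableSet.univ_pi fun _ => measurableSet_Ico
  have hCK : C ⊆ Metric.closedBall 0 (1 / 2) := by
    intro x hx
    rw [mem_closedBall_zero_iff, pi_norm_le_iff_of_nonneg (by norm_num)]
    intro i
    have := hx i (mem_univ i)
    rw [Real.norm_eq_abs, abs_le]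
    exact ⟨this.1, this.2.le⟩
  have hBC : Metric.ball 0 (1 / 2) ⊆ C := by
    intro x hx i _
    rw [mem_ball_zero_iff, pi_norm_lt_iff (by norm_num)] at hx
    have := abs_lt.1 (hx i)
    exact ⟨this.1.le, this.2⟩
  obtain ⟨S, hS, hSd⟩ := Z.finite_toSet.t2_separation
  have hloc : ∀ z : κ → ℝ, ∃ U, z ∈ Z → IsOpen U ∧ z ∈ U ∧ U ⊆ S z ∧ U ⊆ Metric.ball 0 (1 / 2) ∧
      InjOn Φ U ∧ IsOpen (Φ '' U) ∧
      ∀ x ∈ U, SignType.sign (fderiv ℝ Φ x).det = SignType.sign (fderiv ℝ Φ z).det := by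
    intro z
    by_cases hz : z ∈ Z
    swap
    · exact ⟨∅, fun h => absurd h hz⟩
    obtain ⟨h1, h2, h3⟩ := hZ z hz
    obtain ⟨U, hU, hzU, hinj, hopen⟩ := exists_isOpen_injOn_of_det_ne_zero hΦ h3
    have hsign : ∀ᶠ x in 𝓝 z,
        SignType.sign (fderiv ℝ Φ x).det = SignType.sign (fderiv ℝ Φ z).det := by
      have hs : ContinuousAt SignType.sign (fderiv ℝ Φ z).det := continuousAt_sign_of_ne_zero h3
      have := ContinuousAt.comp (f := fun x => (fderiv ℝ Φ x).det) hs hdetc.continuousAt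
      rw [ContinuousAt, nhds_discrete SignType, Filter.tendsto_pure] at this
      exact this
    obtain ⟨W, hW, hWo, hzW⟩ := eventually_nhds_iff.1 hsign
    refine ⟨U ∩ W ∩ S z ∩ Metric.ball 0 (1 / 2), fun _ => ?_⟩
    have hO : IsOpen (U ∩ W ∩ S z ∩ Metric.ball 0 (1 / 2)) :=
      ((hU.inter hWo).inter (hS z).2).inter Metric.isOpen_ball
    have hsub : U ∩ W ∩ S z ∩ Metric.ball 0 (1 / 2) ⊆ U := fun x hx => hx.1.1.1
    exact ⟨hO, ⟨⟨⟨hzU, hzW⟩, (hS z).1⟩, mem_ball_zero_iff.2 h1⟩, fun x hx => hx.1.2,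
      fun x hx => hx.2, hinj.mono hsub, hopen _ hO hsub, fun x hx => hW x hx.1.1.2⟩
  choose U hU using hloc
  have hUo : IsOpen (⋃ z ∈ Z, U z) := isOpen_biUnion fun z hz => (hU z hz).1
  have hnhds1 : (⋂ z ∈ Z, Φ '' U z) ∈ 𝓝 (0 : κ → ℝ) := by
    rw [Filter.biInter_finset_mem]
    intro z hz
    obtain ⟨-, hzU, -, -, -, ho, -⟩ := hU z hz
    exact ho.mem_nhds ⟨z, hzU, (hZ z hz).2.1⟩
  have hnhds2 : (Φ '' (Metric.closedBall 0 (1 / 2) \ ⋃ z ∈ Z, U z))ᶜ ∈ 𝓝 (0 : κ → ℝ) := by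
    have hcomp : IsCompact (Φ '' (Metric.closedBall 0 (1 / 2) \ ⋃ z ∈ Z, U z)) :=
      ((isCompact_closedBall _ _).diff hUo).image hΦ.continuous
    refine hcomp.isClosed.isOpen_compl.mem_nhds ?_
    rintro ⟨x, ⟨hx1, hx2⟩, hx0⟩
    have hxZ := hzero x (mem_closedBall_zero_iff.1 hx1) hx0
    exact hx2 (mem_biUnion hxZ (hU x hxZ).2.1)
  obtain ⟨ε, hε, hball⟩ := Metric.nhds_basis_ball.mem_iff.1 (Filter.inter_mem hnhds1 hnhds2)
  let b : ContDiffBump (0 : ℝ) := ⟨ε / 2, ε, by positivity, by linarith⟩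
  let B : ℝ → ℝ := fun u => ∫ t in (0 : ℝ)..u, b t
  have hB : ∀ t, HasDerivAt B (b t) t := fun t =>
    (b.continuous.integral_hasStrictDerivAt 0 t).hasDerivAt
  have hBc : ContDiff ℝ 1 B := by
    rw [contDiff_one_iff_deriv]
    refine ⟨fun t => (hB t).differentiableAt, ?_⟩
    rw [funext fun t => (hB t).deriv]
    exact b.continuous
  let g : (κ → ℝ) → ℝ := fun y => ∏ i, b (y i)
  have hg : ∀ y, g y ≠ 0 → y ∈ Metric.ball (0 : κ → ℝ) ε := by
    intro y hy
    rw [mem_ball_zero_iff, pi_norm_lt_iff hε]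
    intro i
    by_contra h
    refine hy (Finset.prod_eq_zero (Finset.mem_univ i) (b.zero_of_le_dist ?_))
    rw [dist_zero_right]
    exact not_lt.1 h
  have hgint : ∫ y, g y ≠ 0 := by
    rw [integral_fintype_prod_volume_eq_prod (fun (_ : κ) t => b t)]
    exact Finset.prod_ne_zero_iff.2 fun _ _ => b.integral_pos.ne'
  let Ψ : (κ → ℝ) → (κ → ℝ) := fun x i => B (Φ x i)
  have hΨ : ContDiff ℝ 1 Ψ := contDiff_pi.2 fun i => hBc.comp (contDiff_pi.1 hΦ i)
  have hΨper : IntPeriodic Ψ := fun x z => by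
    funext i
    change B _ = B _
    rw [hper x z]
  have hΨdet : ∀ x, (fderiv ℝ Ψ x).det = g (Φ x) * (fderiv ℝ Φ x).det := by
    intro x
    have h := (hasFDerivAt_pi_map hB (Φ x)).comp x
      (hΦ.differentiable one_ne_zero x).hasFDerivAt
    have h' : fderiv ℝ Ψ x = _ := h.fderiv
    rw [h', show g (Φ x) = _ from (det_pi_smul_proj fun i => b (Φ x i)).symm]
    exact LinearMap.det_comp _ _
  have hint := hΨper.integral_det_fderiv_eq_zero' hΨ
  simp_rw [hΨdet] at hint
  rw [setIntegral_eq_of_subset_of_forall_sdiff_eq_zero (s := ⋃ z ∈ Z, U z) hCm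
    (iUnion₂_subset fun z hz => (hU z hz).2.2.2.1.trans hBC), integral_biUnion_finset] at hint
  · have hterm : ∀ z ∈ Z, ∫ x in U z, g (Φ x) * (fderiv ℝ Φ x).det =
        ((SignType.sign (fderiv ℝ Φ z).det : SignType) : ℝ) * ∫ y, g y := by
      intro z hz
      obtain ⟨hUz, -, -, -, hinj, -, hsign⟩ := hU z hz
      have h1 := integral_image_eq_integral_abs_det_fderiv_smul volume hUz.measurableSet
        (fun x _ => (hΦ.differentiable one_ne_zero x).hasFDerivAt.hasFDerivWithinAt) hinj g
      rw [setIntegral_eq_integral_of_forall_compl_eq_zero] at h1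
      · rw [h1, ← integral_const_mul]
        refine setIntegral_congr_fun hUz.measurableSet fun x hx => ?_
        change _ = _ * (|_| * _)
        rw [← hsign x hx, ← mul_assoc, sign_mul_abs, mul_comm]
      · intro y hy
        by_contra h
        exact hy (mem_iInter₂.1 (hball (hg y h)).1 z hz)
    rw [Finset.sum_congr rfl hterm, ← Finset.sum_mul, mul_eq_zero, or_iff_left hgint] at hint
    have : ((∑ z ∈ Z, ((SignType.sign (fderiv ℝ Φ z).det : SignType) : ℤ) : ℤ) : ℝ) = 0 := by
      rw [← hint, Int.cast_sum]
      refine Finset.sum_congr rfl fun z _ => ?_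
      cases SignType.sign (fderiv ℝ Φ z).det <;> simp
    exact_mod_cast this
  · exact fun z hz => (hU z hz).1.measurableSet
  · intro z hz w hw hzw
    exact (hSd hz hw hzw).mono (hU z hz).2.2.1 (hU w hw).2.2.1
  · intro z hz
    have hc : Continuous fun x => g (Φ x) * (fderiv ℝ Φ x).det := by
      refine Continuous.mul (continuous_finsetProd _ fun i _ => ?_) hdetc
      exact b.continuous.comp ((continuous_apply i).comp hΦ.continuous)
    refine (hc.continuousOn.integrableOn_compact
      (isCompact_closedBall (0 : κ → ℝ) (1 / 2))).mono_set ?_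
    exact (hU z hz).2.2.2.1.trans Metric.ball_subset_closedBall
  · intro x hx
    by_contra h
    refine (hball (hg (Φ x) (left_ne_zero_of_mul h))).2 ⟨x, ⟨hCK hx.1, hx.2⟩, rfl⟩

end Degree

section Equivariant

variable {G V : Type*} [Group G] [NormedAddCommGroup V] [NormedSpace ℝ V]

theorem exists_pos_forall_ball_disjoint [Finite G] (T : G →* (V →L[ℝ] V)) {x₀ : V}
    (hx₀ : ∀ g, T g x₀ = x₀ → g = 1) {U : Set V} (hU : IsOpen U) (hxU : x₀ ∈ U) :
    ∃ r > 0, Metric.ball x₀ r ⊆ U ∧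
      ∀ g, g ≠ 1 → ∀ x ∈ Metric.ball x₀ r, T g x ∉ Metric.ball x₀ r := by
  have h : ∀ᶠ q : V × V in 𝓝 (x₀, x₀), q.1 ∈ U ∧ ∀ g, g ≠ 1 → T g q.1 ≠ q.2 := by
    refine (continuous_fst.continuousAt.eventually (hU.mem_nhds hxU)).and ?_
    rw [Filter.eventually_all]
    intro g
    by_cases hg : g = 1
    · simp [hg]
    have hc : Continuous fun q : V × V => T g q.1 - q.2 := by fun_prop
    filter_upwards [hc.continuousAt.eventually_ne (x := (x₀, x₀)) (y := 0)
      (sub_ne_zero.2 fun h => hg (hx₀ g h))] with q hq _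
    exact sub_ne_zero.1 hq
  obtain ⟨r, hr, hball⟩ := Metric.eventually_nhds_iff_ball.1 h
  refine ⟨r, hr, fun x hx => (hball (x, x) ?_).1,
    fun g hg x hx hx' => (hball (x, T g x) ?_).2 g hg rfl⟩
  · rw [← ball_prod_same]; exact ⟨hx, hx⟩
  · rw [← ball_prod_same]; exact ⟨hx, hx'⟩

/-- The sum of an invariant function over a finite set on which the group acts freely is divisible
by the order of the group. -/
theorem card_dvd_sum_of_free [Fintype G] [DecidableEq V] (T : G →* (V →L[ℝ] V)) (w : V → ℤ)
    (Z : Finset V) (hT : ∀ g, ∀ z ∈ Z, T g z ∈ Z) (hfree : ∀ z ∈ Z, ∀ g, T g z = z → g = 1)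
    (hw : ∀ g, ∀ z ∈ Z, w (T g z) = w z) : (Fintype.card G : ℤ) ∣ ∑ z ∈ Z, w z := by
  induction Z using Finset.strongInduction with
  | H Z ih =>
    rcases Z.eq_empty_or_nonempty with rfl | ⟨z, hz⟩
    · simp
    have hact : ∀ g h x, T g (T h x) = T (g * h) x := fun g h x => by
      rw [map_mul, mul_apply_eq_comp]
    have hone : ∀ x, T 1 x = x := fun x => by rw [map_one, one_apply_eq_self]
    set O := Finset.univ.image fun g => T g z with hO
    have hOZ : O ⊆ Z := by
      intro x hx
      obtain ⟨g, -, rfl⟩ := Finset.mem_image.1 hx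
      exact hT g z hz
    have hzO : z ∈ O := Finset.mem_image.2 ⟨1, Finset.mem_univ _, hone z⟩
    have hsumO : ∑ x ∈ O, w x = Fintype.card G * w z := by
      rw [hO, Finset.sum_image]
      · rw [Finset.sum_congr rfl fun g _ => hw g z hz]
        simp
      · intro g _ h _ hgh
        have : T (h⁻¹ * g) z = z := by
          rw [← hact]
          exact (congrArg _ hgh).trans (by rw [hact, inv_mul_cancel, hone])
        exact (inv_mul_eq_one.1 (hfree z hz _ this)).symm
    rw [← Finset.sum_sdiff hOZ, hsumO]
    refine dvd_add (ih (Z \ O) ?_ ?_ ?_ ?_) (dvd_mul_right _ _)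
    · exact Finset.sdiff_ssubset hOZ ⟨z, hzO⟩
    · intro g x hx
      rw [Finset.mem_sdiff] at hx ⊢
      refine ⟨hT g x hx.1, fun h => hx.2 ?_⟩
      obtain ⟨k, -, hk⟩ := Finset.mem_image.1 h
      refine Finset.mem_image.2 ⟨g⁻¹ * k, Finset.mem_univ _, ?_⟩
      rw [← hact, hk, hact, inv_mul_cancel, hone]
    · exact fun x hx => hfree x (Finset.mem_sdiff.1 hx).1
    · exact fun g x hx => hw g x (Finset.mem_sdiff.1 hx).1

theorem det_fderiv_apply_of_equivariant (T : G →* (V →L[ℝ] V)) {Φ : V → V}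
    (hΦ : Differentiable ℝ Φ) (hΦT : ∀ g x, Φ (T g x) = T g (Φ x)) (g : G) (x : V) :
    (fderiv ℝ Φ (T g x)).det = (fderiv ℝ Φ x).det := by
  have h1 : HasFDerivAt (fun x => Φ (T g x)) (fderiv ℝ Φ (T g x) ∘L T g) x :=
    (hΦ (T g x)).hasFDerivAt.comp x (T g).hasFDerivAt
  have h2 : HasFDerivAt (fun x => Φ (T g x)) (T g ∘L fderiv ℝ Φ x) x := by
    simp_rw [hΦT]
    exact (T g).hasFDerivAt.comp x (hΦ x).hasFDerivAt
  have h3 := congrArg ContinuousLinearMap.det (h1.unique h2)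
  have hmul : ∀ A B : V →L[ℝ] V, (A ∘L B).det = A.det * B.det := fun A B =>
    LinearMap.det_comp _ _
  have hne : (T g).det ≠ 0 := by
    have h4 : (T g⁻¹).det * (T g).det = 1 := by
      rw [← hmul]
      change (T g⁻¹ * T g).det = 1
      rw [← map_mul, inv_mul_cancel, map_one]
      exact LinearMap.det_id
    exact right_ne_zero_of_mul (h4 ▸ one_ne_zero)
  rw [hmul, hmul, mul_comm] at h3
  exact mul_left_cancel₀ hne h3

variable [FiniteDimensional ℝ V]

theorem dense_compl_image_det_fderiv_eq_zero {Φ : V → V} (hΦ : Differentiable ℝ Φ) :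
    Dense (Φ '' {x | (fderiv ℝ Φ x).det = 0})ᶜ := by
  borelize V
  rw [← interior_eq_empty_iff_dense_compl]
  exact Measure.interior_eq_empty_of_null (μ := Measure.addHaar)
    (addHaar_image_eq_zero_of_det_fderivWithin_eq_zero _
      (fun x _ => (hΦ x).hasFDerivAt.hasFDerivWithinAt) fun _ hx => hx)

/-- Near a point with trivial stabiliser, an equivariant map can be made regular by a small
equivariant perturbation, without destroying regularity on a given compact set. -/
theorem exists_equivariant_perturbation_local [Finite G] (T : G →* (V →L[ℝ] V)) {x₀ : V}
    (hx₀ : ∀ g, T g x₀ = x₀ → g = 1) {U : Set V} (hU : IsOpen U)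
    (hTU : ∀ g, ∀ x ∈ U, T g x ∈ U) (hxU : x₀ ∈ U) :
    ∃ S ∈ 𝓝 x₀, IsCompact S ∧ ∀ (Φ : V → V) (K : Set V) (ε : ℝ), ContDiff ℝ 1 Φ →
      (∀ g x, Φ (T g x) = T g (Φ x)) → IsCompact K →
      (∀ x ∈ K, Φ x = 0 → (fderiv ℝ Φ x).det ≠ 0) → 0 < ε →
      ∃ Φ' : V → V, ContDiff ℝ 1 Φ' ∧ (∀ g x, Φ' (T g x) = T g (Φ' x)) ∧
        (∀ x, x ∉ U → Φ' x = Φ x) ∧ (∀ x, ‖Φ' x - Φ x‖ ≤ ε) ∧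
        ∀ x ∈ K ∪ S, Φ' x = 0 → (fderiv ℝ Φ' x).det ≠ 0 := by
  classical
  have := Fintype.ofFinite G
  obtain ⟨r, hr, hrU, hdisj⟩ := exists_pos_forall_ball_disjoint T hx₀ hU hxU
  let χ : ContDiffBump x₀ := ⟨r / 2, r, by positivity, by linarith⟩
  refine ⟨Metric.closedBall x₀ (r / 3), Metric.closedBall_mem_nhds _ (by positivity),
    isCompact_closedBall _ _, fun Φ K ε hΦ hΦT hK hreg hε => ?_⟩
  let F : V → V → V := fun c x => Φ x + ∑ g, χ (T g⁻¹ x) • T g c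
  have hF : ContDiff ℝ 1 fun q : V × V => F q.1 q.2 := by
    refine (hΦ.comp contDiff_snd).add (ContDiff.sum fun g _ => ContDiff.smul ?_ ?_)
    · exact χ.contDiff.comp ((T g⁻¹).contDiff.comp contDiff_snd)
    · exact (T g).contDiff.comp contDiff_fst
  have hF' : Continuous fun q : V × V => fderiv ℝ (F q.1) q.2 := by
    refine (ContDiff.fderiv (n := 0) (m := 1) (f := fun q : V × V => F q.1) (g := Prod.snd)
      ?_ contDiff_snd (by norm_num)).continuous
    exact hF.comp (g := fun q : V × V => F q.1 q.2)
      (f := fun q : (V × V) × V => (q.1.1, q.2)) (by fun_prop)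
  have hF0 : F 0 = Φ := by
    funext x
    simp [F]
  have hev1 : ∀ᶠ c in 𝓝 (0 : V), ∀ x ∈ K, F c x = 0 → (fderiv ℝ (F c) x).det ≠ 0 := by
    refine hK.eventually_forall_of_forall_eventually fun x hx => ?_
    by_cases h0 : Φ x = 0
    · have hc : ContinuousAt (fun q : V × V => (fderiv ℝ (F q.1) q.2).det) (0, x) :=
        (ContinuousLinearMap.continuous_det.comp hF').continuousAt
      filter_upwards [hc.eventually_ne (y := 0) (by simpa [hF0] using hreg x hx h0)] with q hq _
      exact hq
    · filter_upwards [hF.continuous.continuousAt.eventually_ne (x := ((0 : V), x)) (y := 0)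
        (by simpa [hF0] using h0)] with q hq hq0
      exact absurd hq0 hq
  have hbound : ∀ c x, ‖F c x - Φ x‖ ≤ (∑ g, ‖T g‖) * ‖c‖ := by
    intro c x
    simp only [F, add_sub_cancel_left]
    refine (norm_sum_le _ _).trans ?_
    rw [Finset.sum_mul]
    refine Finset.sum_le_sum fun g _ => ?_
    rw [norm_smul, Real.norm_of_nonneg χ.nonneg]
    calc χ (T g⁻¹ x) * ‖T g c‖ ≤ 1 * (‖T g‖ * ‖c‖) :=
          mul_le_mul χ.le_one ((T g).le_opNorm c) (norm_nonneg _) zero_le_one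
      _ = ‖T g‖ * ‖c‖ := one_mul _
  have hev2 : ∀ᶠ c in 𝓝 (0 : V), (∑ g, ‖T g‖) * ‖c‖ < ε := by
    have hc : Continuous fun c : V => (∑ g, ‖T g‖) * ‖c‖ := by fun_prop
    exact hc.continuousAt.eventually (gt_mem_nhds (by simpa using hε))
  have hfreq : ∃ᶠ c in 𝓝 (0 : V), -c ∈ (Φ '' {x | (fderiv ℝ Φ x).det = 0})ᶜ := by
    have h := dense_compl_image_det_fderiv_eq_zero (hΦ.differentiable one_ne_zero)
    exact mem_closure_iff_frequently.1 (h.preimage (Homeomorph.neg V).isOpenMap 0)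
  obtain ⟨c, hcS, hc1, hc2⟩ := (hfreq.and_eventually (hev1.and hev2)).exists
  have hFc : ContDiff ℝ 1 (F c) := hF.comp (contDiff_const.prodMk contDiff_id)
  refine ⟨F c, hFc, fun h x => ?_, fun x hx => ?_, fun x => (hbound c x).trans hc2.le, ?_⟩
  · simp only [F, hΦT, map_add, map_sum, map_smul]
    congr 1
    refine (Fintype.sum_equiv (Equiv.mulLeft h) _ _ fun g => ?_).symm
    rw [Equiv.coe_mulLeft, mul_inv_rev, map_mul, map_mul, mul_apply_eq_comp,
      mul_apply_eq_comp, ← mul_apply_eq_comp (T h⁻¹), ← map_mul,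
      inv_mul_cancel, map_one, one_apply_eq_self]
  · simp only [F, add_eq_left]
    refine Finset.sum_eq_zero fun g _ => ?_
    rw [χ.zero_of_le_dist, zero_smul]
    by_contra h
    have := hTU g _ (hrU (Metric.mem_ball.2 (not_le.1 h)))
    rw [← mul_apply_eq_comp, ← map_mul, mul_inv_cancel, map_one,
      one_apply_eq_self] at this
    exact hx this
  · rintro x (hx | hx) hx0
    · exact hc1 x hx hx0
    have hloc : ∀ y ∈ Metric.ball x₀ (r / 2), F c y = Φ y + c := by
      intro y hy
      have hyr : y ∈ Metric.ball x₀ r := Metric.ball_subset_ball (by linarith) hy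
      simp only [F]
      rw [Finset.sum_eq_single 1]
      · rw [inv_one, map_one, one_apply_eq_self, one_apply_eq_self,
          χ.one_of_mem_closedBall (Metric.ball_subset_closedBall hy), one_smul]
      · intro g _ hg
        rw [χ.zero_of_le_dist, zero_smul]
        exact not_lt.1 (hdisj g⁻¹ (inv_ne_one.2 hg) y hyr)
      · simp
    have hxr : x ∈ Metric.ball x₀ (r / 2) :=
      Metric.closedBall_subset_ball (by linarith) hx
    have hder : fderiv ℝ (F c) x = fderiv ℝ Φ x := by
      rw [← fderiv_add_const (𝕜 := ℝ) (f := Φ) c]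
      refine Filter.EventuallyEq.fderiv_eq ?_
      filter_upwards [Metric.isOpen_ball.mem_nhds hxr] with y hy
      exact hloc y hy
    rw [hder]
    intro h
    refine hcS ⟨x, h, ?_⟩
    rw [hloc x hxr] at hx0
    exact eq_neg_of_add_eq_zero_left hx0

/-- An equivariant map can be made regular on a compact set of points with trivial stabiliser by a
small equivariant perturbation. -/
theorem exists_equivariant_perturbation [Finite G] (T : G →* (V →L[ℝ] V))
    {U : Set V} (hU : IsOpen U) (hTU : ∀ g, ∀ x ∈ U, T g x ∈ U) {C : Set V} (hC : IsCompact C)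
    (hCU : C ⊆ U) (hfree : ∀ x ∈ C, ∀ g, T g x = x → g = 1) {Φ : V → V} (hΦ : ContDiff ℝ 1 Φ)
    (hΦT : ∀ g x, Φ (T g x) = T g (Φ x)) {ε : ℝ} (hε : 0 < ε) :
    ∃ Φ' : V → V, ContDiff ℝ 1 Φ' ∧ (∀ g x, Φ' (T g x) = T g (Φ' x)) ∧
      (∀ x, x ∉ U → Φ' x = Φ x) ∧ (∀ x, ‖Φ' x - Φ x‖ ≤ ε) ∧
      ∀ x ∈ C, Φ' x = 0 → (fderiv ℝ Φ' x).det ≠ 0 := by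
  let P : Set V → Prop := fun S => ∀ (Φ : V → V) (K : Set V) (ε : ℝ), ContDiff ℝ 1 Φ →
    (∀ g x, Φ (T g x) = T g (Φ x)) → IsCompact K →
    (∀ x ∈ K, Φ x = 0 → (fderiv ℝ Φ x).det ≠ 0) → 0 < ε →
    ∃ (Φ' : V → V) (L : Set V), IsCompact L ∧ S ⊆ L ∧ ContDiff ℝ 1 Φ' ∧
      (∀ g x, Φ' (T g x) = T g (Φ' x)) ∧
      (∀ x, x ∉ U → Φ' x = Φ x) ∧ (∀ x, ‖Φ' x - Φ x‖ ≤ ε) ∧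
      ∀ x ∈ K ∪ L, Φ' x = 0 → (fderiv ℝ Φ' x).det ≠ 0
  have hP : P C := by
    refine hC.induction_on (p := P) ?_ ?_ ?_ ?_
    · intro Φ K ε h1 h2 _ h4 hε
      exact ⟨Φ, ∅, isCompact_empty, subset_rfl, h1, h2, fun _ _ => rfl, by simp [hε.le],
        by simpa using h4⟩
    · intro S S' hS hP Φ K ε h1 h2 h3 h4 hε
      obtain ⟨Φ', L, hL, hSL, h⟩ := hP Φ K ε h1 h2 h3 h4 hε
      exact ⟨Φ', L, hL, hS.trans hSL, h⟩
    · intro S S' hS hS' Φ K ε h1 h2 h3 h4 hε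
      obtain ⟨Φ', L, hL, hSL, a1, a2, a3, a4, a5⟩ := hS Φ K (ε / 2) h1 h2 h3 h4 (half_pos hε)
      obtain ⟨Φ'', L', hL', hSL', b1, b2, b3, b4, b5⟩ :=
        hS' Φ' (K ∪ L) (ε / 2) a1 a2 (h3.union hL) a5 (half_pos hε)
      refine ⟨Φ'', L ∪ L', hL.union hL', union_subset_union hSL hSL', b1, b2,
        fun x hx => (b3 x hx).trans (a3 x hx), fun x => ?_, by rwa [← union_assoc]⟩
      calc ‖Φ'' x - Φ x‖ ≤ ‖Φ'' x - Φ' x‖ + ‖Φ' x - Φ x‖ := norm_sub_le_norm_sub_add_norm_sub _ _ _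
        _ ≤ ε := by linarith [a4 x, b4 x]
    · intro x hx
      obtain ⟨S, hS, hSc, h⟩ :=
        exists_equivariant_perturbation_local T (hfree x hx) hU hTU (hCU hx)
      refine ⟨S, mem_nhdsWithin_of_mem_nhds hS, fun Φ K ε h1 h2 h3 h4 hε => ?_⟩
      obtain ⟨Φ', h'⟩ := h Φ K ε h1 h2 h3 h4 hε
      exact ⟨Φ', S, hSc, subset_rfl, h'⟩
  obtain ⟨Φ', L, -, hCL, h1, h2, h3, h4, h5⟩ :=
    hP Φ ∅ ε hΦ hΦT isCompact_empty (by simp) hε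
  exact ⟨Φ', h1, h2, h3, h4, fun x hx => h5 x (Or.inr (hCL hx))⟩

end Equivariant

theorem intPeriodic_comp_sub_round {κ E : Type*} (c : (κ → ℝ) → E) :
    IntPeriodic fun x => c (x - fun i => (round (x i) : ℝ)) := by
  intro x z
  change c _ = c _
  congr 1
  funext i
  simp

section Periodize

variable {κ : Type*} [Fintype κ] {E : Type*} [NormedAddCommGroup E]

theorem norm_sub_round_le (x : κ → ℝ) (z : κ → ℤ) :
    ‖x - fun i => (round (x i) : ℝ)‖ ≤ ‖x - fun i => (z i : ℝ)‖ := by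
  rw [pi_norm_le_iff_of_nonneg (norm_nonneg _)]
  exact fun i => (round_le (x i) (z i)).trans (norm_le_pi_norm (x - fun i => (z i : ℝ)) i)

theorem round_eq_of_norm_sub_lt {x : κ → ℝ} {z : κ → ℤ} (h : ‖x - fun i => (z i : ℝ)‖ < 1 / 2) :
    (fun i => round (x i)) = z := by
  funext i
  have hi := abs_lt.1 ((norm_le_pi_norm _ i).trans_lt h)
  simp only [Pi.sub_apply] at hi
  rw [round_eq, Int.floor_eq_iff]
  constructor <;> linarith [hi.1, hi.2]

theorem comp_sub_round_eq {c : (κ → ℝ) → E} (hc0 : ∀ x, 1 / 4 ≤ ‖x‖ → c x = 0) {x : κ → ℝ}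
    (hx : ‖x‖ ≤ 1 / 2) : c (x - fun i => (round (x i) : ℝ)) = c x := by
  rcases hx.lt_or_eq with h | h
  · have : (fun i => round (x i)) = (0 : κ → ℤ) :=
      round_eq_of_norm_sub_lt (by simpa [← Pi.zero_def] using h)
    congr 1
    funext i
    simp [congrFun this i]
  · rw [hc0 x (by linarith), hc0]
    obtain ⟨i, hi⟩ : ∃ i, 1 / 2 ≤ ‖x i‖ := by
      by_contra! hlt
      exact h.not_lt ((pi_norm_lt_iff (by norm_num)).2 hlt)
    have hxi : ‖x i‖ = 1 / 2 := le_antisymm (h ▸ norm_le_pi_norm x i) hi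
    refine le_trans ?_ (norm_le_pi_norm _ i)
    have hr := abs_sub_abs_le_abs_sub (round (x i) : ℝ) (x i)
    rw [Pi.sub_apply, Real.norm_eq_abs, abs_sub_comm]
    rw [Real.norm_eq_abs] at hxi
    by_cases h0 : round (x i) = 0
    · rw [h0]; simp [hxi]; norm_num
    · have : (1 : ℝ) ≤ |(round (x i) : ℝ)| := by exact_mod_cast Int.one_le_abs h0
      linarith

theorem contDiff_comp_sub_round [NormedSpace ℝ E] {c : (κ → ℝ) → E} (hc : ContDiff ℝ 1 c)
    (hc0 : ∀ x, 1 / 4 ≤ ‖x‖ → c x = 0) :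
    ContDiff ℝ 1 fun x => c (x - fun i => (round (x i) : ℝ)) := by
  rw [contDiff_iff_contDiffAt]
  intro x
  rcases lt_or_ge ‖x - fun i => (round (x i) : ℝ)‖ (3 / 8) with h | h
  · refine ContDiffAt.congr_of_eventuallyEq (f := fun y => c (y - fun i => (round (x i) : ℝ)))
      (hc.comp (contDiff_id.sub contDiff_const)).contDiffAt ?_
    have hcont : Continuous fun y : κ → ℝ => ‖y - fun i => (round (x i) : ℝ)‖ := by fun_prop
    filter_upwards [hcont.continuousAt.eventually
      (gt_mem_nhds (h.trans (by norm_num : (3 / 8 : ℝ) < 1 / 2)))] with y hy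
    have := round_eq_of_norm_sub_lt hy
    congr 2
    funext i
    rw [← congrFun this i]
  · refine ContDiffAt.congr_of_eventuallyEq (f := fun _ => (0 : E)) contDiffAt_const ?_
    filter_upwards [Metric.ball_mem_nhds x (by norm_num : (0 : ℝ) < 1 / 8)] with y hy
    refine hc0 _ ?_
    have h1 := h.trans (norm_sub_round_le x fun i => round (y i))
    have h2 := norm_sub_le_norm_sub_add_norm_sub x y fun i => (round (y i) : ℝ)
    rw [mem_ball_iff_norm, norm_sub_rev] at hy
    linarith

end Periodize

section FiniteZeros

variable {V : Type*} [NormedAddCommGroup V] [NormedSpace ℝ V] [FiniteDimensional ℝ V]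

theorem finite_zeros_of_det_ne_zero {Φ : V → V} (hΦ : ContDiff ℝ 1 Φ) {C : Set V}
    (hC : IsCompact C) (hreg : ∀ x ∈ C, Φ x = 0 → (fderiv ℝ Φ x).det ≠ 0) :
    {x ∈ C | Φ x = 0}.Finite := by
  have hK : IsCompact {x ∈ C | Φ x = 0} :=
    hC.inter_right (isClosed_eq hΦ.continuous continuous_const)
  have h : ({x ∈ C | Φ x = 0} ∩ {x ∈ C | Φ x = 0}).Finite := by
    refine hK.induction_on (p := fun S => (S ∩ {x ∈ C | Φ x = 0}).Finite) (by simp) ?_ ?_ ?_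
    · exact fun S S' hS h => h.subset (inter_subset_inter_left _ hS)
    · intro S S' h h'
      rw [union_inter_distrib_right]
      exact h.union h'
    · rintro x ⟨hx, hx0⟩
      obtain ⟨U, hU, hxU, hinj, -⟩ := exists_isOpen_injOn_of_det_ne_zero hΦ (hreg x hx hx0)
      refine ⟨U, mem_nhdsWithin_of_mem_nhds (hU.mem_nhds hxU), (finite_singleton x).subset ?_⟩
      rintro y ⟨hy, -, hy0⟩
      exact hinj hy hxU (hy0.trans hx0.symm)
  rwa [inter_self] at h

end FiniteZeros

section Cutoff

variable {G V : Type*} [Group G] [NormedAddCommGroup V] [NormedSpace ℝ V]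

theorem norm_le_two_mul_norm_apply {T : G →* (V →L[ℝ] V)} (hT : ∀ g x, ‖T g x‖ ≤ 2 * ‖x‖)
    (g : G) (x : V) : ‖x‖ ≤ 2 * ‖T g x‖ := by
  have h := hT g⁻¹ (T g x)
  rwa [← mul_apply_eq_comp, ← map_mul, inv_mul_cancel, map_one, one_apply_eq_self] at h

theorem exists_invariant_cutoff [Finite G] [FiniteDimensional ℝ V] (T : G →* (V →L[ℝ] V))
    (hT : ∀ g x, ‖T g x‖ ≤ 2 * ‖x‖) {r : ℝ} (hr : 0 < r) :
    ∃ t : V → ℝ, ContDiff ℝ 1 t ∧ (∀ g x, t (T g x) = t x) ∧ (∀ x, ‖x‖ ≤ r / 8 → t x = 1) ∧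
      ∀ x, r ≤ ‖x‖ → t x = 0 := by
  have := Fintype.ofFinite G
  let b : ContDiffBump (0 : V) := ⟨r / 4, r / 2, by positivity, by linarith⟩
  refine ⟨fun x => (Fintype.card G : ℝ)⁻¹ * ∑ g, b (T g x), ?_, fun h x => ?_, fun x hx => ?_,
    fun x hx => ?_⟩
  · exact contDiff_const.mul (ContDiff.sum fun g _ => b.contDiff.comp (T g).contDiff)
  · refine congrArg _ (Fintype.sum_equiv (Equiv.mulRight h) _ _ fun g => ?_)
    rw [Equiv.coe_mulRight, map_mul, mul_apply_eq_comp]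
  · beta_reduce
    rw [Finset.sum_congr rfl fun g _ => b.one_of_mem_closedBall
      (mem_closedBall_zero_iff.2 ((hT g x).trans (by change _ ≤ r / 4; linarith)))]
    simp
  · beta_reduce
    rw [Finset.sum_eq_zero fun g _ => b.zero_of_le_dist ?_, mul_zero]
    rw [dist_zero_right]
    change r / 2 ≤ _
    linarith [norm_le_two_mul_norm_apply hT g x]

end Cutoff

/-- Let `Θ` be an equivariant map for a free linear action, and `P` an integer-periodic map.
If `Ξ` agrees with `Θ` near the origin and with `P` away from it, then `Ξ` has a zero in the unit
cube away from the origin. -/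
theorem exists_zero_of_equivariant_of_intPeriodic {G κ : Type*} [Group G] [Fintype G] [Fintype κ]
    [Nonempty κ] (hG : 1 < Fintype.card G) (T : G →* ((κ → ℝ) →L[ℝ] (κ → ℝ)))
    (hT : ∀ g x, ‖T g x‖ ≤ 2 * ‖x‖) (hfree : ∀ x, x ≠ 0 → ∀ g, T g x = x → g = 1)
    {Θ P Ξ : (κ → ℝ) → (κ → ℝ)} (hΘ : ContDiff ℝ 1 Θ) (hP : ContDiff ℝ 1 P) (hΞ : ContDiff ℝ 1 Ξ)
    (hΘT : ∀ g x, Θ (T g x) = T g (Θ x)) (hPper : IntPeriodic P) {a : ℝ} (ha : 0 < a)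
    (ha' : a ≤ 1 / 4) (hΞΘ : ∀ x, ‖x‖ ≤ a → Ξ x = Θ x) (hΞP : ∀ x, 1 / 4 ≤ ‖x‖ → Ξ x = P x) :
    ∃ x, a / 4 ≤ ‖x‖ ∧ ‖x‖ ≤ 1 / 2 ∧ Ξ x = 0 := by
  classical
  by_contra! hne
  obtain ⟨t, ht, htT, ht1, ht0⟩ :=
    exists_invariant_cutoff T hT (show 0 < a / 4 by positivity)
  let F : (κ → ℝ) → (κ → ℝ) := fun x => (1 - t x) • Θ x + t x • x
  have hF : ContDiff ℝ 1 F := ((contDiff_const.sub ht).smul hΘ).add (ht.smul contDiff_id)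
  have hFT : ∀ g x, F (T g x) = T g (F x) := fun g x => by
    simp only [F, htT, hΘT, map_add, map_smul]
  set U : Set (κ → ℝ) := {x | ∀ g, a / 256 < ‖T g x‖ ∧ ‖T g x‖ < a} with hUdef
  have hU : IsOpen U := by
    rw [hUdef, ofPred_forall]
    refine isOpen_iInter_of_finite fun g => ?_
    exact (isOpen_lt continuous_const (T g).continuous.norm).inter
      (isOpen_lt (T g).continuous.norm continuous_const)
  have hTU : ∀ g, ∀ x ∈ U, T g x ∈ U := fun g x hx h => by
    rw [← mul_apply_eq_comp, ← map_mul]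
    exact hx (h * g)
  have hUnorm : ∀ x ∈ U, a / 256 < ‖x‖ ∧ ‖x‖ < a := fun x hx => by
    simpa using hx 1
  set C : Set (κ → ℝ) := {x | a / 64 ≤ ‖x‖ ∧ ‖x‖ ≤ a / 4} with hCdef
  have hC : IsCompact C := by
    refine (isCompact_closedBall (0 : κ → ℝ) (a / 4)).of_isClosed_subset ?_
      fun x hx => mem_closedBall_zero_iff.2 hx.2
    exact (isClosed_le continuous_const continuous_norm).inter
      (isClosed_le continuous_norm continuous_const)
  have hCU : C ⊆ U := fun x hx g => by
    have h1 := hT g x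
    have h2 := norm_le_two_mul_norm_apply hT g x
    constructor <;> linarith [hx.1, hx.2]
  have hC0 : ∀ x ∈ C, x ≠ 0 := fun x hx =>
    norm_pos_iff.1 ((by positivity : 0 < a / 64).trans_le hx.1)
  obtain ⟨η, hη, hηΘ⟩ : ∃ η > 0, ∀ x, a / 4 ≤ ‖x‖ → ‖x‖ ≤ a → η ≤ ‖Θ x‖ := by
    have hK : IsCompact {x : κ → ℝ | a / 4 ≤ ‖x‖ ∧ ‖x‖ ≤ a} := by
      refine (isCompact_closedBall (0 : κ → ℝ) a).of_isClosed_subset ?_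
        fun x hx => mem_closedBall_zero_iff.2 hx.2
      exact (isClosed_le continuous_const continuous_norm).inter
        (isClosed_le continuous_norm continuous_const)
    obtain ⟨η, hη, h⟩ := hK.exists_forall_le' hΘ.continuous.norm.continuousOn (a := 0)
      fun x hx => norm_pos_iff.2 (by
        rw [← hΞΘ x hx.2]
        exact hne x hx.1 (by linarith [hx.2]))
    exact ⟨η, hη, fun x h1 h2 => h x ⟨h1, h2⟩⟩
  obtain ⟨Φ', hΦ', hΦ'T, hΦ'U, hΦ'F, hΦ'reg⟩ := exists_equivariant_perturbation T hU hTU hC hCU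
    (fun x hx => hfree x (hC0 x hx)) hF hFT
    (show 0 < min (a / 512) (η / 2) from lt_min (by positivity) (by positivity))
  have hFid : ∀ x, ‖x‖ ≤ a / 32 → F x = x := fun x hx => by
    simp [F, ht1 x (by linarith)]
  have hΦ'id : ∀ x, ‖x‖ ≤ a / 256 → Φ' x = x := fun x hx => by
    rw [hΦ'U x fun h => (hUnorm x h).1.not_ge hx, hFid x (by linarith)]
  have hzero' : ∀ x, ‖x‖ ≤ a → Φ' x = 0 → x = 0 ∨ x ∈ C := by
    intro x hx hx0
    have hΦF := hΦ'F x
    rw [hx0, zero_sub, norm_neg] at hΦF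
    rcases le_or_gt ‖x‖ (a / 32) with h | h
    · left
      rw [hFid x h] at hΦF
      rw [← hx0, hΦ'id x]
      linarith [hΦF.trans (min_le_left _ _)]
    · refine Or.inr ⟨by linarith, ?_⟩
      by_contra! h4
      have h5 := hηΘ x h4.le hx
      have h6 : F x = Θ x := by simp [F, ht0 x h4.le]
      rw [h6] at hΦF
      linarith [hΦF.trans (min_le_right _ _)]
  let Λ : (κ → ℝ) → (κ → ℝ) := fun x => Ξ x + (Φ' x - Θ x)
  have hΛ1 : ∀ x, ‖x‖ ≤ a → Λ x = Φ' x := fun x hx => by simp [Λ, hΞΘ x hx]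
  have hΛ2 : ∀ x, a ≤ ‖x‖ → Λ x = Ξ x := fun x hx => by
    simp [Λ, hΦ'U x fun h => (hUnorm x h).2.not_ge hx, F, ht0 x (by linarith)]
  let c : (κ → ℝ) → (κ → ℝ) := fun x => Λ x - P x
  have hc : ContDiff ℝ 1 c := (hΞ.add (hΦ'.sub hΘ)).sub hP
  have hc0 : ∀ x, 1 / 4 ≤ ‖x‖ → c x = 0 := fun x hx => by
    simp [c, hΛ2 x (ha'.trans hx), hΞP x hx]
  let Φ : (κ → ℝ) → (κ → ℝ) := fun x => P x + c (x - fun i => (round (x i) : ℝ))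
  have hΦ : ContDiff ℝ 1 Φ := hP.add (contDiff_comp_sub_round hc hc0)
  have hΦper : IntPeriodic Φ := fun x z => by
    change P _ + _ = P _ + _
    rw [hPper x z]
    exact congrArg _ (intPeriodic_comp_sub_round c x z)
  have hΦΛ : ∀ x, ‖x‖ ≤ 1 / 2 → Φ x = Λ x := fun x hx => by
    simp only [Φ]
    rw [comp_sub_round_eq hc0 hx, add_sub_cancel]
  have hΦΦ' : ∀ x, ‖x‖ ≤ a → Φ x = Φ' x := fun x hx => by
    rw [hΦΛ x (by linarith), hΛ1 x hx]
  have hderiv : ∀ x, ‖x‖ < a → fderiv ℝ Φ x = fderiv ℝ Φ' x := fun x hx => by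
    refine Filter.EventuallyEq.fderiv_eq ?_
    filter_upwards [Metric.isOpen_ball.mem_nhds (mem_ball_zero_iff.2 hx)] with y hy
    exact hΦΦ' y (mem_ball_zero_iff.1 hy).le
  have hderiv0 : fderiv ℝ Φ' 0 = ContinuousLinearMap.id ℝ _ := by
    rw [← fderiv_id (𝕜 := ℝ) (x := (0 : κ → ℝ))]
    refine Filter.EventuallyEq.fderiv_eq ?_
    filter_upwards [Metric.ball_mem_nhds (0 : κ → ℝ) (show 0 < a / 256 by positivity)] with y hy
    exact hΦ'id y (mem_ball_zero_iff.1 hy).le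
  have hdet0 : (fderiv ℝ Φ' 0).det = 1 := by
    rw [hderiv0]
    exact LinearMap.det_id
  have hfin := finite_zeros_of_det_ne_zero hΦ' hC hΦ'reg
  set Z := hfin.toFinset with hZdef
  have hZ : ∀ x, x ∈ Z ↔ x ∈ C ∧ Φ' x = 0 := fun x => by rw [hZdef, hfin.mem_toFinset]; rfl
  have h0Z : (0 : κ → ℝ) ∉ Z := fun h => hC0 0 ((hZ 0).1 h).1 rfl
  have hΦ'0 : Φ' 0 = 0 := hΦ'id 0 (by rw [norm_zero]; positivity)
  have hCa : ∀ x ∈ C, ‖x‖ < a := fun x hx => (hUnorm x (hCU hx)).2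
  have hsum := hΦper.sum_sign_det_eq_zero hΦ (insert 0 Z) (by
    intro z hz
    have hza : ‖z‖ < a := by
      rcases Finset.mem_insert.1 hz with rfl | hz
      · rwa [norm_zero]
      · exact hCa z ((hZ z).1 hz).1
    refine ⟨by linarith, ?_, ?_⟩
    · rw [hΦΦ' z hza.le]
      rcases Finset.mem_insert.1 hz with rfl | hz
      · exact hΦ'0
      · exact ((hZ z).1 hz).2
    · rw [hderiv z hza]
      rcases Finset.mem_insert.1 hz with rfl | hz
      · rw [hdet0]
        exact one_ne_zero
      · exact hΦ'reg z ((hZ z).1 hz).1 ((hZ z).1 hz).2) (by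
    intro x hx hx0
    rw [hΦΛ x hx] at hx0
    rw [Finset.mem_insert, hZ]
    rcases le_or_gt ‖x‖ a with h | h
    · rw [hΛ1 x h] at hx0
      exact (hzero' x h hx0).imp_right fun h => ⟨h, hx0⟩
    · rw [hΛ2 x h.le] at hx0
      exact absurd hx0 (hne x (by linarith) hx))
  have hdvd := card_dvd_sum_of_free T
    (fun x => ((SignType.sign (fderiv ℝ Φ' x).det : SignType) : ℤ)) Z
    (by
      intro g z hz
      obtain ⟨hzC, hz0⟩ := (hZ z).1 hz
      have h0 : Φ' (T g z) = 0 := by rw [hΦ'T, hz0, map_zero]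
      refine (hZ _).2 ⟨(hzero' _ ((hCU hzC g).2.le) h0).resolve_left fun h => hC0 z hzC ?_, h0⟩
      have := norm_le_two_mul_norm_apply hT g z
      rw [h, norm_zero, mul_zero] at this
      exact norm_le_zero_iff.1 this)
    (fun z hz => hfree z (hC0 z ((hZ z).1 hz).1))
    (fun g z _ => by
      simp only [det_fderiv_apply_of_equivariant T (hΦ'.differentiable one_ne_zero) hΦ'T])
  rw [Finset.sum_insert h0Z, hderiv 0 (by rwa [norm_zero]), hdet0, sign_one,
    Finset.sum_congr rfl fun z hz => by rw [hderiv z (hCa z ((hZ z).1 hz).1)]] at hsum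
  rw [← eq_neg_iff_add_eq_zero, eq_comm, neg_eq_iff_eq_neg] at hsum
  rw [hsum] at hdvd
  have h1 : (Fintype.card G : ℤ) ∣ 1 := by simpa using hdvd
  have h2 := Int.le_of_dvd one_pos h1
  omega

section Smoothing

variable {κ E : Type*} [Fintype κ] [NormedAddCommGroup E] [NormedSpace ℝ E]

theorem IntPeriodic.exists_contDiff_norm_sub_le [CompleteSpace E] {F : (κ → ℝ) → E}
    (hF : IntPeriodic F) (hc : Continuous F) {ε : ℝ} (hε : 0 < ε) :
    ∃ H : (κ → ℝ) → E, ContDiff ℝ 1 H ∧ IntPeriodic H ∧ ∀ x, ‖H x - F x‖ ≤ ε := by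
  have hK : IsCompact (univ.pi fun _ : κ => Icc (0 : ℝ) 1) :=
    isCompact_univ_pi fun _ => isCompact_Icc
  have hev : ∀ᶠ v in 𝓝 (0 : κ → ℝ), ∀ x ∈ univ.pi fun _ : κ => Icc (0 : ℝ) 1,
      dist (F (x + v)) (F x) < ε := by
    refine hK.eventually_forall_of_forall_eventually fun x _ => ?_
    have hd : Continuous fun q : (κ → ℝ) × (κ → ℝ) => dist (F (q.2 + q.1)) (F q.2) := by fun_prop
    exact hd.continuousAt.eventually (gt_mem_nhds (by simpa using hε))
  obtain ⟨r, hr, hball⟩ := Metric.eventually_nhds_iff_ball.1 hev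
  have hunif : ∀ x, ∀ y ∈ Metric.ball x r, dist (F y) (F x) ≤ ε := by
    intro x y hy
    have hz : ∀ v : κ → ℝ, F ((fun i => Int.fract (x i)) + v) = F (x + v) := fun v => by
      rw [← hF _ fun i => ⌊x i⌋]
      congr 1
      funext i
      simp only [Pi.add_apply]
      linarith [Int.fract_add_floor (x i)]
    have h := hball (y - x) (by rwa [mem_ball_zero_iff, ← mem_ball_iff_norm])
      (fun i => Int.fract (x i)) fun i _ => ⟨Int.fract_nonneg _, (Int.fract_lt_one _).le⟩
    have h0 := hz 0
    rw [add_zero, add_zero] at h0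
    rw [hz, h0, add_sub_cancel] at h
    exact h.le
  let φ : ContDiffBump (0 : κ → ℝ) := ⟨r / 2, r, half_pos hr, half_lt_self hr⟩
  refine ⟨convolution (φ.normed volume) F (ContinuousLinearMap.lsmul ℝ ℝ) volume, ?_, ?_, ?_⟩
  · exact φ.hasCompactSupport_normed.contDiff_convolution_left (n := 1) _ φ.contDiff_normed
      hc.locallyIntegrable
  · intro x z
    simp only [convolution_def]
    congr 1
    funext t
    rw [add_sub_right_comm, hF]
  · intro x
    rw [← dist_eq_norm]
    exact φ.dist_normed_convolution_le hc.aestronglyMeasurable (hunif x)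

theorem IntPeriodic.exists_contDiff_equivariant_norm_sub_le {G : Type*} [Group G] [Finite G]
    (σ : G →* ((κ → ℝ) →L[ℝ] (κ → ℝ))) (hσ : ∀ g y, ‖σ g y‖ ≤ ‖y‖)
    (hσZ : ∀ g (z : κ → ℤ), ∃ w : κ → ℤ, σ g (fun i => (z i : ℝ)) = fun i => (w i : ℝ))
    {F : (κ → ℝ) → (κ → ℝ)} (hF : IntPeriodic F) (hc : Continuous F)
    (hFσ : ∀ g y, F (σ g y) = σ g (F y)) {ε : ℝ} (hε : 0 < ε) :
    ∃ H : (κ → ℝ) → (κ → ℝ), ContDiff ℝ 1 H ∧ IntPeriodic H ∧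
      (∀ g y, H (σ g y) = σ g (H y)) ∧ ∀ x, ‖H x - F x‖ ≤ ε := by
  have := Fintype.ofFinite G
  obtain ⟨H, hH, hHper, hHF⟩ := hF.exists_contDiff_norm_sub_le hc hε
  have hcard : (Fintype.card G : ℝ) ≠ 0 := Nat.cast_ne_zero.2 Fintype.card_ne_zero
  refine ⟨fun y => (Fintype.card G : ℝ)⁻¹ • ∑ g, σ g⁻¹ (H (σ g y)), ?_, ?_, ?_, ?_⟩
  · have h : ContDiff ℝ 1 fun y => ∑ g, σ g⁻¹ (H (σ g y)) :=
      ContDiff.sum fun g _ => (σ g⁻¹).contDiff.comp (hH.comp (σ g).contDiff)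
    exact contDiff_const.smul (𝕜 := ℝ) (𝕜' := ℝ) h
  · intro y z
    beta_reduce
    congr 2
    funext g
    obtain ⟨w, hw⟩ := hσZ g z
    rw [map_add, hw, hHper]
  · intro h y
    rw [map_smul, map_sum]
    refine congrArg _ (Fintype.sum_equiv (Equiv.mulRight h) _ _ fun g => ?_)
    rw [Equiv.coe_mulRight, mul_inv_rev, ← mul_apply_eq_comp, ← map_mul, ← mul_apply_eq_comp,
      ← map_mul, mul_inv_cancel_left]
  · intro y
    have h : (Fintype.card G : ℝ)⁻¹ • ∑ g, σ g⁻¹ (H (σ g y)) - F y =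
        (Fintype.card G : ℝ)⁻¹ • ∑ g, σ g⁻¹ (H (σ g y) - F (σ g y)) := by
      have hg : ∀ g, σ g⁻¹ (F (σ g y)) = F y := fun g => by
        rw [← hFσ, ← mul_apply_eq_comp, ← map_mul, inv_mul_cancel, map_one, one_apply_eq_self]
      simp only [map_sub, hg, Finset.sum_sub_distrib, smul_sub]
      rw [Finset.sum_const, Finset.card_univ, ← Nat.cast_smul_eq_nsmul ℝ, inv_smul_smul₀ hcard]
    rw [h, norm_smul, norm_inv, Real.norm_natCast, inv_mul_le_iff₀ (by positivity)]
    refine (norm_sum_le _ _).trans ?_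
    refine (Finset.sum_le_card_nsmul _ _ ε fun g _ => (hσ _ _).trans (hHF _)).trans ?_
    simp

end Smoothing

section CyclicShift

variable (p : ℕ) [Fact p.Prime] (ι : Type*)

/-- Extension of a family indexed by the nonzero elements of `ZMod p` by zero. -/
noncomputable def extendZero :
    ({k : ZMod p // k ≠ 0} × ι → ℝ) →L[ℝ] (ZMod p × ι → ℝ) :=
  ContinuousLinearMap.pi fun q =>
    if h : q.1 ≠ 0 then ContinuousLinearMap.proj (⟨q.1, h⟩, q.2) else 0

/-- Differences of the entries of a family indexed by `ZMod p` with its entry at zero. -/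
noncomputable def subZeroEntry :
    (ZMod p × ι → ℝ) →L[ℝ] ({k : ZMod p // k ≠ 0} × ι → ℝ) :=
  ContinuousLinearMap.pi fun q =>
    (ContinuousLinearMap.proj (R := ℝ) (φ := fun _ : ZMod p × ι => ℝ) (q.1.1, q.2) -
      ContinuousLinearMap.proj (0, q.2))

/-- The constant family given by the mean of a family indexed by `ZMod p`. -/
noncomputable def cyclicMean : (ZMod p × ι → ℝ) →L[ℝ] (ZMod p × ι → ℝ) :=
  ContinuousLinearMap.pi fun q => (p : ℝ)⁻¹ • ∑ k, ContinuousLinearMap.proj (k, q.2)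

/-- The action of `ZMod p` by shifting the index. -/
noncomputable def cyclicShift :
    Multiplicative (ZMod p) →* ((ZMod p × ι → ℝ) →L[ℝ] (ZMod p × ι → ℝ)) where
  toFun g := ContinuousLinearMap.pi fun q => ContinuousLinearMap.proj (q.1 + g.toAdd, q.2)
  map_one' := by
    ext y q
    simp
  map_mul' g h := by
    ext y q
    simp [add_assoc]

variable {p ι}

theorem extendZero_apply (x : {k : ZMod p // k ≠ 0} × ι → ℝ) (q : ZMod p × ι) :
    extendZero p ι x q = if h : q.1 ≠ 0 then x (⟨q.1, h⟩, q.2) else 0 := by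
  by_cases h : q.1 = 0 <;> simp [extendZero, h]

theorem subZeroEntry_apply (y : ZMod p × ι → ℝ) (q : {k : ZMod p // k ≠ 0} × ι) :
    subZeroEntry p ι y q = y (q.1, q.2) - y (0, q.2) := rfl

theorem cyclicMean_apply (y : ZMod p × ι → ℝ) (q : ZMod p × ι) :
    cyclicMean p ι y q = (p : ℝ)⁻¹ * ∑ k, y (k, q.2) := by
  simp [cyclicMean]

theorem cyclicShift_apply (g : Multiplicative (ZMod p)) (y : ZMod p × ι → ℝ) (q : ZMod p × ι) :
    cyclicShift p ι g y q = y (q.1 + g.toAdd, q.2) := rfl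

theorem subZeroEntry_extendZero (x : {k : ZMod p // k ≠ 0} × ι → ℝ) :
    subZeroEntry p ι (extendZero p ι x) = x := by
  funext q
  rw [subZeroEntry_apply, extendZero_apply, extendZero_apply, dif_pos q.1.2]
  simp

theorem subZeroEntry_eq_zero_iff {y : ZMod p × ι → ℝ} :
    subZeroEntry p ι y = 0 ↔ ∀ k i, y (k, i) = y (0, i) := by
  rw [funext_iff]
  simp only [subZeroEntry_apply, Pi.zero_apply, sub_eq_zero]
  refine ⟨fun h k i => ?_, fun h q => h _ _⟩
  by_cases hk : k = 0
  · rw [hk]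
  · exact h (⟨k, hk⟩, i)

theorem subZeroEntry_cyclicShift_congr {y z : ZMod p × ι → ℝ}
    (h : subZeroEntry p ι y = subZeroEntry p ι z) (g : Multiplicative (ZMod p)) :
    subZeroEntry p ι (cyclicShift p ι g y) = subZeroEntry p ι (cyclicShift p ι g z) := by
  rw [← sub_eq_zero, ← map_sub, subZeroEntry_eq_zero_iff] at h
  rw [← sub_eq_zero, ← map_sub, ← map_sub, subZeroEntry_eq_zero_iff]
  intro k i
  rw [cyclicShift_apply, cyclicShift_apply, h, h (0 + _)]

theorem sub_cyclicMean_congr {y z : ZMod p × ι → ℝ}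
    (h : subZeroEntry p ι y = subZeroEntry p ι z) :
    y - cyclicMean p ι y = z - cyclicMean p ι z := by
  rw [← sub_eq_zero, ← map_sub, subZeroEntry_eq_zero_iff] at h
  rw [← sub_eq_zero, sub_sub_sub_comm, ← map_sub, sub_eq_zero]
  funext q
  have hp : (p : ℝ) ≠ 0 := Nat.cast_ne_zero.2 (Fact.out : p.Prime).ne_zero
  rw [cyclicMean_apply, Finset.sum_congr rfl fun k _ => h k q.2, h q.1, Finset.sum_const,
    Finset.card_univ, ZMod.card, nsmul_eq_mul, inv_mul_cancel_left₀ hp]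

theorem subZeroEntry_cyclicMean (y : ZMod p × ι → ℝ) :
    subZeroEntry p ι (cyclicMean p ι y) = 0 := by
  rw [subZeroEntry_eq_zero_iff]
  intro k i
  rw [cyclicMean_apply, cyclicMean_apply]

theorem cyclicMean_cyclicShift (g : Multiplicative (ZMod p)) (y : ZMod p × ι → ℝ) :
    cyclicMean p ι (cyclicShift p ι g y) = cyclicShift p ι g (cyclicMean p ι y) := by
  funext q
  rw [cyclicShift_apply, cyclicMean_apply, cyclicMean_apply]
  refine congrArg _ (Fintype.sum_equiv (Equiv.addRight g.toAdd) _ _ fun k => ?_)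
  rw [cyclicShift_apply, Equiv.coe_addRight]

variable (p ι) in
/-- The action of `ZMod p` on families indexed by the nonzero elements of `ZMod p` that is induced
by the shift of the index. -/
noncomputable def relShift : Multiplicative (ZMod p) →*
    (({k : ZMod p // k ≠ 0} × ι → ℝ) →L[ℝ] ({k : ZMod p // k ≠ 0} × ι → ℝ)) where
  toFun g := subZeroEntry p ι ∘L cyclicShift p ι g ∘L extendZero p ι
  map_one' := by
    refine ContinuousLinearMap.ext fun x => ?_
    simp [subZeroEntry_extendZero]
  map_mul' g h := by
    refine ContinuousLinearMap.ext fun x => ?_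
    change subZeroEntry p ι (cyclicShift p ι (g * h) (extendZero p ι x)) =
      subZeroEntry p ι (cyclicShift p ι g (extendZero p ι
        (subZeroEntry p ι (cyclicShift p ι h (extendZero p ι x)))))
    rw [map_mul, mul_apply_eq_comp]
    exact subZeroEntry_cyclicShift_congr (subZeroEntry_extendZero _).symm g

theorem relShift_apply (g : Multiplicative (ZMod p)) (x : {k : ZMod p // k ≠ 0} × ι → ℝ) :
    relShift p ι g x = subZeroEntry p ι (cyclicShift p ι g (extendZero p ι x)) := rfl

theorem relShift_subZeroEntry (g : Multiplicative (ZMod p)) (y : ZMod p × ι → ℝ) :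
    relShift p ι g (subZeroEntry p ι y) = subZeroEntry p ι (cyclicShift p ι g y) :=
  subZeroEntry_cyclicShift_congr (subZeroEntry_extendZero _) g

theorem eq_apply_zero_of_forall_eq_add {α : Type*} {x : ZMod p → α} {j : ZMod p} (hj : j ≠ 0)
    (h : ∀ k, x k = x (k + j)) (k : ZMod p) : x k = x 0 := by
  have hmul : ∀ n : ℕ, x (n * j) = x 0 := by
    intro n
    induction n with
    | zero => simp
    | succ n ih => rw [Nat.cast_succ, add_mul, one_mul, ← h, ih]
  have hk := hmul (k / j).val
  rwa [ZMod.natCast_val, ZMod.cast_id, div_mul_cancel₀ _ hj] at hk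

theorem eq_one_of_relShift_eq {x : {k : ZMod p // k ≠ 0} × ι → ℝ} (hx : x ≠ 0)
    {g : Multiplicative (ZMod p)} (h : relShift p ι g x = x) : g = 1 := by
  by_contra hg
  refine hx ?_
  set y := extendZero p ι x with hy
  have hp : (p : ℝ) ≠ 0 := Nat.cast_ne_zero.2 (Fact.out : p.Prime).ne_zero
  have h1 : subZeroEntry p ι (cyclicShift p ι g y - y) = 0 := by
    rw [map_sub, ← relShift_apply, h, hy, subZeroEntry_extendZero, sub_self]
  rw [subZeroEntry_eq_zero_iff] at h1
  have hstep : ∀ k i, y (k + g.toAdd, i) = y (k, i) := by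
    intro k i
    have hsum : ∑ l, (cyclicShift p ι g y - y) (l, i) = 0 := by
      simp only [Pi.sub_apply, Finset.sum_sub_distrib, cyclicShift_apply]
      rw [sub_eq_zero]
      exact Fintype.sum_equiv (Equiv.addRight g.toAdd) _ _ fun l => rfl
    rw [Finset.sum_congr rfl fun l _ => h1 l i] at hsum
    simp only [Finset.sum_const, Finset.card_univ, ZMod.card, nsmul_eq_mul, mul_eq_zero, hp,
      false_or] at hsum
    have h2 := (h1 k i).trans hsum
    rwa [Pi.sub_apply, sub_eq_zero, cyclicShift_apply] at h2
  rw [← subZeroEntry_extendZero x, ← hy, subZeroEntry_eq_zero_iff]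
  intro k i
  exact eq_apply_zero_of_forall_eq_add (x := fun k => y (k, i)) (j := g.toAdd) hg
    (fun k => (hstep k i).symm) k

variable [Fintype ι]

theorem norm_extendZero_le (x : {k : ZMod p // k ≠ 0} × ι → ℝ) : ‖extendZero p ι x‖ ≤ ‖x‖ := by
  rw [pi_norm_le_iff_of_nonneg (norm_nonneg _)]
  intro q
  rw [extendZero_apply]
  split_ifs
  · exact norm_le_pi_norm x _
  · simp

theorem norm_subZeroEntry_le (y : ZMod p × ι → ℝ) : ‖subZeroEntry p ι y‖ ≤ 2 * ‖y‖ := by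
  rw [pi_norm_le_iff_of_nonneg (by positivity)]
  intro q
  rw [subZeroEntry_apply, two_mul]
  exact (norm_sub_le _ _).trans (add_le_add (norm_le_pi_norm y _) (norm_le_pi_norm y _))

theorem norm_cyclicShift_le (g : Multiplicative (ZMod p)) (y : ZMod p × ι → ℝ) :
    ‖cyclicShift p ι g y‖ ≤ ‖y‖ := by
  rw [pi_norm_le_iff_of_nonneg (norm_nonneg _)]
  exact fun q => norm_le_pi_norm y _

theorem norm_cyclicMean_le (y : ZMod p × ι → ℝ) : ‖cyclicMean p ι y‖ ≤ ‖y‖ := by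
  rw [pi_norm_le_iff_of_nonneg (norm_nonneg _)]
  intro q
  have hp : (0 : ℝ) < p := Nat.cast_pos.2 (Fact.out : p.Prime).pos
  rw [cyclicMean_apply, norm_mul, norm_inv, Real.norm_natCast, inv_mul_le_iff₀ hp]
  refine (norm_sum_le _ _).trans
    ((Finset.sum_le_card_nsmul _ _ ‖y‖ fun k _ => norm_le_pi_norm y _).trans ?_)
  simp [ZMod.card]

theorem norm_relShift_le (g : Multiplicative (ZMod p)) (x : {k : ZMod p // k ≠ 0} × ι → ℝ) :
    ‖relShift p ι g x‖ ≤ 2 * ‖x‖ := by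
  rw [relShift_apply]
  refine (norm_subZeroEntry_le _).trans (mul_le_mul_of_nonneg_left ?_ zero_le_two)
  exact (norm_cyclicShift_le _ _).trans (norm_extendZero_le x)

/-- A continuous integer-periodic map `F` that commutes with the cyclic shift has a value `F y`
that is constant along `ZMod p` at some nontrivial `y`: either `y` is small and not constant along
`ZMod p`, or `y` is nonzero, has vanishing entries at zero, and lies in the centred unit cube. -/
theorem exists_of_intPeriodic_of_cyclicShift [Nonempty ι] {F : (ZMod p × ι → ℝ) → (ZMod p × ι → ℝ)}
    (hF : Continuous F) (hFper : IntPeriodic F)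
    (hFσ : ∀ g y, F (cyclicShift p ι g y) = cyclicShift p ι g (F y)) {δ : ℝ} (hδ : 0 < δ) :
    (∃ y, ‖y‖ ≤ δ ∧ subZeroEntry p ι (F y) = 0 ∧ subZeroEntry p ι y ≠ 0) ∨
      ∃ x, ‖x‖ ≤ 1 / 2 ∧ x ≠ 0 ∧ subZeroEntry p ι (F (extendZero p ι x)) = 0 := by
  by_contra! ⟨hB, hA⟩
  set J := extendZero p ι with hJ
  set R := subZeroEntry p ι with hR
  set N := cyclicMean p ι with hN
  have hne : Nonempty ({k : ZMod p // k ≠ 0} × ι) :=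
    ⟨(⟨1, one_ne_zero⟩, Classical.arbitrary ι)⟩
  obtain ⟨b, hb, hb1, hb2⟩ : ∃ b > 0, b ≤ 1 / 4 ∧ 2 * b ≤ δ :=
    ⟨min (1 / 4) (δ / 2), lt_min (by norm_num) (by positivity), min_le_left _ _, by
      linarith [min_le_right (1 / 4) (δ / 2)]⟩
  let s : ContDiffBump (0 : {k : ZMod p // k ≠ 0} × ι → ℝ) :=
    ⟨b / 2, b, half_pos hb, half_lt_self hb⟩
  let Q : Set (({k : ZMod p // k ≠ 0} × ι → ℝ) × ℝ) :=
    (Metric.closedBall 0 (1 / 2) ×ˢ Icc 0 1) ∩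
      ({q | b / 2 / 4 ≤ ‖q.1‖} ∩ ({q | q.2 = 0} ∪ {q | ‖q.1‖ ≤ b}))
  have hQ : IsCompact Q := by
    refine ((isCompact_closedBall _ _).prod isCompact_Icc).inter_right ?_
    refine (isClosed_le continuous_const continuous_fst.norm).inter ?_
    exact (isClosed_eq continuous_snd continuous_const).union
      (isClosed_le continuous_fst.norm continuous_const)
  obtain ⟨η, hη, hηQ⟩ : ∃ η > 0, ∀ q ∈ Q, η ≤ ‖R (F (J q.1 - q.2 • N (J q.1)))‖ := by
    refine hQ.exists_forall_le' (a := 0) (Continuous.continuousOn (by fun_prop)) ?_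
    rintro ⟨x, t⟩ ⟨⟨hx, ht⟩, hx', htx⟩
    rw [mem_closedBall_zero_iff] at hx
    change b / 2 / 4 ≤ ‖x‖ at hx'
    have hx0 : x ≠ 0 := norm_pos_iff.1 ((by positivity : 0 < b / 2 / 4).trans_le hx')
    rw [norm_pos_iff]
    rcases htx with h | h
    · change t = 0 at h
      simpa [h] using hA x hx hx0
    · change ‖x‖ ≤ b at h
      intro h0
      have hle : ‖J x - t • N (J x)‖ ≤ δ := by
        have h1 : ‖t • N (J x)‖ ≤ 1 * ‖x‖ := by
          rw [norm_smul, Real.norm_of_nonneg ht.1]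
          exact mul_le_mul ht.2 ((norm_cyclicMean_le _).trans (norm_extendZero_le x))
            (norm_nonneg _) zero_le_one
        linarith [norm_sub_le (J x) (t • N (J x)), norm_extendZero_le x]
      have h2 := hB _ hle h0
      rw [map_sub, map_smul, subZeroEntry_extendZero, subZeroEntry_cyclicMean, smul_zero,
        sub_zero] at h2
      exact hx0 h2
  obtain ⟨H, hH, hHper, hHσ, hHF⟩ := hFper.exists_contDiff_equivariant_norm_sub_le
    (cyclicShift p ι) norm_cyclicShift_le
    (fun g z => ⟨fun q => z (q.1 + g.toAdd, q.2), rfl⟩) hF hFσ (show 0 < η / 4 by positivity)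
  have hnz : ∀ q ∈ Q, R (H (J q.1 - q.2 • N (J q.1))) ≠ 0 := by
    intro q hq h0
    have h1 := hηQ q hq
    have h2 := norm_subZeroEntry_le
      (H (J q.1 - q.2 • N (J q.1)) - F (J q.1 - q.2 • N (J q.1)))
    rw [map_sub, ← hR, h0, zero_sub, norm_neg] at h2
    linarith [hHF (J q.1 - q.2 • N (J q.1))]
  obtain ⟨x, hx1, hx2, hx0⟩ := exists_zero_of_equivariant_of_intPeriodic
    (G := Multiplicative (ZMod p)) (a := b / 2)
    (by rw [Fintype.card_multiplicative, ZMod.card]; exact (Fact.out : p.Prime).one_lt)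
    (relShift p ι) norm_relShift_le (fun x hx g => eq_one_of_relShift_eq hx)
    (Θ := fun x => R (H (J x - N (J x)))) (P := fun x => R (H (J x)))
    (Ξ := fun x => R (H (J x - s x • N (J x))))
    (R.contDiff.comp (hH.comp (J.contDiff.sub (N.contDiff.comp J.contDiff))))
    (R.contDiff.comp (hH.comp J.contDiff))
    (R.contDiff.comp (hH.comp (J.contDiff.sub (s.contDiff.smul (N.contDiff.comp J.contDiff)))))
    (fun g x => by
      have h : J (relShift p ι g x) - N (J (relShift p ι g x)) =
          cyclicShift p ι g (J x - N (J x)) := by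
        rw [map_sub, ← cyclicMean_cyclicShift]
        exact sub_cyclicMean_congr (subZeroEntry_extendZero _)
      rw [h, hHσ, relShift_subZeroEntry])
    (fun x z => by
      have h : J (fun i => (z i : ℝ)) =
          fun q => ((if h : q.1 ≠ 0 then z (⟨q.1, h⟩, q.2) else 0 : ℤ) : ℝ) := by
        funext q
        rw [hJ, extendZero_apply]
        split_ifs <;> simp
      change R (H (J (x + _))) = R (H (J x))
      rw [map_add, h, hHper])
    (half_pos hb) (by linarith)
    (fun x hx => by
      beta_reduce
      rw [s.one_of_mem_closedBall (mem_closedBall_zero_iff.2 hx), one_smul])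
    (fun x hx => by
      beta_reduce
      rw [s.zero_of_le_dist (by rw [dist_zero_right]; exact hb1.trans hx), zero_smul, sub_zero])
  refine hnz (x, s x) ⟨⟨mem_closedBall_zero_iff.2 hx2, s.nonneg, s.le_one⟩, hx1, ?_⟩ hx0
  by_cases h : ‖x‖ ≤ b
  · exact Or.inr h
  · exact Or.inl (s.zero_of_le_dist (by rw [dist_zero_right]; exact (not_le.1 h).le))

end CyclicShift

section Metric

variable {E : Type*} [TopologicalSpace E] {ρ : E → E → ℝ}

theorem IsMetricEquivToStd.nonneg (h : IsMetricEquivToStd ρ) (x y : E) : 0 ≤ ρ x y := by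
  obtain ⟨hs, h0, ht, -⟩ := h
  linarith [ht x y x, hs x y, (h0 x x).2 rfl]

theorem IsMetricEquivToStd.eventually_lt (h : IsMetricEquivToStd ρ) (x : E) {ε : ℝ}
    (hε : 0 < ε) : ∀ᶠ y in 𝓝 x, ρ x y < ε := by
  have hx : ρ x x = 0 := (h.2.1 x x).2 rfl
  refine IsOpen.mem_nhds (s := {y | ρ x y < ε}) ?_ (by simpa [hx] using hε)
  refine (h.2.2.2 _).2 fun y hy => ⟨ε - ρ x y, sub_pos.2 hy, fun z hz => ?_⟩
  change ρ y z < ε - ρ x y at hz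
  change ρ x z < ε
  linarith [h.2.2.1 x y z]

theorem IsMetricEquivToStd.continuous_uncurry (h : IsMetricEquivToStd ρ) :
    Continuous fun q : E × E => ρ q.1 q.2 := by
  rw [continuous_iff_continuousAt]
  rintro ⟨x, y⟩
  rw [ContinuousAt, Metric.tendsto_nhds]
  intro ε hε
  filter_upwards [(continuous_fst.tendsto (x, y)).eventually (h.eventually_lt x (half_pos hε)),
    (continuous_snd.tendsto (x, y)).eventually (h.eventually_lt y (half_pos hε))] with q h1 h2
  have ht := h.2.2.1
  have hs := h.2.1
  rw [Real.dist_eq, abs_lt]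
  constructor
  · linarith [ht x q.1 y, ht q.1 q.2 y, h.1 q.2 y]
  · linarith [ht q.1 x q.2, ht x y q.2, h.1 q.1 x]

end Metric

section SphereQuotient

/-- The sum of `1 - cos (2 π xᵢ)`. -/
noncomputable def cosDefect {d : ℕ} (x : Fin d → ℝ) : ℝ :=
  ∑ i, (1 - Real.cos (2 * Real.pi * x i))

/-- A continuous integer-periodic map from `ℝᵈ` to `ℝᵈ⁺¹` without zeros. -/
noncomputable def torusVector {d : ℕ} (x : Fin d → ℝ) : EuclideanSpace ℝ (Fin (d + 1)) :=
  WithLp.toLp 2 (Fin.snoc (α := fun _ => ℝ) (fun i => Real.sin (2 * Real.pi * x i))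
    (1 - max 0 (cosDefect x - 1 / 2)))

variable {d : ℕ}

theorem torusVector_castSucc (x : Fin d → ℝ) (i : Fin d) :
    torusVector x i.castSucc = Real.sin (2 * Real.pi * x i) := by
  simp [torusVector]

theorem torusVector_last (x : Fin d → ℝ) :
    torusVector x (Fin.last d) = 1 - max 0 (cosDefect x - 1 / 2) := by
  simp [torusVector]

theorem continuous_cosDefect : Continuous (cosDefect (d := d)) := by
  unfold cosDefect
  fun_prop

theorem cosDefect_zero : cosDefect (0 : Fin d → ℝ) = 0 := by
  simp [cosDefect]

theorem continuous_torusVector : Continuous (torusVector (d := d)) := by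
  refine (PiLp.continuous_toLp 2 _).comp (continuous_pi fun i => ?_)
  refine Fin.lastCases ?_ (fun i => ?_) i
  · simp only [Fin.snoc_last]
    have := continuous_cosDefect (d := d)
    fun_prop
  · simp only [Fin.snoc_castSucc]
    fun_prop

theorem torusVector_add_intCast (x : Fin d → ℝ) (z : Fin d → ℤ) :
    torusVector (x + fun i => (z i : ℝ)) = torusVector x := by
  have h : ∀ i, 2 * Real.pi * (x + fun i => (z i : ℝ)) i =
      2 * Real.pi * x i + z i * (2 * Real.pi) := fun i => by
    rw [Pi.add_apply]
    ring
  simp only [torusVector, cosDefect, h, Real.sin_add_int_mul_two_pi, Real.cos_add_int_mul_two_pi]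

theorem cos_eq_one_of_sin_eq_zero_of_cosDefect_lt {x : Fin d → ℝ}
    (hs : ∀ i, Real.sin (2 * Real.pi * x i) = 0) (hc : cosDefect x < 2) (i : Fin d) :
    Real.cos (2 * Real.pi * x i) = 1 := by
  refine (Real.sin_eq_zero_iff_cos_eq.1 (hs i)).resolve_right fun h => ?_
  have h1 : 1 - Real.cos (2 * Real.pi * x i) ≤ cosDefect x :=
    Finset.single_le_sum (f := fun i => 1 - Real.cos (2 * Real.pi * x i))
      (fun i _ => sub_nonneg.2 (Real.cos_le_one _)) (Finset.mem_univ i)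
  linarith

theorem torusVector_ne_zero (x : Fin d → ℝ) : torusVector x ≠ 0 := by
  intro h
  have hs : ∀ i, Real.sin (2 * Real.pi * x i) = 0 := fun i => by
    rw [← torusVector_castSucc, h, PiLp.zero_apply]
  have hl := torusVector_last x
  rw [h, PiLp.zero_apply] at hl
  rcases lt_or_ge (cosDefect x) 2 with hc | hc
  · have h0 : cosDefect x = 0 := by
      simp [cosDefect, cos_eq_one_of_sin_eq_zero_of_cosDefect_lt hs hc]
    norm_num [h0] at hl
  · linarith [le_max_right 0 (cosDefect x - 1 / 2)]

/-- The normalization of `torusVector`. -/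
noncomputable def torusToSphere (x : Fin d → ℝ) :
    Metric.sphere (0 : EuclideanSpace ℝ (Fin (d + 1))) 1 :=
  ⟨‖torusVector x‖⁻¹ • torusVector x, by
    rw [mem_sphere_zero_iff_norm, norm_smul, norm_inv, norm_norm,
      inv_mul_cancel₀ (norm_ne_zero_iff.2 (torusVector_ne_zero x))]⟩

theorem continuous_torusToSphere : Continuous (torusToSphere (d := d)) :=
  Continuous.subtype_mk ((continuous_torusVector.norm.inv₀ fun x =>
    norm_ne_zero_iff.2 (torusVector_ne_zero x)).smul continuous_torusVector) _

theorem torusToSphere_add_intCast (x : Fin d → ℝ) (z : Fin d → ℤ) :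
    torusToSphere (x + fun i => (z i : ℝ)) = torusToSphere x :=
  Subtype.ext (by simp only [torusToSphere, torusVector_add_intCast])

theorem exists_torusVector_eq_smul {x y : Fin d → ℝ} (h : torusToSphere x = torusToSphere y) :
    ∃ r : ℝ, 0 < r ∧ torusVector x = r • torusVector y := by
  have hx := norm_pos_iff.2 (torusVector_ne_zero x)
  have hy := norm_pos_iff.2 (torusVector_ne_zero y)
  refine ⟨‖torusVector x‖ * ‖torusVector y‖⁻¹, by positivity, ?_⟩
  have h1 : ‖torusVector x‖⁻¹ • torusVector x = ‖torusVector y‖⁻¹ • torusVector y :=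
    congrArg Subtype.val h
  rw [mul_smul, ← h1, smul_inv_smul₀ hx.ne']

theorem eq_zero_of_torusToSphere_eq {x : Fin d → ℝ} (hx : ‖x‖ ≤ 1 / 2)
    (h : torusToSphere x = torusToSphere 0) : x = 0 := by
  obtain ⟨r, hr, hxr⟩ := exists_torusVector_eq_smul h
  have hs : ∀ i, Real.sin (2 * Real.pi * x i) = 0 := fun i => by
    rw [← torusVector_castSucc, hxr, PiLp.smul_apply, torusVector_castSucc]
    simp
  have hl := torusVector_last x
  rw [hxr, PiLp.smul_apply, torusVector_last, cosDefect_zero, smul_eq_mul] at hl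
  have hc : cosDefect x < 2 := by
    norm_num at hl
    linarith [le_max_right 0 (cosDefect x - 1 / 2)]
  funext i
  have hi := (norm_le_pi_norm x i).trans hx
  rw [Real.norm_eq_abs, abs_le] at hi
  have hpi := Real.pi_pos
  have h1 := (Real.cos_eq_one_iff_of_lt_of_lt (x := 2 * Real.pi * x i) (by nlinarith)
    (by nlinarith)).1 (cos_eq_one_of_sin_eq_zero_of_cosDefect_lt hs hc i)
  simpa [hpi.ne'] using h1

theorem exists_injOn_torusToSphere (d : ℕ) :
    ∃ δ > 0, InjOn (torusToSphere (d := d)) (Metric.closedBall 0 δ) := by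
  have hev : ∀ᶠ x in 𝓝 (0 : Fin d → ℝ), cosDefect x < 1 / 2 :=
    continuous_cosDefect.continuousAt.eventually (gt_mem_nhds (by
      rw [cosDefect_zero]
      norm_num))
  obtain ⟨r, hr, hball⟩ := Metric.nhds_basis_closedBall.eventually_iff.1 hev
  have hlast : ∀ x ∈ Metric.closedBall (0 : Fin d → ℝ) r, torusVector x (Fin.last d) = 1 :=
    fun x hx => by rw [torusVector_last, max_eq_left (by linarith [hball hx]), sub_zero]
  refine ⟨min r (1 / 8), lt_min hr (by norm_num), fun x hx y hy h => ?_⟩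
  have hxr := Metric.closedBall_subset_closedBall (min_le_left _ _) hx
  have hyr := Metric.closedBall_subset_closedBall (min_le_left _ _) hy
  have hbd : ∀ x ∈ Metric.closedBall (0 : Fin d → ℝ) (min r (1 / 8)), ∀ i,
      2 * Real.pi * x i ∈ Icc (-(Real.pi / 2)) (Real.pi / 2) := fun x hx i => by
    have hi := (norm_le_pi_norm x i).trans ((mem_closedBall_zero_iff.1 hx).trans (min_le_right _ _))
    rw [Real.norm_eq_abs, abs_le] at hi
    have hpi := Real.pi_pos
    constructor <;> nlinarith
  obtain ⟨c, -, hc⟩ := exists_torusVector_eq_smul h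
  have hc1 := hlast x hxr
  rw [hc, PiLp.smul_apply, hlast y hyr, smul_eq_mul, mul_one] at hc1
  rw [hc1, one_smul] at hc
  funext i
  have hsin : Real.sin (2 * Real.pi * x i) = Real.sin (2 * Real.pi * y i) := by
    rw [← torusVector_castSucc, hc, torusVector_castSucc]
  exact mul_left_cancel₀ (by positivity) (Real.injOn_sin (hbd x hx i) (hbd y hy i) hsin)

end SphereQuotient

section CyclicConfiguration

variable {p : ℕ} [Fact p.Prime]

theorem exists_natCast_eq_sub_or_eq_sub {a b : ZMod p} (hab : a ≠ b) (hodd : Odd p) :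
    ∃ j : ℕ, 1 ≤ j ∧ j ≤ (p - 1) / 2 ∧ (b = a + j ∨ a = b + j) := by
  have hlt := ZMod.val_lt (b - a)
  have hne : (b - a).val ≠ 0 := by
    rw [Ne, ZMod.val_eq_zero, sub_eq_zero]
    exact hab.symm
  obtain ⟨m, hm⟩ := hodd
  by_cases h : (b - a).val ≤ (p - 1) / 2
  · exact ⟨(b - a).val, by omega, h, Or.inl (by simp)⟩
  · refine ⟨p - (b - a).val, by omega, by omega, Or.inr ?_⟩
    rw [Nat.cast_sub hlt.le]
    simp

theorem natCast_ne_zero_of_le {j : ℕ} (h1 : 1 ≤ j) (hj : j ≤ (p - 1) / 2) : (j : ZMod p) ≠ 0 := by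
  rw [Ne, ZMod.natCast_eq_zero_iff]
  exact fun h => by have := Nat.le_of_dvd h1 h; omega

theorem exists_cyclic_configuration {d : ℕ} (hd : 1 ≤ d) (hodd : Odd p) (hpd : (p - 1) / 2 ≤ d)
    {X : Type*} [TopologicalSpace X]
    {f : Metric.sphere (0 : EuclideanSpace ℝ (Fin (d + 1))) 1 → X}
    (hf : Continuous f) (hfinj : Function.Injective f) {ρ : ℕ → X → X → ℝ}
    (hρ : ∀ j, 1 ≤ j → j ≤ (p - 1) / 2 → IsMetricEquivToStd (ρ j)) :
    ∃ x : ZMod p → Metric.sphere (0 : EuclideanSpace ℝ (Fin (d + 1))) 1,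
      Function.Injective x ∧ ∀ j : ℕ, 1 ≤ j → j ≤ (p - 1) / 2 →
        ∀ k : ZMod p, ρ j (f (x k)) (f (x (k + j))) = ρ j (f (x 0)) (f (x j)) := by
  have hm : 1 ≤ (p - 1) / 2 := by
    have := (Fact.out : p.Prime).two_le
    obtain ⟨m, hm⟩ := hodd
    omega
  have : Nonempty (Fin d) := ⟨⟨0, hd⟩⟩
  let τ : Fin d → ℕ := fun i => if (i : ℕ) + 1 ≤ (p - 1) / 2 then i + 1 else 1
  have hτ : ∀ i, 1 ≤ τ i ∧ τ i ≤ (p - 1) / 2 := fun i => by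
    dsimp only [τ]
    split_ifs <;> omega
  let F : (ZMod p × Fin d → ℝ) → (ZMod p × Fin d → ℝ) := fun y q =>
    ρ (τ q.2) (f (torusToSphere fun i => y (q.1, i)))
      (f (torusToSphere fun i => y (q.1 + τ q.2, i)))
  have hF : Continuous F := by
    refine continuous_pi fun q => ?_
    have hc : ∀ k : ZMod p, Continuous fun y : ZMod p × Fin d → ℝ =>
        f (torusToSphere fun i => y (k, i)) := fun k =>
      hf.comp (continuous_torusToSphere.comp (by fun_prop))
    exact (hρ _ (hτ q.2).1 (hτ q.2).2).continuous_uncurry.comp ((hc q.1).prodMk (hc _))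
  have hFper : IntPeriodic F := by
    intro y z
    have h : ∀ k, torusToSphere (fun i => (y + fun q => (z q : ℝ)) (k, i)) =
        torusToSphere fun i => y (k, i) := fun k =>
      torusToSphere_add_intCast (fun i => y (k, i)) fun i => z (k, i)
    funext q
    simp only [F, h]
  have hFσ : ∀ g y, F (cyclicShift p (Fin d) g y) = cyclicShift p (Fin d) g (F y) := by
    intro g y
    funext q
    simp only [F, cyclicShift_apply, add_right_comm]
  have hconf : ∀ y : ZMod p × Fin d → ℝ, subZeroEntry p (Fin d) (F y) = 0 →
      (¬ ∀ k, torusToSphere (fun i => y (k, i)) = torusToSphere fun i => y (0, i)) →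
      ∃ x : ZMod p → Metric.sphere (0 : EuclideanSpace ℝ (Fin (d + 1))) 1,
        Function.Injective x ∧ ∀ j : ℕ, 1 ≤ j → j ≤ (p - 1) / 2 →
          ∀ k : ZMod p, ρ j (f (x k)) (f (x (k + j))) = ρ j (f (x 0)) (f (x j)) := by
    intro y hy hne
    have hx : ∀ j : ℕ, 1 ≤ j → j ≤ (p - 1) / 2 → ∀ k l : ZMod p,
        ρ j (f (torusToSphere fun i => y (k, i))) (f (torusToSphere fun i => y (k + j, i))) =
          ρ j (f (torusToSphere fun i => y (l, i)))
            (f (torusToSphere fun i => y (l + j, i))) := by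
      intro j h1 hj k l
      obtain ⟨i, hi⟩ : ∃ i, τ i = j := by
        refine ⟨⟨j - 1, by omega⟩, ?_⟩
        dsimp only [τ]
        split_ifs <;> omega
      rw [← hi]
      exact (subZeroEntry_eq_zero_iff.1 hy k i).trans (subZeroEntry_eq_zero_iff.1 hy l i).symm
    refine ⟨fun k => torusToSphere fun i => y (k, i), fun a b hab => ?_, fun j h1 hj k => ?_⟩
    · by_contra hab'
      obtain ⟨j, h1, hj, l, hl⟩ : ∃ j : ℕ, 1 ≤ j ∧ j ≤ (p - 1) / 2 ∧ ∃ l : ZMod p,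
          torusToSphere (fun i => y (l, i)) = torusToSphere fun i => y (l + j, i) := by
        obtain ⟨j, h1, hj, h | h⟩ := exists_natCast_eq_sub_or_eq_sub hab' hodd
        · exact ⟨j, h1, hj, a, h ▸ hab⟩
        · exact ⟨j, h1, hj, b, h ▸ hab.symm⟩
      refine hne (eq_apply_zero_of_forall_eq_add (natCast_ne_zero_of_le h1 hj) fun k => ?_)
      have h0 := (hρ j h1 hj).2.1
      exact hfinj ((h0 _ _).1 ((hx j h1 hj k l).trans ((h0 _ _).2 (congrArg f hl))))
    · simpa using hx j h1 hj k 0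
  obtain ⟨δ, hδ, hinj⟩ := exists_injOn_torusToSphere d
  rcases exists_of_intPeriodic_of_cyclicShift hF hFper hFσ hδ with
    ⟨y, hyδ, hy, hy0⟩ | ⟨x, hx, hx0, hy⟩
  · refine hconf y hy fun h => hy0 (subZeroEntry_eq_zero_iff.2 fun k i => ?_)
    have hmem : ∀ k, (fun i => y (k, i)) ∈ Metric.closedBall (0 : Fin d → ℝ) δ := fun k => by
      rw [mem_closedBall_zero_iff, pi_norm_le_iff_of_nonneg hδ.le]
      exact fun i => (norm_le_pi_norm y _).trans hyδ
    exact congrFun (hinj (hmem k) (hmem 0) (h k)) i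
  · refine hconf _ hy fun h => hx0 (funext fun q => ?_)
    have h0 : (fun i => extendZero p (Fin d) x (0, i)) = 0 := funext fun i => by
      simp [extendZero_apply]
    have hk := h q.1
    rw [h0] at hk
    have hxk := congrFun (eq_zero_of_torusToSphere_eq ?_ hk) q.2
    · rwa [extendZero_apply, dif_pos q.1.2] at hxk
    · rw [pi_norm_le_iff_of_nonneg (by norm_num)]
      exact fun i => (norm_le_pi_norm _ _).trans ((norm_extendZero_le x).trans hx)

end CyclicConfiguration

end

/-- Corollary: if `p ≤ 2d + 1` and `d` is even, then the pair `(d, p)` is admissible. -/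
theorem admissible_pair_of_even
    (p d : ℕ) (hp : p.Prime) (hodd : Odd p) (hd : 1 ≤ d)
    (hpd : p ≤ 2 * d + 1) (hdeven : Even d)
    (f : Metric.sphere (0 : EuclideanSpace ℝ (Fin (d + 1))) 1 → EuclideanSpace ℝ (Fin (d + 1)))
    (hf : Continuous f) (hfinj : Function.Injective f)
    (ρ : ℕ → EuclideanSpace ℝ (Fin (d + 1)) → EuclideanSpace ℝ (Fin (d + 1)) → ℝ)
    (hρ : ∀ j, 1 ≤ j → j ≤ (p - 1) / 2 → IsMetricEquivToStd (ρ j)) :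
    ∃ x : ZMod p → Metric.sphere (0 : EuclideanSpace ℝ (Fin (d + 1))) 1,
      Function.Injective x ∧
      ∀ j : ℕ, 1 ≤ j → j ≤ (p - 1) / 2 →
        ∀ k : ZMod p,
          ρ j (f (x (k * (j : ZMod p)))) (f (x ((k + 1) * (j : ZMod p)))) =
            ρ j (f (x 0)) (f (x (j : ZMod p))) := by
  have : Fact p.Prime := ⟨hp⟩
  obtain ⟨x, hx, h⟩ := exists_cyclic_configuration hd hodd (by omega) hf hfinj hρ
  refine ⟨x, hx, fun j h1 hj k => ?_⟩
  rw [add_mul, one_mul]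
  exact h j h1 hj _
end

section
/- For every continuous injective map f : S² → ℝ³ there exist five distinct points y₀, y₁, y₂, y₃, y₄ in the image of f such that, with d the Euclidean metric of ℝ³, d(y₀,y₁) = d(y₁,y₂) = d(y₂,y₃) = d(y₃,y₄) = d(y₄,y₀) and d(y₀,y₂) = d(y₂,y₄) = d(y₄,y₁) = d(y₁,y₃) = d(y₃,y₀). -/
/-! ### Simplicial cochains on lists -/

namespace Pentagon

variable {X Y Z : Type*}

/-- A cochain assigns a value mod 5 to every list of vertices. -/
abbrev Cochain (X : Type*) := List X → ZMod 5

def cobdAux : List X → Cochain X → ZMod 5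
  | [], _ => 0
  | x :: l, α => α l - cobdAux l (fun t => α (x :: t))

def prismAux (f₀ f₁ : X → Y) : List X → Cochain Y → ZMod 5
  | [], _ => 0
  | x :: l, α => α (f₀ x :: f₁ x :: l.map f₁) - prismAux f₀ f₁ l (fun t => α (f₀ x :: t))

theorem cobdAux_add (l : List X) (α β : Cochain X) :
    cobdAux l (α + β) = cobdAux l α + cobdAux l β := by
  induction l generalizing α β with
  | nil => simp [cobdAux]
  | cons x l ih =>
    have := ih (fun t => α (x :: t)) (fun t => β (x :: t))
    simp only [cobdAux, Pi.add_apply] at *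
    rw [show (fun t => α (x :: t) + β (x :: t)) =
      (fun t => α (x :: t)) + (fun t => β (x :: t)) from rfl, this]
    ring

theorem cobdAux_smul (l : List X) (c : ZMod 5) (α : Cochain X) :
    cobdAux l (c • α) = c * cobdAux l α := by
  induction l generalizing α with
  | nil => simp [cobdAux]
  | cons x l ih =>
    have := ih (fun t => α (x :: t))
    simp only [cobdAux, Pi.smul_apply, smul_eq_mul] at *
    rw [show (fun t => c * α (x :: t)) = c • (fun t => α (x :: t)) from rfl, this]
    ring

theorem prismAux_add (f₀ f₁ : X → Y) (l : List X) (α β : Cochain Y) :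
    prismAux f₀ f₁ l (α + β) = prismAux f₀ f₁ l α + prismAux f₀ f₁ l β := by
  induction l generalizing α β with
  | nil => simp [prismAux]
  | cons x l ih =>
    have := ih (fun t => α (f₀ x :: t)) (fun t => β (f₀ x :: t))
    simp only [prismAux, Pi.add_apply] at *
    rw [show (fun t => α (f₀ x :: t) + β (f₀ x :: t)) =
      (fun t => α (f₀ x :: t)) + (fun t => β (f₀ x :: t)) from rfl, this]
    ring

theorem prismAux_smul (f₀ f₁ : X → Y) (l : List X) (c : ZMod 5) (α : Cochain Y) :
    prismAux f₀ f₁ l (c • α) = c * prismAux f₀ f₁ l α := by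
  induction l generalizing α with
  | nil => simp [prismAux]
  | cons x l ih =>
    have := ih (fun t => α (f₀ x :: t))
    simp only [prismAux, Pi.smul_apply, smul_eq_mul] at *
    rw [show (fun t => c * α (f₀ x :: t)) = c • (fun t => α (f₀ x :: t)) from rfl, this]
    ring

/-- The simplicial coboundary. -/
def cobd : Cochain X →ₗ[ZMod 5] Cochain X where
  toFun α l := cobdAux l α
  map_add' α β := funext fun l => cobdAux_add l α β
  map_smul' c α := funext fun l => cobdAux_smul l c α

/-- The prism operator of a pair of maps. -/
def prism (f₀ f₁ : X → Y) : Cochain Y →ₗ[ZMod 5] Cochain X where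
  toFun α l := prismAux f₀ f₁ l α
  map_add' α β := funext fun l => prismAux_add f₀ f₁ l α β
  map_smul' c α := funext fun l => prismAux_smul f₀ f₁ l c α

/-- Pullback of cochains. -/
def pull (f : X → Y) : Cochain Y →ₗ[ZMod 5] Cochain X :=
  LinearMap.funLeft (ZMod 5) (ZMod 5) (List.map f)

@[simp] theorem pull_apply (f : X → Y) (α : Cochain Y) (l : List X) :
    pull f α l = α (l.map f) := rfl

@[simp] theorem cobd_nil (α : Cochain X) : cobd α [] = 0 := rfl

theorem cobd_cons (α : Cochain X) (x : X) (l : List X) :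
    cobd α (x :: l) = α l - cobd (fun t => α (x :: t)) l := rfl

@[simp] theorem prism_nil (f₀ f₁ : X → Y) (α : Cochain Y) : prism f₀ f₁ α [] = 0 := rfl

theorem prism_cons (f₀ f₁ : X → Y) (α : Cochain Y) (x : X) (l : List X) :
    prism f₀ f₁ α (x :: l) =
      α (f₀ x :: f₁ x :: l.map f₁) - prism f₀ f₁ (fun t => α (f₀ x :: t)) l := rfl

theorem cobd_cobd_apply (α : Cochain X) (l : List X) : cobd (cobd α) l = 0 := by
  induction l generalizing α with
  | nil => rfl
  | cons x l ih =>
    have h : (fun t => cobd α (x :: t)) = α - cobd (fun t => α (x :: t)) := by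
      funext t; simp [cobd_cons]
    rw [cobd_cons, h, map_sub, Pi.sub_apply, ih]
    ring

theorem cobd_pull (f : X → Y) (α : Cochain Y) : cobd (pull f α) = pull f (cobd α) := by
  funext l
  induction l generalizing α with
  | nil => rfl
  | cons x l ih =>
    have := ih (fun t => α (f x :: t))
    rw [pull_apply, List.map_cons, cobd_cons, cobd_cons, ← pull_apply f (cobd _), ← this]
    rfl

theorem pull_pull (f : X → Y) (g : Y → Z) (α : Cochain Z) :
    pull f (pull g α) = pull (g ∘ f) α := by
  funext l; simp

theorem prism_homotopy (f₀ f₁ : X → Y) (α : Cochain Y) :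
    cobd (prism f₀ f₁ α) + prism f₀ f₁ (cobd α) = pull f₁ α - pull f₀ α := by
  funext l
  induction l generalizing α with
  | nil => simp
  | cons x l ih =>
    have h1 : (fun t => prism f₀ f₁ α (x :: t)) =
        pull f₁ (fun t => α (f₀ x :: f₁ x :: t)) - prism f₀ f₁ (fun t => α (f₀ x :: t)) := by
      funext t; simp [prism_cons]
    have h2 : (fun t => cobd α (f₀ x :: t)) = α - cobd (fun t => α (f₀ x :: t)) := by
      funext t; simp [cobd_cons]
    have h3 := ih (fun t => α (f₀ x :: t))
    simp only [Pi.add_apply, Pi.sub_apply, pull_apply] at h3 ⊢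
    rw [cobd_cons, prism_cons, h1, h2, cobd_cons, cobd_cons, map_sub, map_sub, cobd_pull]
    simp only [Pi.sub_apply, pull_apply, List.map_cons]
    linear_combination h3

theorem cobd_eq_zero {α : Cochain X} {l : List X}
    (h : ∀ l₁ x l₂, l = l₁ ++ x :: l₂ → α (l₁ ++ l₂) = 0) : cobd α l = 0 := by
  induction l generalizing α with
  | nil => rfl
  | cons x l ih =>
    have h0 : α l = 0 := h [] x l rfl
    rw [cobd_cons, h0, ih, sub_zero]
    intro l₁ y l₂ e
    exact h (x :: l₁) y l₂ (by rw [e]; rfl)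

theorem prism_eq_zero {f₀ f₁ : X → Y} {α : Cochain Y} {l : List X}
    (h : ∀ l₁ x l₂, l = l₁ ++ x :: l₂ →
      α (l₁.map f₀ ++ f₀ x :: f₁ x :: l₂.map f₁) = 0) : prism f₀ f₁ α l = 0 := by
  induction l generalizing α with
  | nil => rfl
  | cons x l ih =>
    have h0 := h [] x l rfl
    simp only [List.map_nil, List.nil_append] at h0
    rw [prism_cons, h0, ih, sub_zero]
    intro l₁ y l₂ e
    exact h (x :: l₁) y l₂ (by rw [e]; rfl)

/-- Cochains vanishing on degenerate simplices. -/
def Normalized (α : Cochain X) : Prop :=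
  α [] = 0 ∧ ∀ l₁ x l₂, α (l₁ ++ x :: x :: l₂) = 0

def Antisymm (α : Cochain X) : Prop :=
  ∀ l₁ x y l₂, α (l₁ ++ x :: y :: l₂) = - α (l₁ ++ y :: x :: l₂)

theorem Antisymm.normalized {α : Cochain X} (h : Antisymm α) (h0 : α [] = 0) :
    Normalized α := by
  refine ⟨h0, fun l₁ x l₂ => ?_⟩
  have := h l₁ x x l₂
  generalize α (l₁ ++ x :: x :: l₂) = z at this
  revert z
  decide

theorem Antisymm.cons {α : Cochain X} (h : Antisymm α) (x : X) :
    Antisymm (fun t => α (x :: t)) :=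
  fun l₁ y z l₂ => h (x :: l₁) y z l₂

theorem Antisymm.cobd {α : Cochain X} (h : Antisymm α) : Antisymm (cobd α) := by
  intro l₁
  induction l₁ generalizing α with
  | nil =>
    intro x y l
    have h1 : (fun t => α (x :: y :: t)) = - (fun t => α (y :: x :: t)) :=
      funext fun t => h [] x y t
    simp only [List.nil_append, cobd_cons, h1, map_neg, Pi.neg_apply]
    ring
  | cons z l₁ ih =>
    intro x y l₂
    have h1 := h l₁ x y l₂
    have h2 := ih (h.cons z) x y l₂
    simp only [List.cons_append, cobd_cons]
    rw [h1, h2]; ring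

theorem Antisymm.eq_zero_of_dup {α : Cochain X} (h : Antisymm α) (h0 : α [] = 0)
    {l : List X} (hl : ¬ l.Nodup) : α l = 0 := by
  have key : ∀ (l₂ l₁ l₃ : List X) (x : X), α (l₁ ++ x :: (l₂ ++ x :: l₃)) = 0 := by
    intro l₂
    induction l₂ with
    | nil => intro l₁ l₃ x; exact (h.normalized h0).2 l₁ x l₃
    | cons y l₂ ih =>
      intro l₁ l₃ x
      rw [List.cons_append, h]
      have := ih (l₁ ++ [y]) l₃ x
      simp only [List.append_assoc, List.cons_append, List.nil_append] at this
      rw [this, neg_zero]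
  rw [← List.exists_duplicate_iff_not_nodup] at hl
  obtain ⟨x, hx⟩ := hl
  rw [List.duplicate_iff_sublist] at hx
  obtain ⟨l₁, l', e, h1, h2⟩ : ∃ l₁ l', l = l₁ ++ l' ∧ x ∈ l₁ ∧ x ∈ l' := by
    obtain ⟨l₁, l', e, h1, h2⟩ := List.cons_sublist_iff.1 hx
    exact ⟨l₁, l', e, h1, List.singleton_sublist.1 h2⟩
  obtain ⟨a, b, rfl⟩ := List.append_of_mem h1
  obtain ⟨c, d, rfl⟩ := List.append_of_mem h2
  have := key (b ++ c) a d x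
  simpa [e] using this

theorem Normalized.pull {α : Cochain Y} (h : Normalized α) (f : X → Y) :
    Normalized (pull f α) :=
  ⟨h.1, fun l₁ x l₂ => by simpa using h.2 (l₁.map f) (f x) (l₂.map f)⟩

/-- Some pair of consecutive entries of the list is related by `R`. -/
def Adjacent (R : X → X → Prop) (l : List X) : Prop :=
  ∃ l₁ x y l₂, l = l₁ ++ x :: y :: l₂ ∧ R x y

theorem Adjacent.map {R : X → X → Prop} {S : Y → Y → Prop} {f : X → Y} {l : List X}
    (h : Adjacent R l) (hf : ∀ x ∈ l, ∀ y ∈ l, R x y → S (f x) (f y)) :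
    Adjacent S (l.map f) := by
  obtain ⟨l₁, x, y, l₂, rfl, hxy⟩ := h
  exact ⟨l₁.map f, f x, f y, l₂.map f, by simp, hf x (by simp) y (by simp) hxy⟩

theorem Adjacent.prism {R : X → X → Prop} {S : Y → Y → Prop} {f₀ f₁ : X → Y}
    (h₀ : ∀ x y, R x y → S (f₀ x) (f₀ y)) (h₁ : ∀ x y, R x y → S (f₁ x) (f₁ y))
    {a b : List X} {z : X} (h : Adjacent R (a ++ z :: b)) :
    Adjacent S (a.map f₀ ++ f₀ z :: f₁ z :: b.map f₁) := by
  obtain ⟨l₁, x, y, l₂, e, hxy⟩ := h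
  rw [eq_comm, List.append_eq_append_iff] at e
  rcases e with ⟨c, rfl, e⟩ | ⟨c, rfl, e⟩
  · rcases c with _ | ⟨c, t⟩
    · simp only [List.nil_append, List.cons.injEq] at e
      obtain ⟨rfl, rfl⟩ := e
      exact ⟨l₁.map f₀ ++ [f₀ x], f₁ x, f₁ y, l₂.map f₁, by simp, h₁ _ _ hxy⟩
    · simp only [List.cons_append, List.cons.injEq] at e
      obtain ⟨rfl, e⟩ := e
      rcases t with _ | ⟨t, s⟩
      · simp only [List.nil_append, List.cons.injEq] at e
        obtain ⟨rfl, rfl⟩ := e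
        exact ⟨l₁.map f₀, f₀ x, f₀ y, f₁ y :: l₂.map f₁, by simp, h₀ _ _ hxy⟩
      · simp only [List.cons_append, List.cons.injEq] at e
        obtain ⟨rfl, rfl⟩ := e
        exact ⟨l₁.map f₀, f₀ x, f₀ y, s.map f₀ ++ f₀ z :: f₁ z :: b.map f₁, by simp,
          h₀ _ _ hxy⟩
  · rcases c with _ | ⟨c, t⟩
    · simp only [List.nil_append, List.cons.injEq] at e
      obtain ⟨rfl, rfl⟩ := e
      exact ⟨a.map f₀ ++ [f₀ z], f₁ z, f₁ y, l₂.map f₁, by simp, h₁ _ _ hxy⟩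
    · simp only [List.cons_append, List.cons.injEq] at e
      obtain ⟨rfl, rfl⟩ := e
      exact ⟨a.map f₀ ++ f₀ z :: f₁ z :: t.map f₁, f₁ x, f₁ y, l₂.map f₁, by simp,
        h₁ _ _ hxy⟩

theorem Normalized.eq_zero {α : Cochain X} (h : Normalized α) {l : List X}
    (hl : Adjacent Eq l) : α l = 0 := by
  obtain ⟨l₁, x, _, l₂, rfl, rfl⟩ := hl
  exact h.2 l₁ x l₂

theorem Normalized.prism {α : Cochain Y} (h : Normalized α) (f₀ f₁ : X → Y) :
    Normalized (Pentagon.prism f₀ f₁ α) := by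
  refine ⟨rfl, fun l₁ x l₂ => prism_eq_zero fun a y b e => h.eq_zero ?_⟩
  exact Adjacent.prism (R := Eq) (fun _ _ e => by rw [e]) (fun _ _ e => by rw [e])
    ⟨l₁, x, x, l₂, e.symm, rfl⟩

/-- A prism over a homotopy that fixes all vertices is degenerate. -/
theorem Normalized.prism_const {α : Cochain Y} (h : Normalized α) {f₀ f₁ : X → Y} {l : List X}
    (hl : ∀ x ∈ l, f₀ x = f₁ x) : Pentagon.prism f₀ f₁ α l = 0 :=
  prism_eq_zero fun a y b e => h.eq_zero
    ⟨a.map f₀, f₀ y, f₁ y, b.map f₁, rfl, hl y (by simp [e])⟩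

theorem prism_congr {f₀ f₁ g₀ g₁ : X → Y} (α : Cochain Y) {l : List X}
    (h₀ : ∀ x ∈ l, f₀ x = g₀ x) (h₁ : ∀ x ∈ l, f₁ x = g₁ x) :
    prism f₀ f₁ α l = prism g₀ g₁ α l := by
  induction l generalizing α with
  | nil => rfl
  | cons x l ih =>
    rw [List.forall_mem_cons] at h₀ h₁
    rw [prism_cons, prism_cons, ih _ h₀.2 h₁.2, h₀.1, h₁.1, List.map_congr_left h₁.2]

theorem prism_pull_right (f₀ f₁ : X → Y) (g : Y → Z) (α : Cochain Z) :
    prism f₀ f₁ (pull g α) = prism (g ∘ f₀) (g ∘ f₁) α := by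
  funext l
  induction l generalizing α with
  | nil => rfl
  | cons x l ih =>
    have := ih (fun t => α (g (f₀ x) :: t))
    rw [prism_cons, prism_cons]
    simp only [pull_apply, List.map_cons, List.map_map, Function.comp_apply]
    rw [← this]
    rfl

theorem prism_pull_left (f₀ f₁ : Y → Z) (g : X → Y) (α : Cochain Z) :
    prism (f₀ ∘ g) (f₁ ∘ g) α = pull g (prism f₀ f₁ α) := by
  funext l
  induction l generalizing α with
  | nil => rfl
  | cons x l ih =>
    rw [prism_cons, ih]
    simp [prism_cons]

/-- The prism operator of a homotopy, with the unit interval cut into `n` pieces. -/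
noncomputable def gridPrism (H : ℝ → X → Y) (n : ℕ) : Cochain Y →ₗ[ZMod 5] Cochain X :=
  ∑ i ∈ Finset.range n, prism (H ((i : ℝ) / n)) (H (((i + 1 : ℕ) : ℝ) / n))

theorem gridPrism_apply (H : ℝ → X → Y) (n : ℕ) (α : Cochain Y) (l : List X) :
    gridPrism H n α l =
      ∑ i ∈ Finset.range n, prism (H ((i : ℝ) / n)) (H (((i + 1 : ℕ) : ℝ) / n)) α l := by
  simp [gridPrism]

theorem gridPrism_homotopy (H : ℝ → X → Y) {n : ℕ} (hn : n ≠ 0) (α : Cochain Y) :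
    gridPrism H n (cobd α) = pull (H 1) α - pull (H 0) α - cobd (gridPrism H n α) := by
  have h : ∀ i ∈ Finset.range n, prism (H ((i : ℝ) / n)) (H (((i + 1 : ℕ) : ℝ) / n)) (cobd α) =
      (pull (H (((i + 1 : ℕ) : ℝ) / n)) α - pull (H ((i : ℝ) / n)) α) -
        cobd (prism (H ((i : ℝ) / n)) (H (((i + 1 : ℕ) : ℝ) / n)) α) := fun i _ => by
    rw [← prism_homotopy]; abel
  have hn' : (n : ℝ) ≠ 0 := Nat.cast_ne_zero.2 hn
  simp only [gridPrism, LinearMap.sum_apply, map_sum]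
  rw [Finset.sum_congr rfl h, Finset.sum_sub_distrib,
    Finset.sum_range_sub (fun i : ℕ => pull (H ((i : ℝ) / n)) α)]
  simp [div_self hn']

theorem Normalized.gridPrism {α : Cochain Y} (h : Normalized α) (H : ℝ → X → Y) (n : ℕ) :
    Normalized (Pentagon.gridPrism H n α) := by
  refine ⟨by simp [gridPrism_apply], fun l₁ x l₂ => ?_⟩
  rw [gridPrism_apply]
  exact Finset.sum_eq_zero fun i _ => (h.prism _ _).2 l₁ x l₂

/-! ### Cochains on the label complex -/

abbrev Label := ZMod 5 × Bool

def shift (j : ZMod 5) (a : Label) : Label := (a.1 + j, a.2)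

theorem shift_comp (i j : ZMod 5) : shift i ∘ shift j = shift (j + i) := by
  funext a; simp [shift, add_assoc]

theorem shift_zero : shift 0 = id := by
  funext a; simp [shift]

/-- A list of labels spans a simplex of `∂Δ⁴ * ∂Δ⁴`. -/
def Adm (l : List Label) : Prop := ∀ b, ∃ i, (i, b) ∉ l

theorem Adm.mono {l l' : List Label} (h : Adm l) (hl : l' ⊆ l) : Adm l' := fun b =>
  (h b).imp fun _ hi hi' => hi (hl hi')

theorem Adm.shift {l : List Label} (h : Adm l) (j : ZMod 5) : Adm (l.map (shift j)) := by
  intro b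
  obtain ⟨i, hi⟩ := h b
  refine ⟨i + j, fun hm => hi ?_⟩
  obtain ⟨⟨a, c⟩, ha, e⟩ := List.mem_map.1 hm
  simp only [Pentagon.shift, Prod.mk.injEq, add_left_inj] at e
  obtain ⟨rfl, rfl⟩ := e
  exact ha

def indices (b : Bool) (l : List Label) : Finset (ZMod 5) :=
  Finset.univ.filter fun i => (i, b) ∈ l

theorem mem_indices {b : Bool} {l : List Label} {i : ZMod 5} :
    i ∈ indices b l ↔ (i, b) ∈ l := by simp [indices]

theorem indices_shift (b : Bool) (l : List Label) (j : ZMod 5) :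
    indices b (l.map (shift j)) = (indices b l).image (· + j) := by
  ext i
  simp [mem_indices, shift, ← eq_sub_iff_add_eq, sub_eq_add_neg]

/-- The indicator of the sets whose elements add up to zero. -/
def setWeight (M : Finset (ZMod 5)) : ZMod 5 := if ∑ x ∈ M, x = 0 then 1 else 0

theorem sum_setWeight : ∀ M : Finset (ZMod 5), M ≠ ∅ → M ≠ Finset.univ →
    ∑ j, setWeight (M.image (· + j)) = 1 := by decide +kernel

/-- A weight whose translates form a partition of unity. -/
def weight (l : List Label) : ZMod 5 :=
  if indices true l = ∅ then setWeight (indices false l) else setWeight (indices true l)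

theorem sum_weight {l : List Label} (hl : l ≠ []) (h : Adm l) :
    ∑ j, weight (l.map (shift j)) = 1 := by
  have hu : ∀ b, indices b l ≠ Finset.univ := by
    intro b e
    obtain ⟨i, hi⟩ := h b
    exact hi (mem_indices.1 (e ▸ Finset.mem_univ i))
  simp only [weight, indices_shift, Finset.image_eq_empty]
  split_ifs with h1
  · refine sum_setWeight _ (fun h2 => ?_) (hu _)
    obtain ⟨⟨i, b⟩, hib⟩ := List.exists_mem_of_ne_nil l hl
    rw [← mem_indices] at hib
    cases b
    · simp [h2] at hib
    · simp [h1] at hib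
  · exact sum_setWeight _ h1 (hu _)

theorem weight_swap (l₁ : List Label) (x y : Label) (l₂ : List Label) :
    weight (l₁ ++ x :: y :: l₂) = weight (l₁ ++ y :: x :: l₂) := by
  have : ∀ b, indices b (l₁ ++ x :: y :: l₂) = indices b (l₁ ++ y :: x :: l₂) := by
    intro b; ext i; simp only [mem_indices, List.mem_append, List.mem_cons]; tauto
  simp only [weight, this]

/-- A primitive with respect to the difference operator of the cyclic shift. -/
def primitive (α : Cochain Label) : Cochain Label := fun l =>
  ∑ j ∈ Finset.range 5, ∑ i ∈ Finset.range j,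
    weight (l.map (shift i)) * α (l.map (shift (i - j)))

def weighted (α : Cochain Label) : Cochain Label := fun l => weight l * α l

/-- Iterated classes of even degree on the label complex. -/
def evenClass : ℕ → Cochain Label
  | 0 => fun l => if l.length = 1 then 1 else 0
  | m + 1 => cobd (weighted (cobd (primitive (evenClass m))))

def oddClass (m : ℕ) : Cochain Label := cobd (primitive (evenClass m))

theorem evenClass_succ (m : ℕ) : evenClass (m + 1) = cobd (weighted (oddClass m)) := rfl

theorem weighted_antisymm {α : Cochain Label} (h : Antisymm α) : Antisymm (weighted α) := by
  intro l₁ x y l₂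
  simp only [weighted]
  rw [weight_swap, h]; ring

theorem primitive_antisymm {α : Cochain Label} (h : Antisymm α) : Antisymm (primitive α) := by
  intro l₁ x y l₂
  simp only [primitive, ← Finset.sum_neg_distrib]
  refine Finset.sum_congr rfl fun j _ => Finset.sum_congr rfl fun i _ => ?_
  simp only [List.map_append, List.map_cons]
  rw [weight_swap, h]; ring

theorem primitive_nil {α : Cochain Label} (h : α [] = 0) : primitive α [] = 0 := by
  simp [primitive, h]

theorem evenClass_antisymm (m : ℕ) : Antisymm (evenClass m) := by
  induction m with
  | zero =>
    intro l₁ x y l₂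
    have h : ∀ x y : Label, (l₁ ++ x :: y :: l₂).length ≠ 1 := by intro x y; simp; omega
    simp only [evenClass]
    rw [if_neg (h x y), if_neg (h y x), neg_zero]
  | succ m ih => exact (weighted_antisymm (primitive_antisymm ih).cobd).cobd

theorem evenClass_nil (m : ℕ) : evenClass m [] = 0 := by cases m <;> rfl

theorem cobd_evenClass (m : ℕ) (l : List Label) : cobd (evenClass m) l = 0 := by
  cases m with
  | zero =>
    rcases l with _ | ⟨x, _ | ⟨y, l⟩⟩
    · rfl
    · rfl
    · rw [cobd_cons, cobd_cons, cobd_eq_zero]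
      · simp [evenClass]
      · intro a _ b _
        simp [evenClass]
  | succ m => exact cobd_cobd_apply _ l

theorem primitive_shift {α : Cochain Label} (h0 : α [] = 0) {l : List Label} (hl : Adm l)
    (h : ∑ j, α (l.map (shift j)) = 0) :
    primitive α (l.map (shift 1)) - primitive α l = α l := by
  by_cases hn : l = []
  · subst hn; simp [primitive_nil h0, h0]
  have hw := sum_weight hn hl
  have e0 : α l = α (l.map (shift 0)) := by simp [shift_zero]
  simp only [primitive, List.map_map, shift_comp, Finset.sum_range_succ, Finset.sum_range_zero]
  rw [e0]
  generalize hp : (fun j => α (l.map (shift j))) = p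
  generalize hq : (fun j => weight (l.map (shift j))) = q
  have hp' : ∀ j, α (l.map (shift j)) = p j := fun j => by rw [← hp]
  have hq' : ∀ j, weight (l.map (shift j)) = q j := fun j => by rw [← hq]
  simp only [hp', hq'] at *
  rw [show (∑ j, p j) = p 0 + p 1 + p 2 + p 3 + p 4 from Fin.sum_univ_five p] at h
  rw [show (∑ j, q j) = q 0 + q 1 + q 2 + q 3 + q 4 from Fin.sum_univ_five q] at hw
  have c : ((0 : ℕ) : ZMod 5) = 0 ∧ ((1 : ℕ) : ZMod 5) = 1 ∧ ((2 : ℕ) : ZMod 5) = 2 ∧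
    ((3 : ℕ) : ZMod 5) = 3 ∧ ((4 : ℕ) : ZMod 5) = 4 := by decide
  obtain ⟨c0, c1, c2, c3, c4⟩ := c
  simp only [c0, c1, c2, c3, c4]
  have s : (0 - 1 : ZMod 5) = 4 ∧ (0 - 2 : ZMod 5) = 3 ∧ (0 - 3 : ZMod 5) = 2 ∧
    (0 - 4 : ZMod 5) = 1 ∧ (1 - 2 : ZMod 5) = 4 ∧ (1 - 3 : ZMod 5) = 3 ∧
    (1 - 4 : ZMod 5) = 2 ∧ (2 - 3 : ZMod 5) = 4 ∧ (2 - 4 : ZMod 5) = 3 ∧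
    (3 - 4 : ZMod 5) = 4 ∧ (1 + 0 : ZMod 5) = 1 ∧ (1 + 1 : ZMod 5) = 2 ∧ (1 + 2 : ZMod 5) = 3 ∧
    (1 + 3 : ZMod 5) = 4 ∧ (1 + 4 : ZMod 5) = 0 := by decide
  obtain ⟨s1, s2, s3, s4, s6, s7, s8, s9, s10, s11, t1, t2, t3, t4, t5⟩ := s
  simp only [s1, s2, s3, s4, s6, s7, s8, s9, s10, s11, t1, t2, t3, t4, t5]
  linear_combination p 0 * hw - q 0 * h

theorem cobd_congr_adm {α β : Cochain X} {S : Set (List X)}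
    (hS : ∀ l ∈ S, ∀ l', l'.Sublist l → l' ∈ S) (h : ∀ l ∈ S, α l = β l) {l : List X}
    (hl : l ∈ S) : cobd α l = cobd β l := by
  rw [← sub_eq_zero, ← Pi.sub_apply, ← map_sub]
  refine cobd_eq_zero fun l₁ x l₂ e => ?_
  rw [Pi.sub_apply, h, sub_self]
  exact hS l hl _ (e ▸ List.Sublist.append_left (List.sublist_cons_self x l₂) l₁)

theorem adm_sublist : ∀ l ∈ {l | Adm l}, ∀ l', l'.Sublist l → l' ∈ {l | Adm l} :=
  fun _ hl _ h => Adm.mono hl h.subset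

theorem oddClass_shift_one (m : ℕ)
    (h : ∀ l, Adm l → ∑ j, evenClass m (l.map (shift j)) = 0) {l : List Label} (hl : Adm l) :
    oddClass m (l.map (shift 1)) = oddClass m l := by
  have : cobd (pull (shift 1) (primitive (evenClass m)) - primitive (evenClass m)) l =
      cobd (evenClass m) l :=
    cobd_congr_adm adm_sublist
      (fun l hl => primitive_shift (evenClass_nil m) hl (h l hl)) hl
  rw [cobd_evenClass, map_sub, cobd_pull] at this
  exact sub_eq_zero.1 this

theorem oddClass_shift (m : ℕ)
    (h : ∀ l, Adm l → ∑ j, evenClass m (l.map (shift j)) = 0) {l : List Label} (hl : Adm l)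
    (j : ZMod 5) : oddClass m (l.map (shift j)) = oddClass m l := by
  have key : ∀ n : ℕ, oddClass m (l.map (shift n)) = oddClass m l := by
    intro n
    induction n with
    | zero => simp [shift_zero]
    | succ n ih =>
      rw [← ih, ← oddClass_shift_one m h (hl.shift n), List.map_map, shift_comp]
      push_cast; rfl
  simpa using key j.val

theorem sum_evenClass (m : ℕ) {l : List Label} (hl : Adm l) :
    ∑ j, evenClass m (l.map (shift j)) = 0 := by
  induction m generalizing l with
  | zero =>
    simp only [evenClass, List.length_map, Finset.sum_const, Finset.card_univ, ZMod.card]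
    split_ifs
    · decide
    · simp
  | succ m ih =>
    have e : ∀ j, evenClass (m + 1) (l.map (shift j)) =
        cobd (pull (shift j) (weighted (oddClass m))) l := by
      intro j; rw [cobd_pull]; rfl
    simp only [e]
    rw [← Finset.sum_apply, ← map_sum, cobd_congr_adm adm_sublist _ hl (β := oddClass m)]
    · exact cobd_cobd_apply _ l
    · intro l hl
      simp only [Finset.sum_apply, pull_apply, weighted,
        oddClass_shift m (fun l hl => ih hl) hl, ← Finset.sum_mul]
      by_cases hn : l = []
      · subst hn; simp [oddClass]
      · rw [sum_weight hn hl, one_mul]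

theorem sum_weighted_oddClass (m : ℕ) {l : List Label} (hl : Adm l) :
    ∑ j, weighted (oddClass m) (l.map (shift j)) = oddClass m l := by
  simp only [weighted, oddClass_shift m (fun l hl => sum_evenClass m hl) hl, ← Finset.sum_mul]
  by_cases hn : l = []
  · subst hn; simp [oddClass]
  · rw [sum_weight hn hl, one_mul]

theorem primitive_evenClass_shift (m : ℕ) {l : List Label} (hl : Adm l) :
    primitive (evenClass m) (l.map (shift 1)) - primitive (evenClass m) l = evenClass m l :=
  primitive_shift (evenClass_nil m) hl (sum_evenClass m hl)

theorem primitive_evenClass_normalized (m : ℕ) : Normalized (primitive (evenClass m)) :=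
  (primitive_antisymm (evenClass_antisymm m)).normalized (primitive_nil (evenClass_nil m))

theorem weighted_oddClass_normalized (m : ℕ) : Normalized (weighted (oddClass m)) :=
  (weighted_antisymm (primitive_antisymm (evenClass_antisymm m)).cobd).normalized
    (by simp [weighted])

/-- The label complex has dimension seven. -/
theorem evenClass_eq_zero_of_length {m : ℕ} {l : List Label} (hl : Adm l) (h : l.length = 9) :
    evenClass m l = 0 := by
  refine (evenClass_antisymm m).eq_zero_of_dup (evenClass_nil m) fun hd => ?_
  obtain ⟨i, hi⟩ := hl true
  obtain ⟨j, hj⟩ := hl false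
  have h1 : l.toFinset ⊆ (Finset.univ.erase (i, true)).erase (j, false) := by
    intro x hx
    rw [List.mem_toFinset] at hx
    simp only [Finset.mem_erase, Finset.mem_univ, and_true]
    exact ⟨fun e => hj (e ▸ hx), fun e => hi (e ▸ hx)⟩
  have h2 := Finset.card_le_card h1
  rw [List.toFinset_card_of_nodup hd, h, Finset.card_erase_of_mem (by simp),
    Finset.card_erase_of_mem (by simp)] at h2
  simp [ZMod.card] at h2

/-! ### Fine chains in configuration space -/

section Fine

variable {V W : Type*} [PseudoMetricSpace V] [PseudoMetricSpace W]

/-- Lists in `K` all of whose entries are pairwise `ε`-close. -/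
def Fine (K : Set V) (ε : ℝ) (l : List V) : Prop :=
  (∀ x ∈ l, x ∈ K) ∧ ∀ x ∈ l, ∀ y ∈ l, dist x y < ε

theorem Fine.mono {K K' : Set V} {ε ε' : ℝ} {l : List V} (h : Fine K ε l) (hK : K ⊆ K')
    (hε : ε ≤ ε') : Fine K' ε' l :=
  ⟨fun x hx => hK (h.1 x hx), fun x hx y hy => (h.2 x hx y hy).trans_le hε⟩

/-- A functional on cochains that only involves the simplices in `S`. -/
def Supported (I : Cochain X →ₗ[ZMod 5] ZMod 5) (S : Set (List X)) : Prop :=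
  ∀ α, (∀ l ∈ S, α l = 0) → I α = 0

theorem Supported.congr {I : Cochain X →ₗ[ZMod 5] ZMod 5} {S : Set (List X)}
    (h : Supported I S) {α β : Cochain X} (e : ∀ l ∈ S, α l = β l) : I α = I β := by
  rw [← sub_eq_zero, ← map_sub]
  exact h _ fun l hl => by rw [Pi.sub_apply, e l hl, sub_self]

theorem Supported.mono {I : Cochain X →ₗ[ZMod 5] ZMod 5} {S T : Set (List X)}
    (h : Supported I S) (hST : S ⊆ T) : Supported I T :=
  fun α hα => h α fun l hl => hα l (hST hl)

/-- The region swept out by a homotopy. -/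
def sweep (H : ℝ → V → W) (K : Set V) : Set W :=
  (fun p : ℝ × V => H p.1 p.2) '' (Set.Icc 0 1 ×ˢ K)

theorem isCompact_sweep {H : ℝ → V → W} (hH : Continuous fun p : ℝ × V => H p.1 p.2)
    {K : Set V} (hK : IsCompact K) : IsCompact (sweep H K) :=
  (isCompact_Icc.prod hK).image hH

theorem exists_fine_prism {H : ℝ → V → W} (hH : Continuous fun p : ℝ × V => H p.1 p.2)
    {K : Set V} (hK : IsCompact K) {ε : ℝ} (hε : 0 < ε) :
    ∃ n : ℕ, n ≠ 0 ∧ ∃ δ > 0, ∀ i < n, ∀ (l₁ : List V) (x : V) (l₂ : List V),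
      Fine K δ (l₁ ++ x :: l₂) → Fine (sweep H K) ε
        (l₁.map (H ((i : ℝ) / n)) ++ H ((i : ℝ) / n) x ::
          H (((i + 1 : ℕ) : ℝ) / n) x :: l₂.map (H (((i + 1 : ℕ) : ℝ) / n))) := by
  have huc := (isCompact_Icc.prod hK).uniformContinuousOn_of_continuous
    (s := Set.Icc (0 : ℝ) 1 ×ˢ K) hH.continuousOn
  rw [Metric.uniformContinuousOn_iff] at huc
  obtain ⟨δ, hδ, h⟩ := huc ε hε
  obtain ⟨n, hn⟩ := exists_nat_one_div_lt hδ
  refine ⟨n + 1, n.succ_ne_zero, δ, hδ, fun i hi l₁ x l₂ hl => ?_⟩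
  set N : ℝ := ((n + 1 : ℕ) : ℝ) with hN
  have hNpos : 0 < N := by rw [hN]; positivity
  set s : ℝ := (i : ℝ) / N with hs
  set t : ℝ := ((i + 1 : ℕ) : ℝ) / N with ht
  have hs0 : 0 ≤ s := by positivity
  have ht1 : t ≤ 1 := by
    rw [ht, div_le_one hNpos, hN]
    exact_mod_cast hi
  have hst : t - s = 1 / N := by rw [ht, hs]; push_cast; ring
  have hNδ : 1 / N < δ := by rw [hN]; push_cast; exact hn
  have hNp : 0 < 1 / N := by positivity
  have hsI : s ∈ Set.Icc (0 : ℝ) 1 := ⟨hs0, by linarith⟩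
  have htI : t ∈ Set.Icc (0 : ℝ) 1 := ⟨by linarith, ht1⟩
  have hmem : ∀ w ∈ l₁.map (H s) ++ H s x :: H t x :: l₂.map (H t),
      ∃ r, (r = s ∨ r = t) ∧ ∃ y ∈ l₁ ++ x :: l₂, w = H r y := by
    intro w hw
    simp only [List.mem_append, List.mem_cons, List.mem_map] at hw ⊢
    rcases hw with ⟨y, hy, rfl⟩ | rfl | rfl | ⟨y, hy, rfl⟩
    · exact ⟨s, .inl rfl, y, .inl hy, rfl⟩
    · exact ⟨s, .inl rfl, x, .inr (.inl rfl), rfl⟩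
    · exact ⟨t, .inr rfl, x, .inr (.inl rfl), rfl⟩
    · exact ⟨t, .inr rfl, y, .inr (.inr hy), rfl⟩
  have hI : ∀ r, (r = s ∨ r = t) → r ∈ Set.Icc (0 : ℝ) 1 := by
    rintro r (rfl | rfl) <;> assumption
  refine ⟨fun w hw => ?_, fun w hw w' hw' => ?_⟩
  · obtain ⟨r, hr, y, hy, rfl⟩ := hmem w hw
    exact ⟨(r, y), ⟨hI r hr, hl.1 y hy⟩, rfl⟩
  · obtain ⟨r, hr, y, hy, rfl⟩ := hmem w hw
    obtain ⟨r', hr', y', hy', rfl⟩ := hmem w' hw'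
    refine h (r, y) ⟨hI r hr, hl.1 y hy⟩ (r', y') ⟨hI r' hr', hl.1 y' hy'⟩ ?_
    rw [Prod.dist_eq, max_lt_iff]
    refine ⟨?_, hl.2 y hy y' hy'⟩
    change dist r r' < δ
    rw [Real.dist_eq, abs_lt]
    rcases hr with rfl | rfl <;> rcases hr' with rfl | rfl <;> constructor <;> linarith

end Fine

/-- Fourier coefficients of planar five-point configurations. -/
abbrev Coeff := ZMod 5 → ℂ

noncomputable abbrev χ : AddChar (ZMod 5) ℂ := ZMod.stdAddChar

theorem χ_pow (k : ZMod 5) : χ k ^ 5 = 1 := by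
  rw [← AddChar.map_nsmul_eq_pow, show 5 • k = 0 from by revert k; decide, AddChar.map_zero_eq_one]

theorem norm_χ (k : ZMod 5) : ‖χ k‖ = 1 := AddChar.norm_apply χ k

/-- The cyclic action in Fourier coordinates. -/
noncomputable def act (a : Coeff) : Coeff := fun k => χ k * a k

theorem act_iterate (n : ℕ) (a : Coeff) (k : ZMod 5) : act^[n] a k = χ k ^ n * a k := by
  induction n with
  | zero => simp
  | succ n ih => rw [Function.iterate_succ_apply', act, ih]; ring

theorem act_iterate_five : act^[5] = id := by
  funext a k; rw [act_iterate, χ_pow, one_mul]; rfl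

theorem continuous_act : Continuous act := by unfold act; fun_prop

theorem dist_act_iterate (n : ℕ) (a b : Coeff) : dist (act^[n] a) (act^[n] b) = dist a b := by
  have h : ∀ a b : Coeff, dist (act a) (act b) = dist a b := by
    intro a b
    simp only [dist_pi_def, nndist_eq_nnnorm, act, ← mul_sub, nnnorm_mul,
      show ∀ k, ‖χ k‖₊ = 1 from fun k => NNReal.eq (norm_χ k), one_mul]
  induction n generalizing a b with
  | zero => rfl
  | succ n ih => rw [Function.iterate_succ_apply, Function.iterate_succ_apply, ih, h]

/-- The union of the translates of a set under the cyclic action. -/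
def saturate (K : Set Coeff) : Set Coeff := ⋃ n ∈ Finset.range 5, act^[n] '' K

theorem isCompact_saturate {K : Set Coeff} (hK : IsCompact K) : IsCompact (saturate K) :=
  (Finset.range 5).isCompact_biUnion fun n _ => hK.image (continuous_act.iterate n)

theorem mem_saturate {K : Set Coeff} {a : Coeff} :
    a ∈ saturate K ↔ ∃ n < 5, ∃ b ∈ K, act^[n] b = a := by
  simp [saturate]

theorem subset_saturate (K : Set Coeff) : K ⊆ saturate K := fun a ha =>
  mem_saturate.2 ⟨0, by norm_num, a, ha, rfl⟩

theorem act_mem_saturate {K : Set Coeff} {a : Coeff} (ha : a ∈ saturate K) :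
    act a ∈ saturate K := by
  obtain ⟨n, hn, b, hb, rfl⟩ := mem_saturate.1 ha
  rw [← Function.iterate_succ_apply' act]
  rcases Nat.lt_or_eq_of_le (Nat.succ_le_of_lt hn) with h | h
  · exact mem_saturate.2 ⟨_, h, b, hb, rfl⟩
  · rw [h, act_iterate_five]; exact subset_saturate K hb

/-- Nonzero vectors supported on the coordinates `1, …, m`. -/
def punctured (m : ℕ) : Set Coeff := {a | a ≠ 0 ∧ ∀ k : ZMod 5, k = 0 ∨ m < k.val → a k = 0}

theorem saturate_subset_punctured {m : ℕ} {K : Set Coeff} (h : K ⊆ punctured m) :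
    saturate K ⊆ punctured m := by
  intro a ha
  obtain ⟨n, -, b, hb, rfl⟩ := mem_saturate.1 ha
  refine ⟨fun h0 => (h hb).1 ?_, fun k hk => by rw [act_iterate, (h hb).2 k hk, mul_zero]⟩
  funext k
  have := congr_fun h0 k
  rw [act_iterate] at this
  exact (mul_eq_zero.1 this).resolve_left (pow_ne_zero _ (by
    intro h0; have := norm_χ k; simp [h0] at this))

def EqOff (j : ZMod 5) (a b : Coeff) : Prop := ∀ i ≠ j, a i = b i

/-- Fine simplices with `n` vertices that are parallel to the first `m` coordinate lines. -/
def Good (K : Set Coeff) (ε : ℝ) (n m : ℕ) : Set (List Coeff) :=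
  {l | l.length = n ∧ Fine K ε l ∧ ∀ j : ZMod 5, 1 ≤ j.val → j.val ≤ m → Adjacent (EqOff j) l}

theorem Good.map_act {K : Set Coeff} {ε : ℝ} {n m : ℕ} {l : List Coeff} (h : l ∈ Good K ε n m)
    {i : ℕ} (hi : i < 5) : l.map act^[i] ∈ Good (saturate K) ε n m := by
  obtain ⟨h1, ⟨h2, h3⟩, h4⟩ := h
  refine ⟨by simpa using h1, ⟨?_, ?_⟩, fun j hj hj' => (h4 j hj hj').map ?_⟩
  · simp only [List.forall_mem_map]
    exact fun x hx => mem_saturate.2 ⟨i, hi, x, h2 x hx, rfl⟩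
  · simp only [List.forall_mem_map, dist_act_iterate]
    exact h3
  · intro x _ y _ hxy k hk
    rw [act_iterate, act_iterate, hxy k hk]

/-- Equivariant labellings that are simplicial at scale `ε` on `K`. -/
def IsLabelling (lab : Coeff → Label) (K : Set Coeff) (ε : ℝ) : Prop :=
  (∀ a ∈ K, lab (act a) = shift 1 (lab a)) ∧ ∀ l, Fine K ε l → Adm (l.map lab)

theorem IsLabelling.mono {lab : Coeff → Label} {K K' : Set Coeff} {ε ε' : ℝ}
    (h : IsLabelling lab K ε) (hK : K' ⊆ K) (hε : ε' ≤ ε) : IsLabelling lab K' ε' :=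
  ⟨fun a ha => h.1 a (hK ha), fun l hl => h.2 l (hl.mono hK hε)⟩

/-- An invariant `(2m+1)`-cycle on which the odd class evaluates nontrivially. -/
structure CycleAt (K : Set Coeff) (ε : ℝ) (m : ℕ) (J : Cochain Coeff →ₗ[ZMod 5] ZMod 5) :
    Prop where
  supp : Supported J (Good K ε (2 * m + 2) (m + 1))
  invariant : ∀ α, J (pull act α) = J α
  closed : ∀ α, Normalized α → J (cobd α) = 0
  eval : ∀ lab, IsLabelling lab K ε → J (pull lab (weighted (oddClass m))) = (-1) ^ m

/-- Rotation of one coordinate, along a chord. -/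
noncomputable def rot (k : ZMod 5) (t : ℝ) (a : Coeff) : Coeff :=
  fun i => if i = k then (1 - t + t * χ k) * a i else a i

theorem rot_factor_ne_zero (k : ZMod 5) (t : ℝ) : (1 - t + t * χ k : ℂ) ≠ 0 := by
  intro h
  have ht : (t : ℂ) ≠ 0 := by rintro h0; simp [h0] at h
  have h1 : χ k = (((t - 1) / t : ℝ) : ℂ) := by
    push_cast
    rw [eq_div_iff ht]
    linear_combination h
  have h2 : ((t - 1) / t) ^ 5 = (1 : ℝ) := by
    have := χ_pow k
    rw [h1] at this
    exact_mod_cast this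
  have h3 : (t - 1) / t = 1 := (Odd.strictMono_pow (by decide : Odd 5)).injective (by simpa using h2)
  rw [h1, h3] at h
  norm_num at h

theorem continuous_rot (k : ZMod 5) : Continuous fun p : ℝ × Coeff => rot k p.1 p.2 := by
  refine continuous_pi fun i => ?_
  unfold rot
  split_ifs <;> fun_prop

theorem rot_zero (k : ZMod 5) : rot k 0 = id := by
  funext a i; simp [rot]

theorem rot_eqOff (k : ZMod 5) (t : ℝ) {j : ZMod 5} {a b : Coeff} (h : EqOff j a b) :
    EqOff j (rot k t a) (rot k t b) := fun i hi => by simp only [rot, h i hi]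

theorem rot_of_eq_zero {k : ZMod 5} {a : Coeff} (h : a k = 0) (t : ℝ) : rot k t a = a := by
  funext i
  unfold rot
  split_ifs with hi
  · rw [hi, h, mul_zero]
  · rfl

theorem sweep_rot_subset {k : ZMod 5} {m : ℕ} {K : Set Coeff} (h : K ⊆ punctured m) :
    sweep (rot k) K ⊆ punctured m := by
  rintro _ ⟨⟨t, a⟩, ⟨-, ha⟩, rfl⟩
  refine ⟨fun h0 => (h ha).1 ?_, fun i hi => ?_⟩
  · funext i
    have := congr_fun h0 i
    simp only [rot] at this
    split_ifs at this
    · exact (mul_eq_zero.1 this).resolve_left (rot_factor_ne_zero k t)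
    · exact this
  · have h2 : a i = 0 := (h ha).2 i hi
    simp [rot, h2]

theorem subset_sweep {H : ℝ → Coeff → Coeff} (h0 : H 0 = id) (K : Set Coeff) : K ⊆ sweep H K :=
  fun a ha => ⟨(0, a), ⟨by simp, ha⟩, by simp [h0]⟩

theorem good_prism {H : ℝ → Coeff → Coeff} (hH : ∀ t j a b, EqOff j a b → EqOff j (H t a) (H t b))
    {K K' : Set Coeff} {ε δ : ℝ} {n m : ℕ} {s t : ℝ} {l₁ l₂ : List Coeff} {x : Coeff}
    (hl : l₁ ++ x :: l₂ ∈ Good K δ n m)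
    (hf : Fine K' ε (l₁.map (H s) ++ H s x :: H t x :: l₂.map (H t))) :
    l₁.map (H s) ++ H s x :: H t x :: l₂.map (H t) ∈ Good K' ε (n + 1) m := by
  refine ⟨?_, hf, fun j hj hj' => (hl.2.2 j hj hj').prism (hH s j) (hH t j)⟩
  have := hl.1
  simp only [List.length_append, List.length_cons, List.length_map] at this ⊢
  omega

/-- A `2m`-cell bounding an invariant cycle in the first `m` coordinates. -/
structure CellAt (K : Set Coeff) (ε : ℝ) (m : ℕ) (I J : Cochain Coeff →ₗ[ZMod 5] ZMod 5) :
    Prop where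
  supp : Supported I (Good K ε (2 * m + 1) m)
  supp_bdry : Supported J {l | ∀ a ∈ l, a ((m + 1 : ℕ) : ZMod 5) = 0}
  bdry : ∀ α, Normalized α → I (cobd α) = - J α
  act_eq_rot : ∀ α, I (pull act α) = I (pull (rot ((m + 1 : ℕ) : ZMod 5) 1) α)
  eval : ∀ lab, IsLabelling lab K ε → I (pull lab (evenClass m)) = (-1) ^ m

/-- A compact set carrying cells at all scales. -/
def HasCells (m : ℕ) : Prop := ∃ K, IsCompact K ∧ (∀ a ∈ K, act a ∈ K) ∧ K ⊆ punctured (m + 1) ∧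
  ∀ ε > 0, ∃ I J, CellAt K ε m I J

def HasCycles (m : ℕ) : Prop := ∃ K, IsCompact K ∧ (∀ a ∈ K, act a ∈ K) ∧ K ⊆ punctured (m + 1) ∧
  ∀ ε > 0, ∃ J, CycleAt K ε m J

theorem sum_range_five (f : ZMod 5 → ZMod 5) : ∑ j ∈ Finset.range 5, f (j : ZMod 5) = ∑ j, f j := by
  rw [show ∑ j, f j = f 0 + f 1 + f 2 + f 3 + f 4 from Fin.sum_univ_five f]
  simp [Finset.sum_range_succ]

theorem lab_iterate {lab : Coeff → Label} {K : Set Coeff} {ε : ℝ} (h : IsLabelling lab K ε)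
    (hK : ∀ a ∈ K, act a ∈ K) (n : ℕ) {a : Coeff} (ha : a ∈ K) :
    act^[n] a ∈ K ∧ lab (act^[n] a) = shift n (lab a) := by
  induction n with
  | zero => simp [shift_zero, ha]
  | succ n ih =>
    rw [Function.iterate_succ_apply']
    refine ⟨hK _ ih.1, ?_⟩
    rw [h.1 _ ih.1, ih.2, ← Function.comp_apply (f := shift 1), shift_comp]
    push_cast; rfl

theorem hasCycles_of_hasCells {m : ℕ} (hm : m < 4) (h : HasCells m) : HasCycles m := by
  obtain ⟨K, hK, hKact, hKp, hcell⟩ := h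
  set k : ZMod 5 := ((m + 1 : ℕ) : ZMod 5) with hk
  have hkv : k.val = m + 1 := by rw [hk, ZMod.val_natCast, Nat.mod_eq_of_lt (by omega)]
  have hK' : K ⊆ saturate (sweep (rot k) K) :=
    (subset_sweep (rot_zero k) K).trans (subset_saturate _)
  refine ⟨saturate (sweep (rot k) K),
    isCompact_saturate (isCompact_sweep (continuous_rot k) hK), fun a => act_mem_saturate,
    saturate_subset_punctured (sweep_rot_subset hKp), fun ε hε => ?_⟩
  obtain ⟨n, hn, δ, hδ, hfine⟩ := exists_fine_prism (continuous_rot k) hK hε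
  obtain ⟨I, J₀, hI⟩ := hcell (min ε δ) (lt_min hε hδ)
  set P : Cochain Coeff →ₗ[ZMod 5] ZMod 5 := I ∘ₗ gridPrism (rot k) n with hP
  have hPsupp : Supported P (Good (sweep (rot k) K) ε (2 * m + 2) (m + 1)) := by
    refine fun α hα => hI.supp _ fun l hl => ?_
    rw [gridPrism_apply]
    refine Finset.sum_eq_zero fun i hi => prism_eq_zero fun l₁ x l₂ e => hα _ ?_
    subst e
    have hf := hfine i (Finset.mem_range.1 hi) l₁ x l₂
      (hl.2.1.mono subset_rfl (min_le_right _ _))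
    have hg := good_prism (fun t j a b => rot_eqOff k t) hl hf
    refine ⟨hg.1, hg.2.1, fun j hj hj' => ?_⟩
    rcases Nat.lt_or_eq_of_le hj' with h | h
    · exact hg.2.2 j hj (by omega)
    · have : j = k := ZMod.val_injective 5 (by rw [h, hkv])
      subst this
      exact ⟨_, _, _, _, rfl, fun i hi => by simp [rot, hi]⟩
  have hPcobd : ∀ α, Normalized α → P (cobd α) = I (pull act α) - I α := by
    intro α hα
    have h0 : J₀ (gridPrism (rot k) n α) = 0 := hI.supp_bdry _ fun l hl => by
      rw [gridPrism_apply]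
      refine Finset.sum_eq_zero fun i _ => hα.prism_const fun x hx => ?_
      rw [rot_of_eq_zero (hl x hx), rot_of_eq_zero (hl x hx)]
    rw [hP, LinearMap.comp_apply, gridPrism_homotopy _ hn, map_sub, map_sub,
      hI.bdry _ (hα.gridPrism _ _), h0, hI.act_eq_rot, rot_zero]
    rw [show pull id α = α from by funext l; simp]
    ring
  refine ⟨∑ j ∈ Finset.range 5, P ∘ₗ pull act^[j], ⟨?_, ?_, ?_, ?_⟩⟩
  · intro α hα
    rw [LinearMap.sum_apply]
    refine Finset.sum_eq_zero fun j hj => hPsupp _ fun l hl => ?_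
    exact hα _ (Good.map_act hl (Finset.mem_range.1 hj))
  · intro α
    simp only [LinearMap.sum_apply, LinearMap.comp_apply, pull_pull]
    have e : ∀ j : ℕ, act ∘ act^[j] = act^[j + 1] := fun j => (Function.iterate_succ' act j).symm
    simp only [e]
    rw [Finset.sum_range_succ, act_iterate_five, Finset.sum_range_succ' _ 4,
      Function.iterate_zero]
  · intro α hα
    simp only [LinearMap.sum_apply, LinearMap.comp_apply]
    have e : ∀ j ∈ Finset.range 5, P (pull act^[j] (cobd α)) =
        I (pull act^[j + 1] α) - I (pull act^[j] α) := by
      intro j _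
      rw [← cobd_pull, hPcobd _ (hα.pull _), pull_pull, ← Function.iterate_succ]
    rw [Finset.sum_congr rfl e, Finset.sum_range_sub (fun j => I (pull act^[j] α)),
      act_iterate_five]
    simp
  · intro lab hlab
    simp only [LinearMap.sum_apply, LinearMap.comp_apply]
    rw [← map_sum]
    have hlabK : IsLabelling lab K (min ε δ) := hlab.mono hK' (min_le_left _ _)
    have e1 : P (∑ j ∈ Finset.range 5, pull act^[j] (pull lab (weighted (oddClass m)))) =
        P (cobd (pull lab (primitive (evenClass m)))) := by
      refine hPsupp.congr fun l hl => ?_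
      have hl' := hl.2.1.mono (subset_saturate _) le_rfl
      rw [cobd_pull]
      change _ = oddClass m (l.map lab)
      rw [← sum_weighted_oddClass m (hlab.2 l hl'), ← sum_range_five, Finset.sum_apply]
      refine Finset.sum_congr rfl fun j _ => ?_
      simp only [pull_apply, List.map_map]
      congr 1
      refine List.map_congr_left fun a ha => ?_
      exact (lab_iterate hlab (fun a => act_mem_saturate) j (hl'.1 a ha)).2
    rw [e1, hPcobd _ ((primitive_evenClass_normalized m).pull lab), ← map_sub,
      ← hI.eval lab hlabK]
    refine hI.supp.congr fun l hl => ?_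
    have hadm := hlabK.2 l hl.2.1
    rw [Pi.sub_apply, pull_apply, pull_apply, pull_apply, pull_apply,
      ← primitive_evenClass_shift m hadm]
    congr 2
    rw [List.map_map, List.map_map]
    exact List.map_congr_left fun a ha => hlabK.1 a (hl.2.1.1 a ha)

theorem single_mem_punctured {m : ℕ} (hm : m < 4) :
    (Pi.single ((m + 1 : ℕ) : ZMod 5) 1 : Coeff) ∈ punctured (m + 1) := by
  have hv : ((m + 1 : ℕ) : ZMod 5).val = m + 1 := by
    rw [ZMod.val_natCast, Nat.mod_eq_of_lt (by omega)]
  refine ⟨fun h => ?_, fun k hk => Pi.single_eq_of_ne ?_ _⟩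
  · have := congr_fun h ((m + 1 : ℕ) : ZMod 5)
    simp at this
  · rintro rfl
    rw [hv] at hk
    rcases hk with h | h
    · rw [h] at hv; simp at hv
    · omega

theorem act_single (k : ZMod 5) : act (Pi.single k 1) = Pi.single k (χ k) := by
  funext i
  by_cases h : i = k
  · subst h; simp [act]
  · simp [act, h]

theorem hasCells_zero : HasCells 0 := by
  set p : Coeff := Pi.single ((0 + 1 : ℕ) : ZMod 5) 1 with hp
  refine ⟨saturate {p}, isCompact_saturate isCompact_singleton, fun a => act_mem_saturate,
    saturate_subset_punctured (Set.singleton_subset_iff.2 (single_mem_punctured (by norm_num))),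
    fun ε hε => ⟨LinearMap.proj [p], 0, ?_, ?_, ?_, ?_, ?_⟩⟩
  · refine fun α hα => hα _ ⟨rfl, ⟨?_, ?_⟩, fun j hj hj' => absurd (hj.trans hj') (by norm_num)⟩
    · simpa using subset_saturate {p} rfl
    · simpa using hε
  · exact fun α _ => by simp
  · intro α hα
    simp [cobd_cons, hα.1]
  · intro α
    simp only [LinearMap.proj_apply, pull_apply, List.map_cons, List.map_nil]
    rw [hp, act_single]
    congr 2
    funext i
    by_cases h : i = ((0 + 1 : ℕ) : ZMod 5)
    · subst h; simp [rot]
    · rw [rot, if_neg h, Pi.single_eq_of_ne h, Pi.single_eq_of_ne h]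
  · intro lab _
    simp [evenClass]

/-- The straight-line contraction to a point. -/
noncomputable def cone (p : Coeff) (t : ℝ) (a : Coeff) : Coeff :=
  fun i => (1 - t) * a i + t * p i

theorem continuous_cone (p : Coeff) : Continuous fun q : ℝ × Coeff => cone p q.1 q.2 := by
  unfold cone; fun_prop

theorem cone_zero (p : Coeff) : cone p 0 = id := by
  funext a i; simp [cone]

theorem cone_one (p : Coeff) : cone p 1 = fun _ => p := by
  funext a i; simp [cone]

theorem cone_eqOff (p : Coeff) (t : ℝ) {j : ZMod 5} {a b : Coeff} (h : EqOff j a b) :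
    EqOff j (cone p t a) (cone p t b) := fun i hi => by simp only [cone, h i hi]

theorem act_cone (p : Coeff) (t : ℝ) (a : Coeff) : act (cone p t a) = cone (act p) t (act a) := by
  funext i; simp only [act, cone]; ring

theorem rot_cone_single {k : ZMod 5} (t : ℝ) {a : Coeff} (h : a k = 0) :
    rot k 1 (cone (Pi.single k 1) t a) = cone (act (Pi.single k 1)) t a := by
  funext i
  rw [act_single]
  by_cases hi : i = k
  · subst hi; simp [rot, cone, h]; ring
  · simp [rot, cone, hi]

theorem sweep_cone_subset {m : ℕ} (hm : m + 1 < 4) {K : Set Coeff} (h : K ⊆ punctured (m + 1)) :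
    sweep (cone (Pi.single ((m + 1 + 1 : ℕ) : ZMod 5) 1)) K ⊆ punctured (m + 1 + 1) := by
  have hs := single_mem_punctured hm
  have hv : ((m + 1 + 1 : ℕ) : ZMod 5).val = m + 1 + 1 := by
    rw [ZMod.val_natCast, Nat.mod_eq_of_lt (by omega)]
  rintro _ ⟨⟨t, a⟩, ⟨-, ha : a ∈ K⟩, rfl⟩
  refine ⟨fun h0 => ?_, fun i hi => ?_⟩
  · have ht : (t : ℂ) = 0 := by
      have := congr_fun h0 ((m + 1 + 1 : ℕ) : ZMod 5)
      have h2 := (h ha).2 ((m + 1 + 1 : ℕ) : ZMod 5) (.inr (by omega))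
      simp only [cone, h2, Pi.single_eq_same, mul_zero, zero_add, mul_one, Pi.zero_apply] at this
      exact this
    refine (h ha).1 (Eq.trans (funext fun i => ?_) h0)
    simp [cone, ht]
  · have h1 := (h ha).2 i (hi.imp_right fun h => by omega)
    have h2 := hs.2 i hi
    change (1 - t : ℂ) * a i + t * _ = 0
    rw [h1, h2]; simp

theorem gridPrism_pull_act (p : Coeff) (n : ℕ) (α : Cochain Coeff) :
    gridPrism (cone p) n (pull act α) = pull act (gridPrism (cone (act p)) n α) := by
  simp only [gridPrism, LinearMap.sum_apply, map_sum]
  refine Finset.sum_congr rfl fun i _ => ?_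
  rw [prism_pull_right, ← prism_pull_left]
  congr 1
  congr 1 <;> funext a <;> exact act_cone _ _ _

theorem hasCells_of_hasCycles {m : ℕ} (hm : m + 1 < 4) (h : HasCycles m) : HasCells (m + 1) := by
  obtain ⟨K, hK, hKact, hKp, hcyc⟩ := h
  set k : ZMod 5 := ((m + 1 + 1 : ℕ) : ZMod 5) with hk
  have hkv : k.val = m + 1 + 1 := by rw [hk, ZMod.val_natCast, Nat.mod_eq_of_lt (by omega)]
  set p : Coeff := Pi.single k 1 with hp
  have hK' : K ⊆ saturate (sweep (cone p) K) :=
    (subset_sweep (cone_zero p) K).trans (subset_saturate _)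
  refine ⟨saturate (sweep (cone p) K),
    isCompact_saturate (isCompact_sweep (continuous_cone p) hK), fun a => act_mem_saturate,
    saturate_subset_punctured (sweep_cone_subset hm hKp), fun ε hε => ?_⟩
  obtain ⟨n, hn, δ, hδ, hfine⟩ := exists_fine_prism (continuous_cone p) hK hε
  obtain ⟨J, hJ⟩ := hcyc (min ε δ) (lt_min hε hδ)
  have hone : ∀ {α : Cochain Coeff}, Normalized α → J (pull (cone p 1) α) = 0 := by
    refine fun {α} hα => hJ.supp _ fun l hl => hα.eq_zero ?_
    rw [cone_one]
    exact (hl.2.2 1 le_rfl (by rw [show (1 : ZMod 5).val = 1 from rfl]; omega)).map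
      fun _ _ _ _ _ => rfl
  have hbdry : ∀ α, Normalized α → (J ∘ₗ gridPrism (cone p) n) (cobd α) = - J α := by
    intro α hα
    rw [LinearMap.comp_apply, gridPrism_homotopy _ hn, map_sub, map_sub,
      hJ.closed _ (hα.gridPrism _ _), hone hα, cone_zero]
    rw [show pull id α = α from by funext l; simp]
    ring
  have hzero : ∀ a ∈ K, a k = 0 := fun a ha => (hKp ha).2 k (.inr (by omega))
  refine ⟨J ∘ₗ gridPrism (cone p) n, J, ⟨?_, ?_, hbdry, ?_, ?_⟩⟩
  · refine fun α hα => hJ.supp _ fun l hl => ?_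
    rw [gridPrism_apply]
    refine Finset.sum_eq_zero fun i hi => prism_eq_zero fun l₁ x l₂ e => hα _ ?_
    subst e
    have hf := hfine i (Finset.mem_range.1 hi) l₁ x l₂
      (hl.2.1.mono subset_rfl (min_le_right _ _))
    exact good_prism (fun t j a b => cone_eqOff p t) hl (hf.mono (subset_saturate _) le_rfl)
  · refine hJ.supp.mono fun l hl a ha => (hKp (hl.2.1.1 a ha)).2 _ (.inr ?_)
    change m + 1 < k.val
    omega
  · intro α
    rw [LinearMap.comp_apply, LinearMap.comp_apply, gridPrism_pull_act, hJ.invariant]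
    refine hJ.supp.congr fun l hl => ?_
    rw [gridPrism_apply, gridPrism_apply]
    refine Finset.sum_congr rfl fun i _ => ?_
    rw [prism_pull_right]
    exact prism_congr _ (fun x hx => (rot_cone_single _ (hzero x (hl.2.1.1 x hx))).symm)
      fun x hx => (rot_cone_single _ (hzero x (hl.2.1.1 x hx))).symm
  · intro lab hlab
    rw [evenClass_succ, ← cobd_pull, hbdry _ ((weighted_oddClass_normalized m).pull lab),
      hJ.eval lab (hlab.mono hK' (min_le_left _ _)), pow_succ]
    ring

theorem hasCycles {m : ℕ} (hm : m < 4) : HasCycles m := by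
  refine hasCycles_of_hasCells hm ?_
  induction m with
  | zero => exact hasCells_zero
  | succ m ih => exact hasCells_of_hasCycles hm (hasCycles_of_hasCells (by omega) (ih (by omega)))

/-! ### Labelling five-point configurations by their distances -/

section Configuration

variable {E : Type*} [PseudoMetricSpace E]

/-- The difference of indices of a side or of a diagonal of a pentagon. -/
def stride (b : Bool) : ZMod 5 := if b then 1 else 2

/-- The deviation of a side or diagonal from the mean, up to a factor of five. -/
noncomputable def deviation (x : ZMod 5 → E) (p : Label) : ℝ :=
  5 * dist (x p.1) (x (p.1 + stride p.2)) - ∑ j, dist (x j) (x (j + stride p.2))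

theorem continuous_deviation : Continuous (deviation (E := E)) := by
  unfold deviation; fun_prop

theorem sum_deviation (x : ZMod 5 → E) (b : Bool) : ∑ i, deviation x (i, b) = 0 := by
  simp only [deviation, Finset.sum_sub_distrib, ← Finset.mul_sum, Finset.sum_const,
    Finset.card_univ, ZMod.card, nsmul_eq_mul]
  norm_num

def turn (x : ZMod 5 → E) : ZMod 5 → E := fun i => x (i - 1)

theorem deviation_turn (x : ZMod 5 → E) (i : ZMod 5) (b : Bool) :
    deviation (turn x) (i, b) = deviation x (i - 1, b) := by
  have h : ∑ j, dist (x (j - 1)) (x (j - 1 + stride b)) = ∑ j, dist (x j) (x (j + stride b)) :=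
    Equiv.sum_comp (Equiv.subRight (1 : ZMod 5)) fun j => dist (x j) (x (j + stride b))
  simp only [deviation, turn, add_sub_right_comm, h]

/-- The mean of a set of residues. -/
def center (M : Finset (ZMod 5)) : ZMod 5 := (∑ x ∈ M, x) * (M.card : ZMod 5) ^ 3

/-- A translation equivariant choice of elements of proper subsets of `ZMod 5`. -/
def select (M : Finset (ZMod 5)) : ZMod 5 :=
  if center M ∈ M then center M else if center M + 1 ∈ M then center M + 1
  else if center M + 2 ∈ M then center M + 2 else if center M + 3 ∈ M then center M + 3
  else center M + 4

theorem select_mem : ∀ M : Finset (ZMod 5), M.Nonempty → select M ∈ M := by decide +kernel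

theorem select_image : ∀ M : Finset (ZMod 5), M.Nonempty → M ≠ Finset.univ →
    select (M.image (· + 1)) = select M + 1 := by decide +kernel

/-- The sides or diagonals that exceed the mean considerably. -/
noncomputable def long (δ : ℝ) (b : Bool) (x : ZMod 5 → E) : Finset (ZMod 5) :=
  {i | δ ≤ deviation x (i, b)}

theorem mem_long {δ : ℝ} {b : Bool} {x : ZMod 5 → E} {i : ZMod 5} :
    i ∈ long δ b x ↔ δ ≤ deviation x (i, b) := by simp [long]

theorem long_ne_univ {δ : ℝ} (hδ : 0 < δ) (b : Bool) (x : ZMod 5 → E) :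
    long δ b x ≠ Finset.univ := fun h => by
  have : 0 < ∑ i, deviation x (i, b) :=
    Finset.sum_pos (fun i _ => hδ.trans_le (mem_long.1 (h ▸ Finset.mem_univ i)))
      Finset.univ_nonempty
  exact this.ne' (sum_deviation x b)

theorem long_turn (δ : ℝ) (b : Bool) (x : ZMod 5 → E) :
    long δ b (turn x) = (long δ b x).image (· + 1) := by
  ext i
  simp [mem_long, deviation_turn, sub_eq_add_neg]

open Classical in
noncomputable def label (δ : ℝ) (x : ZMod 5 → E) : Label :=
  if (long δ true x).Nonempty then (select (long δ true x), true)
  else (select (long δ false x), false)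

theorem label_turn {δ : ℝ} (hδ : 0 < δ) {x : ZMod 5 → E} (hx : ∃ p, δ ≤ deviation x p) :
    label δ (turn x) = shift 1 (label δ x) := by
  have h : (long δ true x).Nonempty ∨ (long δ false x).Nonempty := by
    obtain ⟨⟨i, b⟩, h⟩ := hx
    cases b
    · exact .inr ⟨i, mem_long.2 h⟩
    · exact .inl ⟨i, mem_long.2 h⟩
  simp only [label, long_turn, Finset.image_nonempty]
  split_ifs with h1
  · rw [select_image _ h1 (long_ne_univ hδ _ _)]; rfl
  · rw [select_image _ (h.resolve_left h1) (long_ne_univ hδ _ _)]; rfl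

theorem le_deviation_label {δ : ℝ} {x : ZMod 5 → E} (hx : ∃ p, δ ≤ deviation x p) :
    δ ≤ deviation x (label δ x) := by
  rw [label]
  split_ifs with h1
  · exact mem_long.1 (select_mem _ h1)
  · obtain ⟨⟨i, b⟩, h⟩ := hx
    cases b
    · exact mem_long.1 (select_mem _ ⟨i, mem_long.2 h⟩)
    · exact absurd ⟨i, mem_long.2 h⟩ h1

theorem exists_le_deviation {K : Set (ZMod 5 → E)} (hK : IsCompact K)
    (h : ∀ x ∈ K, ∃ p, deviation x p ≠ 0) : ∃ δ > 0, ∀ x ∈ K, ∃ p, δ ≤ deviation x p := by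
  obtain ⟨δ, hδ, hmin⟩ := hK.exists_forall_le' (a := (0 : ℝ))
    (f := fun x => Finset.univ.sup' Finset.univ_nonempty (deviation x))
    (Continuous.continuousOn (Continuous.finset_sup'_apply _ fun p _ =>
      (continuous_apply p).comp continuous_deviation)) fun x hx => by
      obtain ⟨⟨i, b⟩, hp⟩ := h x hx
      obtain ⟨j, -, hj⟩ := Finset.exists_pos_of_sum_zero_of_exists_nonzero
        (fun j => deviation x (j, b)) (sum_deviation x b) ⟨i, Finset.mem_univ i, hp⟩
      exact hj.trans_le (Finset.le_sup' _ (Finset.mem_univ (j, b)))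
  refine ⟨δ, hδ, fun x hx => ?_⟩
  obtain ⟨p, -, hp⟩ := (Finset.le_sup'_iff _).1 (hmin x hx)
  exact ⟨p, hp⟩

theorem exists_adm {K : Set (ZMod 5 → E)} (hK : IsCompact K) {δ : ℝ} (hδ : 0 < δ)
    (h : ∀ x ∈ K, ∃ p, δ ≤ deviation x p) :
    ∃ ε > 0, ∀ l, Fine K ε l → Adm (l.map (label δ)) := by
  have huc := hK.uniformContinuousOn_of_continuous continuous_deviation.continuousOn (s := K)
  rw [Metric.uniformContinuousOn_iff] at huc
  obtain ⟨ε, hε, huc⟩ := huc δ hδ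
  refine ⟨ε, hε, fun l hl b => ?_⟩
  by_contra! hall
  obtain ⟨x, hx, -⟩ := List.mem_map.1 (hall 0)
  have : 0 < ∑ i, deviation x (i, b) := by
    refine Finset.sum_pos (fun i _ => ?_) Finset.univ_nonempty
    obtain ⟨y, hy, e⟩ := List.mem_map.1 (hall i)
    have h1 := le_deviation_label (h y (hl.1 y hy))
    rw [e] at h1
    have h2 := (dist_le_pi_dist _ _ (i, b)).trans_lt
      (huc x (hl.1 x hx) y (hl.1 y hy) (hl.2 x hx y hy))
    rw [Real.dist_eq, abs_lt] at h2
    linarith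
  exact this.ne' (sum_deviation x b)

end Configuration

/-! ### The homotopy -/

theorem eq_zero_of_interpolation_const {a : Coeff} (ha : a 0 = 0) {σ : ℝ}
    (h : ∀ i j, (1 - σ) * ZMod.dft a i + σ * (1 + Complex.I) * a i =
      (1 - σ) * ZMod.dft a j + σ * (1 + Complex.I) * a j) : a = 0 := by
  have hc : (1 + Complex.I) ≠ 0 := fun h => by simpa using congr_arg Complex.re h
  by_cases hσ : σ = 1
  · funext i
    simpa [hσ, ha, hc] using h i 0
  have hσ' : (1 - σ : ℂ) ≠ 0 := sub_ne_zero.2 fun h => hσ (by exact_mod_cast h.symm)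
  set τ : ℝ := σ / (1 - σ) with hτ
  have hστ : (τ : ℂ) * (1 - σ) = σ := by
    rw [hτ]; push_cast; field_simp
  have h1 : ∀ j, ZMod.dft a j = ZMod.dft a 0 - τ * (1 + Complex.I) * a j := fun j => by
    have := h j 0
    rw [ha, mul_zero, add_zero] at this
    refine mul_left_cancel₀ hσ' ?_
    linear_combination this + (1 + Complex.I) * a j * hστ
  have h2 : ∀ j, ZMod.dft (ZMod.dft a) j = 5 * a (-j) := fun j => by
    rw [ZMod.dft_dft]; simp
  have h3 : ZMod.dft a 0 = 0 := by
    have e1 : ∑ j, ZMod.dft a j = 0 := by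
      rw [← ZMod.dft_apply_zero, h2, neg_zero, ha, mul_zero]
    have e3 : ∑ j, a j = ZMod.dft a 0 := (ZMod.dft_apply_zero a).symm
    rw [Finset.sum_congr rfl fun j _ => h1 j, Finset.sum_sub_distrib, ← Finset.mul_sum, e3,
      Finset.sum_const, Finset.card_univ, ZMod.card, nsmul_eq_mul] at e1
    have e2 : (5 - τ * (1 + Complex.I)) * ZMod.dft a 0 = 0 := by
      push_cast at e1; linear_combination e1
    refine (mul_eq_zero.1 e2).resolve_left fun h => ?_
    have hi := congr_arg Complex.im h
    have hr := congr_arg Complex.re h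
    simp at hi hr
    linarith
  have h4 : ZMod.dft a = (-(τ * (1 + Complex.I))) • a := by
    funext j; rw [h1, h3]; simp
  have h5 : ∀ j, 5 * a (-j) = (τ * (1 + Complex.I)) ^ 2 * a j := fun j => by
    rw [← h2, h4, map_smul, h4]; simp; ring
  funext j
  have h6 : (25 + 4 * τ ^ 4 : ℂ) * a j = 0 := by
    have e1 := h5 j
    have e2 := h5 (-j)
    rw [neg_neg] at e2
    have hI : (1 + Complex.I) ^ 4 = -4 := by
      linear_combination (Complex.I ^ 2 + 4 * Complex.I + 5) * Complex.I_sq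
    linear_combination 5 * e2 + (τ * (1 + Complex.I)) ^ 2 * e1 + τ ^ 4 * a j * hI
  refine (mul_eq_zero.1 h6).resolve_left ?_
  have : (25 + 4 * τ ^ 4 : ℝ) ≠ 0 := by positivity
  exact_mod_cast this

/-- First deform a planar configuration to its coefficients, then expand it by `R`. -/
noncomputable def deform (r R t : ℝ) (a : Coeff) : Coeff := fun i =>
  ((r + max 0 (2 * t - 1) * R : ℝ) : ℂ) *
    ((1 - (min (2 * t) 1 : ℝ)) * ZMod.dft a i + (min (2 * t) 1 : ℝ) * (1 + Complex.I) * a i)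

theorem continuous_deform (r R : ℝ) : Continuous fun p : ℝ × Coeff => deform r R p.1 p.2 := by
  refine continuous_pi fun i => ?_
  simp only [deform, ZMod.dft_apply]
  fun_prop

theorem deform_zero_act (r R : ℝ) (a : Coeff) :
    deform r R 0 (act a) = turn (deform r R 0 a) := by
  funext i
  have h : ZMod.dft (act a) i = ZMod.dft a (i - 1) := by
    simp only [ZMod.dft_apply, act, smul_eq_mul, ← mul_assoc, ← AddChar.map_add_eq_mul]
    refine Finset.sum_congr rfl fun j _ => ?_
    congr 2
    ring
  simp [deform, turn, h]

theorem deform_const {r R : ℝ} (hr : 0 < r) (hR : 0 ≤ R) {t : ℝ} {a : Coeff}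
    (h0 : a 0 = 0) (h : ∀ i j, deform r R t a i = deform r R t a j) : a = 0 := by
  have hr' : ((r + max 0 (2 * t - 1) * R : ℝ) : ℂ) ≠ 0 :=
    Complex.ofReal_ne_zero.2 (by positivity)
  exact eq_zero_of_interpolation_const h0 fun i j => mul_left_cancel₀ hr' (h i j)

theorem deform_of_half_le {r R t : ℝ} (ht : 1 / 2 ≤ t) (a : Coeff) (i : ZMod 5) :
    deform r R t a i = ((r + (2 * t - 1) * R : ℝ) : ℂ) * ((1 + Complex.I) * a i) := by
  rw [deform, min_eq_right (by linarith), max_eq_right (by linarith)]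
  simp

theorem exists_norm_deform_lt {K : Set Coeff} (hK : IsCompact K) : ∃ r > 0, ∀ R,
    ∀ t ∈ Set.Icc (0 : ℝ) 1, t ≤ 1 / 2 → ∀ a ∈ K, ∀ i, ‖deform r R t a i‖ < 1 := by
  obtain ⟨B, hB⟩ := (isCompact_sweep (continuous_deform 1 0) hK).isBounded.exists_norm_le
  refine ⟨1 / (|B| + 1), by positivity, fun R t ht ht' a ha i => ?_⟩
  have h1 : ‖deform 1 0 t a i‖ ≤ |B| :=
    ((norm_le_pi_norm _ i).trans (hB _ ⟨(t, a), ⟨ht, ha⟩, rfl⟩)).trans (le_abs_self B)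
  have h2 : deform (1 / (|B| + 1)) R t a i = ((1 / (|B| + 1) : ℝ) : ℂ) * deform 1 0 t a i := by
    simp only [deform, max_eq_left (show 2 * t - 1 ≤ 0 by linarith)]
    push_cast
    ring
  rw [h2, norm_mul, Complex.norm_real, Real.norm_of_nonneg (by positivity), one_div,
    inv_mul_lt_iff₀ (by positivity)]
  linarith

theorem exists_le_norm {K : Set Coeff} (hK : IsCompact K) (h : ∀ a ∈ K, a ≠ 0) :
    ∃ ρ > 0, ∀ a ∈ K, ∃ i, ρ ≤ ‖a i‖ := by
  obtain ⟨ρ, hρ, hmin⟩ := hK.exists_forall_le' continuous_norm.continuousOn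
    fun a ha => norm_pos_iff.2 (h a ha)
  refine ⟨ρ, hρ, fun a ha => ?_⟩
  by_contra! hlt
  exact (hmin a ha).not_gt ((pi_norm_lt_iff hρ).2 hlt)

section Collapse

variable {E : Type*} {Q : ℂ → E}

theorem deform_nondegenerate
    (hinj : ∀ x y, Q x = Q y → x = y ∨ (1 ≤ ‖x‖ ∧ 1 ≤ ‖y‖)) {K : Set Coeff}
    (hKp : K ⊆ punctured 4) {r R : ℝ} (hr : 0 < r) (hR : 0 ≤ R)
    (hlt : ∀ t ∈ Set.Icc (0 : ℝ) 1, t ≤ 1 / 2 → ∀ a ∈ K, ∀ i, ‖deform r R t a i‖ < 1)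
    {t : ℝ} (ht : t ∈ Set.Icc (0 : ℝ) 1) {a : Coeff} (ha : a ∈ K)
    (h : ∀ i j, Q (deform r R t a i) = Q (deform r R t a j)) : False := by
  have h0 : a 0 = 0 := (hKp ha).2 0 (.inl rfl)
  refine (hKp ha).1 ?_
  rcases le_total t (1 / 2) with ht' | ht'
  · refine deform_const (t := t) hr hR h0 fun i j => ?_
    exact (hinj _ _ (h i j)).resolve_right fun h1 => (hlt t ht ht' a ha i).not_ge h1.1
  · funext i
    have hc : (1 + Complex.I) ≠ 0 := fun h => by simpa using congr_arg Complex.re h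
    have hz : deform r R t a 0 = 0 := by rw [deform_of_half_le ht', h0, mul_zero, mul_zero]
    have e := (hinj _ _ (h i 0)).resolve_right fun h1 => by
      rw [hz, norm_zero] at h1; exact absurd h1.2 (by norm_num)
    have hμ : ((r + (2 * t - 1) * R : ℝ) : ℂ) ≠ 0 := Complex.ofReal_ne_zero.2
      (add_pos_of_pos_of_nonneg hr (mul_nonneg (by linarith) hR)).ne'
    rw [hz, deform_of_half_le ht'] at e
    exact (mul_eq_zero.1 ((mul_eq_zero.1 e).resolve_left hμ)).resolve_left hc

theorem adjacent_eq_of_collapse (hconst : ∀ x y, 1 ≤ ‖x‖ → 1 ≤ ‖y‖ → Q x = Q y)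
    {K : Set Coeff} (hKp : K ⊆ punctured 4) {r ρ : ℝ} (hr : 0 < r) (hρ : 0 < ρ)
    (hle : ∀ a ∈ K, ∃ i, ρ ≤ ‖a i‖) {n : ℕ} {l : List Coeff} (hl : l ∈ Good K (ρ / 2) n 4) :
    Adjacent Eq (l.map fun a => Q ∘ deform r (2 / ρ) 1 a) := by
  obtain ⟨l₀, x, y, l₁, e, -⟩ := hl.2.2 1 le_rfl (by decide)
  have hx : x ∈ l := by simp [e]
  obtain ⟨j, hj⟩ := hle x (hl.2.1.1 x hx)
  have hj0 : j ≠ 0 := by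
    rintro rfl
    rw [(hKp (hl.2.1.1 x hx)).2 0 (.inl rfl), norm_zero] at hj
    exact hj.not_gt hρ
  have hbig : ∀ y ∈ l, 1 ≤ ‖deform r (2 / ρ) 1 y j‖ := fun y hy => by
    have h1 : ρ / 2 ≤ ‖y j‖ := by
      have h2 := (dist_le_pi_dist x y j).trans_lt (hl.2.1.2 x hx y hy)
      rw [dist_eq_norm] at h2
      linarith [norm_sub_norm_le (x j) (y j)]
    have h3 : 1 ≤ ‖1 + Complex.I‖ := by simpa using Complex.abs_re_le_norm (1 + Complex.I)
    rw [deform_of_half_le (by norm_num), norm_mul, norm_mul, Complex.norm_real,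
      Real.norm_of_nonneg (by positivity)]
    calc (1 : ℝ) = 2 / ρ * (1 * (ρ / 2)) := by field_simp
      _ ≤ _ := by gcongr; linarith
  refine (hl.2.2 j ?_ (by have := ZMod.val_lt j; omega)).map fun y hy z hz hyz => ?_
  · rw [Nat.one_le_iff_ne_zero, ne_eq, ZMod.val_eq_zero]; exact hj0
  · funext i
    by_cases hi : i = j
    · subst hi
      exact hconst _ _ (hbig y hy) (hbig z hz)
    · simp only [Function.comp_apply, deform_of_half_le (show (1 / 2 : ℝ) ≤ 1 by norm_num),
        hyz i hi]

/-- A map collapsing the complement of a disc admits five points with equal sides and equal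
diagonals. -/
theorem exists_deviation_eq_zero [PseudoMetricSpace E] (hQ : Continuous Q)
    (hinj : ∀ x y, Q x = Q y → x = y ∨ (1 ≤ ‖x‖ ∧ 1 ≤ ‖y‖))
    (hconst : ∀ x y, 1 ≤ ‖x‖ → 1 ≤ ‖y‖ → Q x = Q y) :
    ∃ x : ZMod 5 → ℂ, (∀ p, deviation (Q ∘ x) p = 0) ∧ ∃ i j, Q (x i) ≠ Q (x j) := by
  by_contra! hno
  obtain ⟨K, hK, hKact, hKp, hcyc⟩ := hasCycles (m := 3) (by norm_num)
  obtain ⟨r, hr, hlt⟩ := exists_norm_deform_lt hK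
  obtain ⟨ρ, hρ, hle⟩ := exists_le_norm hK fun a ha => (hKp ha).1
  set H : ℝ → Coeff → ZMod 5 → E := fun t a => Q ∘ deform r (2 / ρ) t a with hH
  have hHc : Continuous fun p : ℝ × Coeff => H p.1 p.2 :=
    continuous_pi fun i => hQ.comp ((continuous_apply i).comp (continuous_deform r (2 / ρ)))
  have hS := isCompact_sweep hHc hK
  obtain ⟨δ, hδ, hdev⟩ := exists_le_deviation hS (by
    rintro _ ⟨⟨t, a⟩, ⟨ht, ha⟩, rfl⟩
    by_contra! hz
    exact deform_nondegenerate hinj hKp hr (by positivity) (hlt _) ht ha (hno _ hz))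
  obtain ⟨ε, hε, hadm⟩ := exists_adm hS hδ hdev
  obtain ⟨n, hn, η, hη, hfine⟩ := exists_fine_prism hHc hK hε
  obtain ⟨J, hJ⟩ := hcyc (min η (ρ / 2)) (lt_min hη (by positivity))
  have hlab : IsLabelling (label δ ∘ H 0) K (min η (ρ / 2)) := by
    refine ⟨fun a ha => ?_, fun l hl => ?_⟩
    · have e : H 0 (act a) = turn (H 0 a) := by
        simp only [hH, deform_zero_act]; rfl
      rw [Function.comp_apply, e]
      exact label_turn hδ (hdev _ ⟨(0, a), ⟨by simp, ha⟩, rfl⟩)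
    · rcases List.eq_nil_or_concat l with rfl | ⟨l₁, x, rfl⟩
      · exact fun b => ⟨0, by simp⟩
      · rw [List.concat_eq_append] at hl ⊢
        have h1 := hadm _ (hfine 0 (Nat.pos_of_ne_zero hn) l₁ x []
          (hl.mono subset_rfl (min_le_left _ _)))
        refine h1.mono fun y hy => ?_
        simp only [List.map_append, List.map_cons, List.map_nil, List.mem_append,
          List.mem_cons, Nat.cast_zero, zero_div, List.map_map] at hy ⊢
        tauto
  set β : Cochain (ZMod 5 → E) := pull (label δ) (weighted (oddClass 3)) with hβ
  have hβn : Normalized β := (weighted_oddClass_normalized 3).pull _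
  have h1 : J (pull (H 1) β) = 0 := hJ.supp _ fun l hl => hβn.eq_zero <|
    adjacent_eq_of_collapse hconst hKp hr hρ hle
      ⟨hl.1, hl.2.1.mono subset_rfl (min_le_right _ _), hl.2.2⟩
  have h2 : J (pull (H 0) β) = (-1) ^ 3 := by
    rw [hβ, pull_pull]
    exact hJ.eval _ hlab
  have h3 : J (gridPrism H n (cobd β)) = 0 := by
    refine hJ.supp _ fun l hl => ?_
    rw [gridPrism_apply, hβ, cobd_pull, ← evenClass_succ]
    refine Finset.sum_eq_zero fun i hi => prism_eq_zero fun l₁ x l₂ e => ?_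
    subst e
    refine evenClass_eq_zero_of_length (hadm _ (hfine i (Finset.mem_range.1 hi) l₁ x l₂
      (hl.2.1.mono subset_rfl (min_le_left _ _)))) ?_
    have := hl.1
    simp only [List.length_append, List.length_cons, List.length_map] at this ⊢
    omega
  rw [gridPrism_homotopy H hn, map_sub, map_sub, hJ.closed _ (hβn.gridPrism H n), h1, h2] at h3
  exact absurd h3 (by decide)

end Collapse

theorem dist_eq_of_deviation_eq_zero {E : Type*} [PseudoMetricSpace E] {x : ZMod 5 → E}
    (h : ∀ p, deviation x p = 0) (b : Bool) (i j : ZMod 5) :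
    dist (x i) (x (i + stride b)) = dist (x j) (x (j + stride b)) := by
  have h1 := h (i, b)
  have h2 := h (j, b)
  simp only [deviation] at h1 h2
  linarith

theorem injective_of_deviation_eq_zero {E : Type*} [MetricSpace E] {x : ZMod 5 → E}
    (h : ∀ p, deviation x p = 0) (hne : ∃ i j, x i ≠ x j) : Function.Injective x := by
  have key : ∀ b i, x i ≠ x (i + stride b) := by
    intro b i hi
    obtain ⟨j, k, hjk⟩ := hne
    have h1 : ∀ j, x j = x (j + stride b) := fun j => by
      rw [← dist_eq_zero, ← dist_eq_of_deviation_eq_zero h b i j, hi, dist_self]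
    have h2 : ∀ n : ℕ, x j = x (j + n * stride b) := by
      intro n
      induction n with
      | zero => simp
      | succ n ih => rw [ih, h1]; push_cast; ring_nf
    have h3 : ∀ (j k : ZMod 5) (b : Bool), ∃ n : Fin 5, k = j + (n : ℕ) * stride b := by decide
    obtain ⟨n, hn⟩ := h3 j k b
    exact hjk (by rw [hn]; exact h2 n)
  intro i j hij
  by_contra hne'
  have h4 : ∀ i j : ZMod 5, i ≠ j → ∃ b, j = i + stride b ∨ i = j + stride b := by decide
  obtain ⟨b, hb | hb⟩ := h4 i j hne'
  · exact key b i (hb ▸ hij)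
  · exact key b j (hb ▸ hij.symm)

/-! ### Wrapping the disc around the sphere -/

/-- The map that collapses the complement of the unit disc to the south pole. -/
noncomputable def wrap (x : ℂ) : EuclideanSpace ℝ (Fin 3) :=
  !₂[2 * √(1 - min ‖x‖ 1 ^ 2) * x.re, 2 * √(1 - min ‖x‖ 1 ^ 2) * x.im, 1 - 2 * min ‖x‖ 1 ^ 2]

theorem wrap_mem_sphere (x : ℂ) : wrap x ∈ Metric.sphere (0 : EuclideanSpace ℝ (Fin 3)) 1 := by
  have h1 : min ‖x‖ 1 ^ 2 ≤ 1 := pow_le_one₀ (by positivity) (min_le_right _ _)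
  have h2 := Real.sq_sqrt (sub_nonneg.2 h1)
  have h3 := Complex.sq_norm x
  rw [Complex.normSq_apply] at h3
  rw [mem_sphere_zero_iff_norm, EuclideanSpace.norm_eq, Real.sqrt_eq_one]
  simp only [wrap, Fin.sum_univ_three, Real.norm_eq_abs, sq_abs]
  change (2 * √(1 - min ‖x‖ 1 ^ 2) * x.re) ^ 2 + (2 * √(1 - min ‖x‖ 1 ^ 2) * x.im) ^ 2 +
    (1 - 2 * min ‖x‖ 1 ^ 2) ^ 2 = 1
  rcases le_total ‖x‖ 1 with h | h
  · rw [min_eq_left h] at h2 ⊢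
    linear_combination 4 * (x.re ^ 2 + x.im ^ 2) * h2 - 4 * (1 - ‖x‖ ^ 2) * h3
  · rw [min_eq_right h]
    norm_num

theorem continuous_wrap : Continuous wrap := by
  refine (PiLp.continuous_toLp 2 _).comp (continuous_pi fun i => ?_)
  fin_cases i
  · change Continuous fun x : ℂ => 2 * √(1 - min ‖x‖ 1 ^ 2) * x.re
    fun_prop
  · change Continuous fun x : ℂ => 2 * √(1 - min ‖x‖ 1 ^ 2) * x.im
    fun_prop
  · change Continuous fun x : ℂ => 1 - 2 * min ‖x‖ 1 ^ 2
    fun_prop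

theorem wrap_eq_of_one_le {x y : ℂ} (hx : 1 ≤ ‖x‖) (hy : 1 ≤ ‖y‖) : wrap x = wrap y := by
  simp [wrap, hx, hy]

theorem eq_or_of_wrap_eq {x y : ℂ} (h : wrap x = wrap y) : x = y ∨ (1 ≤ ‖x‖ ∧ 1 ≤ ‖y‖) := by
  have h0 : 2 * √(1 - min ‖x‖ 1 ^ 2) * x.re = 2 * √(1 - min ‖y‖ 1 ^ 2) * y.re :=
    congr_arg (fun v : EuclideanSpace ℝ (Fin 3) => v 0) h
  have h1 : 2 * √(1 - min ‖x‖ 1 ^ 2) * x.im = 2 * √(1 - min ‖y‖ 1 ^ 2) * y.im :=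
    congr_arg (fun v : EuclideanSpace ℝ (Fin 3) => v 1) h
  have h2 : 1 - 2 * min ‖x‖ 1 ^ 2 = 1 - 2 * min ‖y‖ 1 ^ 2 :=
    congr_arg (fun v : EuclideanSpace ℝ (Fin 3) => v 2) h
  have h3 : min ‖x‖ 1 = min ‖y‖ 1 :=
    (sq_eq_sq₀ (by positivity) (by positivity)).1 (by linarith)
  rcases lt_or_ge (min ‖x‖ 1) 1 with h4 | h4
  · have h5 : 0 < 2 * √(1 - min ‖y‖ 1 ^ 2) := by
      have : min ‖y‖ 1 ^ 2 < 1 := pow_lt_one₀ (by positivity) (h3 ▸ h4) two_ne_zero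
      have := Real.sqrt_pos.2 (sub_pos.2 this)
      linarith
    rw [h3] at h0 h1
    exact .inl (Complex.ext (mul_left_cancel₀ h5.ne' h0) (mul_left_cancel₀ h5.ne' h1))
  · exact .inr ⟨h4.trans (min_le_left _ _), (h3 ▸ h4 : 1 ≤ min ‖y‖ 1).trans (min_le_left _ _)⟩

end Pentagon

/-- For every continuous injective map `f : S² → ℝ³` there are five distinct points
in the image of `f` forming two Euclidean-equilateral pentagons `C₁` and `C₂`. -/
theorem pentagon_on_deformed_sphere
    (f : Metric.sphere (0 : EuclideanSpace ℝ (Fin 3)) 1 → EuclideanSpace ℝ (Fin 3))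
    (hf : Continuous f) (hfinj : Function.Injective f) :
    ∃ y₀ y₁ y₂ y₃ y₄ : EuclideanSpace ℝ (Fin 3),
      y₀ ∈ Set.range f ∧ y₁ ∈ Set.range f ∧ y₂ ∈ Set.range f ∧
      y₃ ∈ Set.range f ∧ y₄ ∈ Set.range f ∧
      y₀ ≠ y₁ ∧ y₀ ≠ y₂ ∧ y₀ ≠ y₃ ∧ y₀ ≠ y₄ ∧
      y₁ ≠ y₂ ∧ y₁ ≠ y₃ ∧ y₁ ≠ y₄ ∧ y₂ ≠ y₃ ∧ y₂ ≠ y₄ ∧ y₃ ≠ y₄ ∧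
      dist y₀ y₁ = dist y₁ y₂ ∧ dist y₁ y₂ = dist y₂ y₃ ∧
      dist y₂ y₃ = dist y₃ y₄ ∧ dist y₃ y₄ = dist y₄ y₀ ∧
      dist y₀ y₂ = dist y₂ y₄ ∧ dist y₂ y₄ = dist y₄ y₁ ∧
      dist y₄ y₁ = dist y₁ y₃ ∧ dist y₁ y₃ = dist y₃ y₀ := by
  set w : ℂ → Metric.sphere (0 : EuclideanSpace ℝ (Fin 3)) 1 :=
    fun x => ⟨Pentagon.wrap x, Pentagon.wrap_mem_sphere x⟩ with hw
  have hQ : Continuous (f ∘ w) := hf.comp (Pentagon.continuous_wrap.subtype_mk _)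
  obtain ⟨x, hx, hne⟩ := Pentagon.exists_deviation_eq_zero hQ
    (fun x y h => Pentagon.eq_or_of_wrap_eq (congr_arg Subtype.val (hfinj h)))
    (fun x y h h' => congr_arg f (Subtype.ext (Pentagon.wrap_eq_of_one_le h h')))
  have hi := Pentagon.injective_of_deviation_eq_zero hx hne
  have side := Pentagon.dist_eq_of_deviation_eq_zero hx true
  have diag := Pentagon.dist_eq_of_deviation_eq_zero hx false
  have ne : ∀ i j : ZMod 5, i ≠ j → f (w (x i)) ≠ f (w (x j)) := fun i j h => hi.ne h
  exact ⟨f (w (x 0)), f (w (x 1)), f (w (x 2)), f (w (x 3)), f (w (x 4)),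
    ⟨_, rfl⟩, ⟨_, rfl⟩, ⟨_, rfl⟩, ⟨_, rfl⟩, ⟨_, rfl⟩,
    ne _ _ (by decide), ne _ _ (by decide), ne _ _ (by decide), ne _ _ (by decide),
    ne _ _ (by decide), ne _ _ (by decide), ne _ _ (by decide), ne _ _ (by decide),
    ne _ _ (by decide), ne _ _ (by decide),
    side 0 1, side 1 2, side 2 3, side 3 4, diag 0 2, diag 2 4, diag 4 1, diag 1 3⟩
end
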